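/- arXiv:2301.07353 — 2 statements merged into one kernel-verified Lean document; each statement's English description precedes it below -/
import Mathlib

section
/- Let d ≥ 1 and let P = (p⁽¹⁾,…,p⁽ᵈ⁾) and Q = (q⁽¹⁾,…,q⁽ᵈ⁾) be d-tuples of probability vectors such that the columns of P share a common support and the columns of Q share a common support. Assume the strict inequalities D_α(P) > D_α(Q) for every α ∈ (A₊ ∪ A₋) \ {e₁,…,e_d}, D^T_β(P) > D^T_β(Q) for every β ∈ B₋ \ {0}, and D₁(p⁽ᵏ⁾‖p⁽ˡ⁾) > D₁(q⁽ᵏ⁾‖q⁽ˡ⁾) for all k ≠ ℓ. Then there exists N such that for every n ≥ N there is a stochastic matrix Tₙ satisfying Tₙ (p⁽ᵏ⁾)^{⊗n} = (q⁽ᵏ⁾)^{⊗n} for all k = 1,…,d. -/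
open scoped BigOperators NNReal

noncomputable section

/-- A probability vector on a finite index type. -/
def IsProbVec {ι : Type*} [Fintype ι] (p : ι → ℝ) : Prop :=
  (∀ i, 0 ≤ p i) ∧ ∑ i, p i = 1

/-- A (column-)stochastic matrix: nonnegative entries, every column sums to `1`. -/
def IsStochastic {ι κ : Type*} [Fintype ι] [Fintype κ] (T : ι → κ → ℝ) : Prop :=
  (∀ i j, 0 ≤ T i j) ∧ ∀ j, ∑ i, T i j = 1

/-- Matrix–vector multiplication. -/
def matVec {ι κ : Type*} [Fintype κ] (T : ι → κ → ℝ) (v : κ → ℝ) : ι → ℝ :=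
  fun i => ∑ j, T i j * v j

/-- Kronecker product of two vectors. -/
def kron {ι κ : Type*} (p : ι → ℝ) (q : κ → ℝ) : ι × κ → ℝ :=
  fun x => p x.1 * q x.2

/-- `n`-fold Kronecker power of a vector. -/
def kpow {ι : Type*} (p : ι → ℝ) (n : ℕ) : (Fin n → ι) → ℝ :=
  fun f => ∏ j, p (f j)

/-- Kronecker product reindexed along `Fin (m * n)`. -/
def kronFin {m n : ℕ} (p : Fin m → ℝ) (q : Fin n → ℝ) : Fin (m * n) → ℝ :=
  fun i => kron p q (finProdFinEquiv.symm i)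

/-- The sum of the `k` largest entries of a nonnegative vector, expressed as the
largest sum over subsets of cardinality at most `k`. -/
def topSum {ι : Type*} [Fintype ι] (p : ι → ℝ) (k : ℕ) : ℝ :=
  ⨆ s ∈ {s : Finset ι | s.card ≤ k}, ∑ i ∈ s, p i

/-- Majorization for nonnegative vectors (possibly of different lengths):
equal total sums, and for each `k` the sum of the `k` largest entries of `p` is
at least that of `q`. -/
def Majorizes {ι κ : Type*} [Fintype ι] [Fintype κ] (p : ι → ℝ) (q : κ → ℝ) : Prop :=
  (∑ i, p i = ∑ j, q j) ∧ ∀ k : ℕ, topSum q k ≤ topSum p k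

/-- The size of the support, `‖p‖₀`. -/
def supp0 {ι : Type*} [Fintype ι] (p : ι → ℝ) : ℕ :=
  (Finset.univ.filter fun i => p i ≠ 0).card

/-- Entrywise nonnegativity. -/
def NonnegVec {n : ℕ} (p : Fin n → ℝ) : Prop := ∀ i, 0 ≤ p i

/-- The modified majorization preorder `≽₀,₁`: majorization plus equality of
support sizes. -/
def MajMod {ι κ : Type*} [Fintype ι] [Fintype κ] (p : ι → ℝ) (q : κ → ℝ) : Prop :=
  Majorizes p q ∧ supp0 p = supp0 q

/-- `f_α(p) = ∑_{i ∈ supp p} (p i)^α`. -/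
def fA {ι : Type*} [Fintype ι] (α : ℝ) (p : ι → ℝ) : ℝ :=
  ∑ i, if p i = 0 then 0 else p i ^ α

/-- Shannon entropy (the terms with `p i = 0` vanish). -/
def H1ent {ι : Type*} [Fintype ι] (p : ι → ℝ) : ℝ := -∑ i, p i * Real.log (p i)

/-- `H₀'(p) = ∑_{i ∈ supp p} log p_i`. -/
def H0' {ι : Type*} [Fintype ι] (p : ι → ℝ) : ℝ :=
  ∑ i, if p i = 0 then 0 else Real.log (p i)

/-- Rényi entropy of order `α` (with `α = 1` the Shannon entropy). -/
def Hent {ι : Type*} [Fintype ι] (α : ℝ) (p : ι → ℝ) : ℝ :=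
  if α = 1 then -∑ i, p i * Real.log (p i)
  else (1 / (1 - α)) * Real.log (∑ i, if p i = 0 then 0 else p i ^ α)

/-- Min-entropy `H_∞(p) = - log max_i p_i`. -/
def HentInf {ι : Type*} [Fintype ι] (p : ι → ℝ) : ℝ := -Real.log (⨆ i, p i)

/-- Kullback–Leibler divergence (the terms with `p i = 0` vanish). -/
def KL {n : ℕ} (p q : Fin n → ℝ) : ℝ :=
  ∑ i, p i * Real.log (p i / q i)

/-- Rényi divergence of order `α` for vectors with common support. -/
def Renyi {n : ℕ} (α : ℝ) (p q : Fin n → ℝ) : ℝ :=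
  if α = 1 then ∑ i, p i * Real.log (p i / q i)
  else (1 / (α - 1)) * Real.log (∑ i, if p i = 0 then 0 else p i ^ α * q i ^ (1 - α))

/-- Max-divergence `D_∞(p‖q) = max_{i ∈ supp q} log (p_i / q_i)`. -/
def RenyiInf {n : ℕ} (p q : Fin n → ℝ) : ℝ :=
  ⨆ i ∈ Finset.univ.filter (fun i => q i ≠ 0), Real.log (p i / q i)

/-- Rényi divergence with values in the extended reals `[0, ∞]`. -/
def RenyiE {n : ℕ} (α : ℝ) (p q : Fin n → ℝ) : EReal :=
  if α = 1 then
    (if ∀ i, p i ≠ 0 → q i ≠ 0 then ((∑ i, p i * Real.log (p i / q i) : ℝ) : EReal) else ⊤)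
  else if α < 1 then
    (if ∃ i, p i ≠ 0 ∧ q i ≠ 0 then
      (((1 / (α - 1)) *
        Real.log (∑ i, if p i = 0 ∨ q i = 0 then 0 else p i ^ α * q i ^ (1 - α)) : ℝ) : EReal)
    else (⊤ : EReal))
  else
    (if ∀ i, p i ≠ 0 → q i ≠ 0 then
      (((1 / (α - 1)) *
        Real.log (∑ i, if p i = 0 then 0 else p i ^ α * q i ^ (1 - α)) : ℝ) : EReal)
    else (⊤ : EReal))

/-- The common support of a tuple of vectors. -/
def suppIdx {d n : ℕ} (P : Fin d → Fin n → ℝ) : Finset (Fin n) :=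
  Finset.univ.filter fun i => ∃ k, P k i ≠ 0

/-- `f_α(P) = ∑_{i ∈ I} ∏_k (p_i^{(k)})^{α_k}` with `I` the common support. -/
def fMat {d n : ℕ} (α : Fin d → ℝ) (P : Fin d → Fin n → ℝ) : ℝ :=
  ∑ i ∈ suppIdx P, ∏ k, P k i ^ α k

/-- The matrix `α`-divergence `D_α`. -/
def Dmat {d n : ℕ} (α : Fin d → ℝ) (P : Fin d → Fin n → ℝ) : ℝ :=
  (1 / ((⨆ k, α k) - 1)) * Real.log (∑ i ∈ suppIdx P, ∏ k, P k i ^ α k)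

/-- The tropical matrix divergence `D^𝕋_β`. -/
def DmatT {d n : ℕ} (β : Fin d → ℝ) (P : Fin d → Fin n → ℝ) : ℝ :=
  (1 / (⨆ k, β k)) * Real.log (⨆ i ∈ suppIdx P, ∏ k, P k i ^ β k)

/-- Membership in `A₊`: entries summing to `1`, all nonnegative. -/
def memAplus {d : ℕ} (α : Fin d → ℝ) : Prop := (∑ k, α k = 1) ∧ ∀ k, 0 ≤ α k

/-- Membership in `A₋`: entries summing to `1`, one entry `≥ 1`, the others `≤ 0`. -/
def memAminus {d : ℕ} (α : Fin d → ℝ) : Prop :=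
  (∑ k, α k = 1) ∧ ∃ k, 1 ≤ α k ∧ ∀ l, l ≠ k → α l ≤ 0

/-- Membership in `B₋`: entries summing to `0`, one entry `≥ 0`, the others `≤ 0`. -/
def memBminus {d : ℕ} (β : Fin d → ℝ) : Prop :=
  (∑ k, β k = 0) ∧ ∃ k, 0 ≤ β k ∧ ∀ l, l ≠ k → β l ≤ 0

/-- `α` is none of the standard basis vectors `e₁, …, e_d`. -/
def notBasis {d : ℕ} (α : Fin d → ℝ) : Prop := ∀ k, α ≠ Pi.single k 1

/-- ℓ¹-distance of two vectors, padding with zeros to a common length. -/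
def l1PadDist {m n : ℕ} (p : Fin m → ℝ) (q : Fin n → ℝ) : ℝ :=
  ∑ i : Fin (max m n),
    |(if h : (i : ℕ) < m then p ⟨(i : ℕ), h⟩ else 0) -
      (if h : (i : ℕ) < n then q ⟨(i : ℕ), h⟩ else 0)|

/-- Index type of the direct sum `⨁_{s=0}^{n-1} p^{⊗(n-1-s)} ⊗ q^{⊗s}`. -/
abbrev TrickIdx (m m' n : ℕ) : Type :=
  Σ s : Fin n, (Fin (n - 1 - (s : ℕ)) → Fin m) × (Fin (s : ℕ) → Fin m')

/-- The standard catalyst `(1/n) ⨁_{s=0}^{n-1} p^{⊗(n-1-s)} ⊗ q^{⊗s}`. -/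
def trick {m m' : ℕ} (p : Fin m → ℝ) (q : Fin m' → ℝ) (n : ℕ) : TrickIdx m m' n → ℝ :=
  fun x => (1 / (n : ℝ)) * (kpow p (n - 1 - (x.1 : ℕ)) x.2.1 * kpow q (x.1 : ℕ) x.2.2)

/-- A valid tuple: nonnegative entries and common support across the tuple. -/
def TupOK {d n : ℕ} (P : Fin d → Fin n → ℝ) : Prop :=
  (∀ k i, 0 ≤ P k i) ∧ ∀ k l i, P k i ≠ 0 ↔ P l i ≠ 0

/-- Matrix majorization of tuples: a single stochastic matrix carrying each column
of `P` to the corresponding column of `Q`. -/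
def TupMaj {d m n : ℕ} (P : Fin d → Fin m → ℝ) (Q : Fin d → Fin n → ℝ) : Prop :=
  ∃ T : Fin n → Fin m → ℝ, IsStochastic T ∧ ∀ k, matVec T (P k) = Q k

/-!
Write the rows of a tuple indexed by `κ` as `exp (p i)` and encode the tuple as `∑ i, X (p i)` in
the group algebra of `κ → ℝ`; Kronecker products become products. By Blackwell's theorem, a
stochastic matrix carries one tuple to another iff the difference of their encodings lies in the
cone on which all sublinear test functions are nonnegative.

Let `x` and `y` encode `P` and `Q`. If no nonzero `f` with nonnegative coefficients makes
`f * (x - y)` an element of the cone, Zorn's lemma enlarges the cone to a total one `K` containing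
`y - x` but not `1 - x`; then `y ^ n - x ^ n ∈ K` for all `n`. Two cases arise.

* If `x * (x - 1)` is bounded by a multiple of `x - 1`, then `K` induces a positive functional `φ`
  on the elements with vanishing column sums, and `φ (f * a) = χ f * φ a` for a character `χ`.
  Monotonicity forces `χ (X w) = exp (α ⬝ᵥ w)` with `α` in `A₊` or `A₋`. If `α` is not a basis
  vector, this contradicts the inequality between the `D_α`. If it is, `φ` is a derivation at a
  column sum, hence a nonnegative combination of relative entropies, which contradicts the
  inequalities between those.
* Otherwise the growth rates of monomials in `K` are given by `β ⬝ᵥ w` with `β` in `B₋`, which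
  contradicts the tropical inequality.

A catalyst `f`, once normalized, is itself dominated by some power of `x`: measuring many copies
of `P` by maximum likelihood almost determines the column. Comparing `x ^ r` with `y ^ r * x` in
place of `x` with `y` provides spare factors of `x` that pay for absorbing `f`.
-/

namespace MatrixMajorization

open scoped AddMonoidAlgebra

section TotalCones

variable {S M : Type*} [CommSemiring S] [AddCommGroup M] [Module S M]

/-- A cone `K` is total if `a ≤ b ↔ b - a ∈ K` is a total preorder on `M` and multiplication by
nonzero scalars reflects it. In the applications the scalars are the elements with nonnegative
coefficients of a group algebra. -/
structure IsTotalCone (K : Submodule S M) : Prop where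
  total : ∀ a, a ∈ K ∨ -a ∈ K
  mem_of_smul_mem : ∀ {g : S} {a : M}, g ≠ 0 → g • a ∈ K → a ∈ K

lemma exists_add_smul_eq_smul_of_maximal {v a : M} {K : Submodule S M}
    (hK : Maximal (fun K : Submodule S M ↦ ∀ g : S, g ≠ 0 → g • v ∉ K) K) (ha : a ∉ K) :
    ∃ c ∈ K, ∃ f g : S, f ≠ 0 ∧ g ≠ 0 ∧ c + f • a = g • v := by
  have hlt : K < K ⊔ S ∙ a :=
    lt_of_le_of_ne le_sup_left fun h ↦
      ha (h ▸ Submodule.mem_sup_right (Submodule.mem_span_singleton_self a))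
  have := hK.not_prop_of_gt hlt
  push Not at this
  obtain ⟨g, hg, hgv⟩ := this
  obtain ⟨c, hc, _, hfa, hcf⟩ := Submodule.mem_sup.1 hgv
  obtain ⟨f, rfl⟩ := Submodule.mem_span_singleton.1 hfa
  refine ⟨c, hc, f, g, ?_, hg, hcf⟩
  rintro rfl
  rw [zero_smul, add_zero] at hcf
  exact hK.prop g hg (hcf ▸ hc)

variable [NoZeroDivisors S]

lemma isTotalCone_of_maximal [Subsingleton (AddUnits S)] {v : M} {K : Submodule S M}
    (hK : Maximal (fun K : Submodule S M ↦ ∀ g : S, g ≠ 0 → g • v ∉ K) K) :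
    IsTotalCone K where
  total a := by
    by_contra! hcon
    obtain ⟨c, hc, f, g, -, hg, h⟩ := exists_add_smul_eq_smul_of_maximal hK hcon.1
    obtain ⟨c', hc', f', g', hf', -, h'⟩ := exists_add_smul_eq_smul_of_maximal hK hcon.2
    refine hK.prop (f' * g + f * g') (fun h0 ↦ mul_ne_zero hf' hg (add_eq_zero.1 h0).1) ?_
    have : (f' * g + f * g') • v = f' • c + f • c' := by
      rw [add_smul, mul_smul, mul_smul, ← h, ← h', smul_add, smul_add, smul_comm f f', smul_neg,
        smul_neg]
      abel
    exact this ▸ K.add_mem (K.smul_mem _ hc) (K.smul_mem _ hc')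
  mem_of_smul_mem {g a} hg ha := by
    by_contra hcon
    obtain ⟨c, hc, f, g', -, hg', h⟩ := exists_add_smul_eq_smul_of_maximal hK hcon
    refine hK.prop (g * g') (mul_ne_zero hg hg') ?_
    have : (g * g') • v = g • c + f • g • a := by rw [mul_smul, ← h, smul_add, smul_comm g f]
    exact this ▸ K.add_mem (K.smul_mem _ hc) (K.smul_mem _ ha)

theorem exists_isTotalCone_ge [Nontrivial S] [Subsingleton (AddUnits S)] {v : M}
    {D : Submodule S M} (hD : ∀ g : S, g ≠ 0 → g • v ∉ D) :
    ∃ K, D ≤ K ∧ IsTotalCone K ∧ v ∉ K := by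
  have hchain : ∀ c ⊆ {K : Submodule S M | ∀ g : S, g ≠ 0 → g • v ∉ K}, IsChain (· ≤ ·) c →
      ∀ K₀ ∈ c, ∃ ub ∈ {K : Submodule S M | ∀ g : S, g ≠ 0 → g • v ∉ K}, ∀ K ∈ c, K ≤ ub := by
    refine fun c hc hchain K₀ hK₀ ↦ ⟨sSup c, fun g hg hmem ↦ ?_, fun K ↦ le_sSup⟩
    obtain ⟨K, hKc, hKg⟩ := (Submodule.mem_sSup_of_directed ⟨K₀, hK₀⟩ hchain.directedOn).1 hmem
    exact hc hKc g hg hKg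
  obtain ⟨K, hDK, hK⟩ := zorn_le_nonempty₀ _ hchain D hD
  exact ⟨K, hDK, isTotalCone_of_maximal hK, by simpa using hK.prop 1 one_ne_zero⟩

variable [Nontrivial S] {ι : Type*} [LinearOrder ι] [Nonempty ι]

/-- The elements that become nonnegative modulo the cone `C`, up to a nonzero factor, after adding
a multiple of some term of the family `s`. -/
def catalyticCone (C : Submodule S M) (s : ι → M)
    (hs : ∀ i j, i ≤ j → ∃ g e : S, e ≠ 0 ∧ g • s j - e • s i ∈ C) : Submodule S M where
  carrier := {a | ∃ i, ∃ h f : S, h ≠ 0 ∧ h • a + f • s i ∈ C}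
  zero_mem' := ⟨Classical.arbitrary ι, 1, 0, one_ne_zero, by simp⟩
  smul_mem' := by
    rintro g a ⟨i, h, f, hh, ha⟩
    refine ⟨i, h, g * f, hh, ?_⟩
    rw [smul_comm h g, mul_smul, ← smul_add]
    exact C.smul_mem g ha
  add_mem' := by
    suffices H : ∀ {i j : ι} {a b : M} {h h' f f' : S}, i ≤ j → h ≠ 0 → h' ≠ 0 →
        h • a + f • s i ∈ C → h' • b + f' • s j ∈ C →
        ∃ i, ∃ h f : S, h ≠ 0 ∧ h • (a + b) + f • s i ∈ C by
      rintro a b ⟨i, h, f, hh, ha⟩ ⟨j, h', f', hh', hb⟩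
      rcases le_total i j with hij | hij
      · exact H hij hh hh' ha hb
      · rw [add_comm]; exact H hij hh' hh hb ha
    intro i j a b h h' f f' hij hh hh' ha hb
    obtain ⟨g, e, he, hge⟩ := hs i j hij
    obtain ⟨c, hc⟩ : ∃ c, g • s j - e • s i = c := ⟨_, rfl⟩
    refine ⟨j, e * h * h', f * g * h' + f' * (e * h), mul_ne_zero (mul_ne_zero he hh) hh', ?_⟩
    have : (e * h * h') • (a + b) + (f * g * h' + f' * (e * h)) • s j
        = (e * h') • (h • a + f • s i) + (e * h) • (h' • b + f' • s j) + (h' * f) • c := by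
      rw [add_smul (f * g * h'), show f * g * h' = h' * f * g by ring, mul_smul _ g,
        sub_eq_iff_eq_add.1 hc]
      module
    exact this ▸ C.add_mem (C.add_mem (C.smul_mem _ ha) (C.smul_mem _ hb)) (C.smul_mem _ (hc ▸ hge))

theorem exists_smul_mem_of_forall_isTotalCone [Subsingleton (AddUnits S)]
    {C : Submodule S M} {u : M} (hu : u ∈ C) (s : ι → M)
    (hs : ∀ i j, i ≤ j → ∃ g e : S, e ≠ 0 ∧ g • s j - e • s i ∈ C)
    (hbdd : ∀ i, ∃ f : S, f • u + s i ∈ C)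
    (hsep : ∀ K : Submodule S M, C ≤ K → IsTotalCone K → -u ∉ K → ∃ i, -s i ∉ K) :
    ∃ i, ∃ g : S, g ≠ 0 ∧ g • s i ∈ C := by
  by_contra! hcon
  obtain ⟨K, hDK, hK, huK⟩ := exists_isTotalCone_ge (v := -u) (D := catalyticCone C s hs) (by
    rintro g hg ⟨i, h, f, hh, ha⟩
    rcases eq_or_ne f 0 with rfl | hf
    · obtain ⟨f', hf'⟩ := hbdd i
      refine hcon i (h * g) (mul_ne_zero hh hg) ?_
      have : (h * g) • s i = (h * g) • (f' • u + s i) + f' • (h • g • -u + (0 : S) • s i) := by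
        simp only [smul_add, smul_neg, mul_smul, zero_smul, add_zero, smul_comm f' h,
          smul_comm f' g]
        abel
      exact this ▸ C.add_mem (C.smul_mem _ hf') (C.smul_mem _ ha)
    · refine hcon i f hf ?_
      have : f • s i = h • g • -u + f • s i + (h * g) • u := by
        simp only [smul_neg, mul_smul]
        abel
      exact this ▸ C.add_mem ha (C.smul_mem _ hu))
  obtain ⟨i, hi⟩ := hsep K
    (fun a ha ↦ hDK ⟨Classical.arbitrary ι, 1, 0, one_ne_zero, by simpa⟩) hK huK
  exact hi (hDK ⟨i, 1, 1, one_ne_zero, by simp⟩)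

end TotalCones

section NonnegativeCoefficients

variable {G : Type*} [AddCommGroup G]

/-- The monomial of exponent `w` in the group algebra of `G`. -/
def X (w : G) : ℝ[G] := AddMonoidAlgebra.single w 1

lemma X_add (v w : G) : X (v + w) = X v * X w := by simp [X]

lemma X_zero : X (0 : G) = 1 := rfl

lemma X_nsmul (n : ℕ) (w : G) : X (n • w) = X w ^ n := by simp [X]

lemma X_sum {ι : Type*} (s : Finset ι) (w : ι → G) : X (∑ i ∈ s, w i) = ∏ i ∈ s, X (w i) := by
  classical
  induction s using Finset.induction_on with
  | empty => simp [X_zero]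
  | insert a s ha ih => rw [Finset.sum_insert ha, Finset.prod_insert ha, X_add, ih]

lemma single_eq_smul_X (w : G) (c : ℝ) : AddMonoidAlgebra.single w c = c • X w := by simp [X]

lemma nonneg_coeff_induction {motive : ℝ[G] → Prop} {f : ℝ[G]}
    (hf : ∀ w, 0 ≤ f.coeff w) (zero : motive 0)
    (add : ∀ f g, motive f → motive g → motive (f + g))
    (smul : ∀ (c : ℝ) (w : G), 0 ≤ c → motive (c • X w)) : motive f := by
  have hsum : f = ∑ w ∈ f.coeff.support, f.coeff w • X w := by
    simp_rw [← single_eq_smul_X]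
    exact (AddMonoidAlgebra.sum_coeff_single f).symm
  rw [hsum]
  exact Finset.sum_induction _ motive add zero fun w _ ↦ smul _ w (hf w)

variable (G) in
/-- The semiring of elements of the group algebra with nonnegative coefficients. -/
def nonnegCoeff : Subsemiring ℝ[G] where
  carrier := {f | ∀ w, 0 ≤ f.coeff w}
  zero_mem' _ := le_rfl
  one_mem' _ := by
    classical
    rw [AddMonoidAlgebra.one_def, AddMonoidAlgebra.coeff_single, Finsupp.single_apply]
    positivity
  add_mem' hf hg w := add_nonneg (hf w) (hg w)
  mul_mem' {f g} hf hg := by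
    have hX (c : ℝ) (v : G) (hc : 0 ≤ c) : ∀ w, 0 ≤ (c • X v * g).coeff w := fun w ↦ by
      rw [← single_eq_smul_X, AddMonoidAlgebra.coeff_single_mul_apply]
      exact mul_nonneg hc (hg _)
    refine nonneg_coeff_induction (motive := fun f ↦ ∀ w, 0 ≤ (f * g).coeff w) hf ?_ ?_ hX
    · simp
    · exact fun f f' h h' w ↦ by rw [add_mul]; exact add_nonneg (h w) (h' w)

lemma X_mem_nonnegCoeff (w : G) : X w ∈ nonnegCoeff G := fun _ ↦ by
  classical
  rw [X, AddMonoidAlgebra.coeff_single, Finsupp.single_apply]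
  positivity

lemma smul_mem_nonnegCoeff {c : ℝ} (hc : 0 ≤ c) {f : ℝ[G]}
    (hf : f ∈ nonnegCoeff G) : c • f ∈ nonnegCoeff G :=
  fun w ↦ mul_nonneg hc (hf w)

lemma exists_nonnegCoeff_sub (a : ℝ[G]) :
    ∃ f ∈ nonnegCoeff G, ∃ g ∈ nonnegCoeff G, a = f - g := by
  induction a using AddMonoidAlgebra.induction_linear with
  | zero => exact ⟨0, zero_mem _, 0, zero_mem _, by simp⟩
  | add a b ha hb =>
    obtain ⟨f, hf, g, hg, rfl⟩ := ha
    obtain ⟨f', hf', g', hg', rfl⟩ := hb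
    exact ⟨f + f', add_mem hf hf', g + g', add_mem hg hg', by abel⟩
  | single w c =>
    rw [single_eq_smul_X]
    rcases le_total 0 c with hc | hc
    · exact ⟨_, smul_mem_nonnegCoeff hc (X_mem_nonnegCoeff w), 0, zero_mem _, by simp⟩
    · exact ⟨0, zero_mem _, _, smul_mem_nonnegCoeff (neg_nonneg.2 hc) (X_mem_nonnegCoeff w),
        by simp⟩

lemma map_pos_of_mem_nonnegCoeff {χ : ℝ[G] →ₐ[ℝ] ℝ} (hχ : ∀ w, 0 < χ (X w))
    {f : ℝ[G]} (hf : f ∈ nonnegCoeff G) (hf0 : f ≠ 0) : 0 < χ f := by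
  suffices f = 0 ∨ 0 < χ f from this.resolve_left hf0
  refine nonneg_coeff_induction (motive := fun f ↦ f = 0 ∨ 0 < χ f) hf (Or.inl rfl) ?_ ?_
  · rintro f g (rfl | hf) (rfl | hg)
    · simp
    · simp [hg]
    · simp [hf]
    · exact Or.inr (by rw [map_add]; exact add_pos hf hg)
  · intro c w hc
    rcases hc.eq_or_lt with rfl | hc
    · simp
    · exact Or.inr (by rw [map_smul]; exact mul_pos hc (hχ w))

instance : Subsingleton (AddUnits (nonnegCoeff G)) :=
  subsingleton_of_forall_eq 0 fun u ↦ AddUnits.ext <| Subtype.ext <| by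
    ext w
    have h := congr_arg (fun f : nonnegCoeff G ↦ (f : ℝ[G]).coeff w) u.add_neg
    exact ((add_eq_zero_iff_of_nonneg ((u : nonnegCoeff G).2 w)
      ((↑(-u) : nonnegCoeff G).2 w)).1 h).1

variable (G) in
/-- A convex cone in the group algebra that is stable under multiplication by elements with
nonnegative coefficients. -/
abbrev Cone := Submodule (nonnegCoeff G) ℝ[G]

variable {K : Cone G} {a : ℝ[G]}

lemma Cone.mul_mem {f : ℝ[G]} (hf : f ∈ nonnegCoeff G) (ha : a ∈ K) :
    f * a ∈ K :=
  K.smul_mem ⟨f, hf⟩ ha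

lemma Cone.smul_mem {c : ℝ} (hc : 0 ≤ c) (ha : a ∈ K) : c • a ∈ K := by
  simpa using Cone.mul_mem (smul_mem_nonnegCoeff hc (one_mem _)) ha

end NonnegativeCoefficients

/-- A positively homogeneous and subadditive real function. -/
structure IsSublinear {E : Type*} [AddCommGroup E] [Module ℝ E] (ψ : E → ℝ) : Prop where
  smul : ∀ (t : ℝ) (v : E), 0 ≤ t → ψ (t • v) = t * ψ v
  add : ∀ v w : E, ψ (v + w) ≤ ψ v + ψ w

namespace IsSublinear

variable {E : Type*} [AddCommGroup E] [Module ℝ E] {ψ : E → ℝ}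

lemma zero (hψ : IsSublinear ψ) : ψ 0 = 0 := by
  simpa using hψ.smul 0 0 le_rfl

lemma sum_le (hψ : IsSublinear ψ) {ι : Type*} (s : Finset ι) (v : ι → E) :
    ψ (∑ i ∈ s, v i) ≤ ∑ i ∈ s, ψ (v i) :=
  Finset.le_sum_of_subadditive ψ hψ.zero.le hψ.add s v

lemma comp (hψ : IsSublinear ψ) {F : Type*} [AddCommGroup F] [Module ℝ F] (L : F →ₗ[ℝ] E) :
    IsSublinear fun v ↦ ψ (L v) where
  smul t v ht := by rw [map_smul, hψ.smul t _ ht]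
  add v w := by rw [map_add]; exact hψ.add _ _

end IsSublinear

section MajorizationCone

variable {κ : Type*}

/-- The vector with logarithms `w`. -/
def expVec (w : κ → ℝ) : κ → ℝ := fun k ↦ Real.exp (w k)

lemma expVec_add (v w : κ → ℝ) : expVec (v + w) = expVec v * expVec w :=
  funext fun _ ↦ Real.exp_add _ _

/-- The linear functional on the group algebra sending `X w` to `ψ (expVec w)`. A tuple of vectors
with rows `expVec (p i)` is encoded by `∑ i, X (p i)`, which is sent to the sum of `ψ` over the
rows. -/
def testFunctional (ψ : (κ → ℝ) → ℝ) : ℝ[κ → ℝ] →ₗ[ℝ] ℝ :=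
  (Finsupp.linearCombination ℝ fun w ↦ ψ (expVec w)) ∘ₗ
    (AddMonoidAlgebra.coeffLinearEquiv ℝ).toLinearMap

@[simp]
lemma testFunctional_X (ψ : (κ → ℝ) → ℝ) (w : κ → ℝ) :
    testFunctional ψ (X w) = ψ (expVec w) := by
  simp [testFunctional, X]

/-- The sum of the entries of column `k`, extended to an evaluation of the group algebra. -/
def colSum (k : κ) : ℝ[κ → ℝ] →ₐ[ℝ] ℝ :=
  AddMonoidAlgebra.lift ℝ ℝ (κ → ℝ)
    { toFun := fun w ↦ Real.exp (w.toAdd k)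
      map_one' := by simp
      map_mul' := fun a b ↦ by simp [Real.exp_add] }

@[simp]
lemma colSum_X (k : κ) (w : κ → ℝ) : colSum k (X w) = Real.exp (w k) := by
  simp [colSum, X]

lemma colSum_X_pos (k : κ) (w : κ → ℝ) : 0 < colSum k (X w) :=
  colSum_X k w ▸ Real.exp_pos _

/-- The vector of all column sums. -/
def colSums (a : ℝ[κ → ℝ]) : κ → ℝ := fun k ↦ colSum k a

lemma colSums_add (a b : ℝ[κ → ℝ]) : colSums (a + b) = colSums a + colSums b :=
  funext fun k ↦ map_add (colSum k) a b

lemma colSums_smul_X (c : ℝ) (w : κ → ℝ) : colSums (c • X w) = c • expVec w :=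
  funext fun k ↦ by simp [colSums, expVec]

lemma testFunctional_smul_X_mul (ψ : (κ → ℝ) → ℝ) (c : ℝ) (w : κ → ℝ) (a : ℝ[κ → ℝ]) :
    testFunctional ψ (c • X w * a) = c * testFunctional (fun v ↦ ψ (expVec w * v)) a := by
  induction a using AddMonoidAlgebra.induction_linear with
  | zero => simp
  | add a b ha hb => rw [mul_add, map_add, map_add, ha, hb, mul_add]
  | single v b =>
    rw [single_eq_smul_X, smul_mul_smul_comm, ← X_add, map_smul, map_smul, testFunctional_X,
      testFunctional_X, expVec_add, smul_eq_mul, smul_eq_mul, mul_assoc]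

variable (κ) in
/-- The cone of all `a` on which every sublinear test function is nonnegative. For encoded tuples,
`a - b` lies in it if and only if a stochastic matrix carries the tuple of `a` to that of `b`. -/
def majorizationCone : Cone (κ → ℝ) where
  carrier := {a | ∀ ψ, IsSublinear ψ → 0 ≤ testFunctional ψ a}
  zero_mem' ψ _ := (map_zero (testFunctional ψ)).ge
  add_mem' ha hb ψ hψ := by
    rw [map_add]
    exact add_nonneg (ha ψ hψ) (hb ψ hψ)
  smul_mem' f a ha := by
    refine nonneg_coeff_induction (f := (f : ℝ[κ → ℝ]))
      (motive := fun f ↦ ∀ ψ, IsSublinear ψ → 0 ≤ testFunctional ψ (f * a)) f.2 ?_ ?_ ?_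
    · intro ψ _
      simp
    · intro f g hf hg ψ hψ
      rw [add_mul, map_add]
      exact add_nonneg (hf ψ hψ) (hg ψ hψ)
    · intro c w hc ψ hψ
      rw [testFunctional_smul_X_mul]
      exact mul_nonneg hc (ha _ (hψ.comp (LinearMap.mulLeft ℝ (expVec w))))

lemma apply_colSums_le_testFunctional {f : ℝ[κ → ℝ]} (hf : f ∈ nonnegCoeff (κ → ℝ))
    {ψ : (κ → ℝ) → ℝ} (hψ : IsSublinear ψ) : ψ (colSums f) ≤ testFunctional ψ f := by
  refine nonneg_coeff_induction (motive := fun f ↦ ψ (colSums f) ≤ testFunctional ψ f) hf ?_ ?_ ?_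
  · rw [map_zero, show colSums (0 : ℝ[κ → ℝ]) = 0 from funext fun k ↦ map_zero (colSum k),
      hψ.zero]
  · intro f g hf hg
    rw [colSums_add, map_add]
    exact (hψ.add _ _).trans (add_le_add hf hg)
  · intro c w hc
    rw [colSums_smul_X, hψ.smul c _ hc, map_smul, testFunctional_X, smul_eq_mul]

lemma sub_X_mem_majorizationCone {f : ℝ[κ → ℝ]} (hf : f ∈ nonnegCoeff (κ → ℝ)) {w : κ → ℝ}
    (hw : ∀ k, colSum k f = Real.exp (w k)) : f - X w ∈ majorizationCone κ := fun ψ hψ ↦ by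
  rw [map_sub, testFunctional_X, sub_nonneg, ← show colSums f = expVec w from funext hw]
  exact apply_colSums_le_testFunctional hf hψ

lemma testFunctional_X_add_log {ψ : (κ → ℝ) → ℝ} (hψ : IsSublinear ψ) (w : κ → ℝ) {c : ℝ}
    (hc : 0 < c) :
    testFunctional ψ (X (w + Function.const κ (Real.log c))) = testFunctional ψ (c • X w) := by
  have : expVec (w + Function.const κ (Real.log c)) = c • expVec w := by
    ext k
    simp [expVec, Real.exp_add, Real.exp_log hc, mul_comm]
  rw [map_smul, testFunctional_X, testFunctional_X, this, hψ.smul c _ hc.le, smul_eq_mul]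

lemma X_add_log_sub_mem_majorizationCone (w : κ → ℝ) {c : ℝ} (hc : 0 < c) :
    X (w + Function.const κ (Real.log c)) - c • X w ∈ majorizationCone κ := fun ψ hψ ↦ by
  rw [map_sub, testFunctional_X_add_log hψ w hc, sub_self]

lemma sub_X_add_log_mem_majorizationCone (w : κ → ℝ) {c : ℝ} (hc : 0 < c) :
    c • X w - X (w + Function.const κ (Real.log c)) ∈ majorizationCone κ := fun ψ hψ ↦ by
  rw [map_sub, testFunctional_X_add_log hψ w hc, sub_self]

end MajorizationCone

section Families

variable {κ ι : Type*} [Fintype ι]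

/-- The encoding in the group algebra of the tuple of vectors with rows `expVec (p i)`. -/
def rowSum (p : ι → κ → ℝ) : ℝ[κ → ℝ] := ∑ i, X (p i)

lemma rowSum_mem_nonnegCoeff (p : ι → κ → ℝ) : rowSum p ∈ nonnegCoeff (κ → ℝ) :=
  sum_mem fun i _ ↦ X_mem_nonnegCoeff (p i)

lemma colSum_rowSum (p : ι → κ → ℝ) (k : κ) : colSum k (rowSum p) = ∑ i, Real.exp (p i k) := by
  simp [rowSum]

lemma testFunctional_rowSum (p : ι → κ → ℝ) (ψ : (κ → ℝ) → ℝ) :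
    testFunctional ψ (rowSum p) = ∑ i, ψ (expVec (p i)) := by
  simp [rowSum]

/-- The logarithmic rows of the `n`-fold Kronecker power. -/
def powRows (p : ι → κ → ℝ) (n : ℕ) : (Fin n → ι) → κ → ℝ := fun f ↦ ∑ s, p (f s)

lemma rowSum_powRows (p : ι → κ → ℝ) (n : ℕ) : rowSum (powRows p n) = rowSum p ^ n := by
  classical
  simp_rw [rowSum, powRows, Fintype.sum_pow, X_sum]

end Families

section Universality

open Filter Topology Matrix

variable {κ : Type*} [Fintype κ]

lemma eventually_det_ne_zero [DecidableEq κ] : ∀ᶠ M in 𝓝 (1 : Matrix κ κ ℝ), M.det ≠ 0 :=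
  (Continuous.matrix_det (A := id) continuous_id).continuousAt.eventually_ne (by simp)

lemma eventually_testFunctional_le_sum [DecidableEq κ] {a : ℝ[κ → ℝ]}
    (ha : a ∈ nonnegCoeff (κ → ℝ)) :
    ∀ᶠ M in 𝓝 (1 : Matrix κ κ ℝ), ∀ ψ, IsSublinear ψ →
      testFunctional ψ a ≤ ∑ l, (colSums a ᵥ* M⁻¹) l * ψ (M l) := by
  have hinv : ContinuousAt (fun M : Matrix κ κ ℝ ↦ M⁻¹) 1 :=
    continuousAt_matrix_inv 1 (by simp [Ring.inverse_eq_inv'])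
  refine nonneg_coeff_induction (motive := fun a ↦ ∀ᶠ M in 𝓝 (1 : Matrix κ κ ℝ), ∀ ψ,
    IsSublinear ψ → testFunctional ψ a ≤ ∑ l, (colSums a ᵥ* M⁻¹) l * ψ (M l)) ha ?_ ?_ ?_
  · refine .of_forall fun M ψ _ ↦ ?_
    simp [show colSums (0 : ℝ[κ → ℝ]) = 0 from funext fun k ↦ map_zero (colSum k)]
  · intro f g hf hg
    filter_upwards [hf, hg] with M hf hg ψ hψ
    simp_rw [map_add, colSums_add, add_vecMul, Pi.add_apply, add_mul, Finset.sum_add_distrib]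
    exact add_le_add (hf ψ hψ) (hg ψ hψ)
  · intro c w hc
    have hpos : ∀ᶠ M in 𝓝 (1 : Matrix κ κ ℝ), ∀ l, 0 < (expVec w ᵥ* M⁻¹) l := by
      refine eventually_all.2 fun l ↦ ?_
      have hcont : Continuous fun N : Matrix κ κ ℝ ↦ (expVec w ᵥ* N) l :=
        (continuous_apply l).comp (continuous_const.matrix_vecMul continuous_id)
      refine (hcont.continuousAt.comp hinv).eventually_const_lt ?_
      simp [expVec, Real.exp_pos]
    filter_upwards [hpos, eventually_det_ne_zero] with M hM hdet ψ hψ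
    have hrow : expVec w = ∑ l, (expVec w ᵥ* M⁻¹) l • M l := by
      rw [← Matrix.vecMul_eq_sum, vecMul_vecMul, nonsing_inv_mul _ hdet.isUnit, vecMul_one]
    have hψrow := hψ.sum_le Finset.univ fun l ↦ (expVec w ᵥ* M⁻¹) l • M l
    rw [← hrow] at hψrow
    simp_rw [hψ.smul _ _ (hM _).le] at hψrow
    simp_rw [map_smul, testFunctional_X, colSums_smul_X, smul_vecMul, Pi.smul_apply, smul_eq_mul,
      mul_assoc, ← Finset.mul_sum]
    exact mul_le_mul_of_nonneg_left hψrow hc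

variable [Nonempty κ] {β : Type*} [Fintype β]

/-- A coordinate at which `w` is largest. -/
def argmax (w : κ → ℝ) : κ := (Finite.exists_max w).choose

lemma le_argmax (w : κ → ℝ) (k : κ) : w k ≤ w (argmax w) := (Finite.exists_max w).choose_spec k

variable [DecidableEq κ]

/-- The matrix obtained from the rows `expVec (p b)` by adding up those whose largest coordinate is
the same. It is the result of a maximum likelihood measurement. -/
def argmaxMatrix (p : β → κ → ℝ) : Matrix κ κ ℝ :=
  fun l ↦ ∑ b with argmax (p b) = l, expVec (p b)

lemma sum_argmaxMatrix (p : β → κ → ℝ) (k : κ) :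
    ∑ l, argmaxMatrix p l k = ∑ b, Real.exp (p b k) := by
  simp_rw [argmaxMatrix, Finset.sum_apply]
  exact Finset.sum_fiberwise Finset.univ (fun b ↦ argmax (p b)) fun b ↦ expVec (p b) k

lemma argmaxMatrix_nonneg (p : β → κ → ℝ) (l k : κ) : 0 ≤ argmaxMatrix p l k := by
  rw [argmaxMatrix, Finset.sum_apply]
  exact Finset.sum_nonneg fun b _ ↦ Real.exp_nonneg _

lemma argmaxMatrix_le (p : β → κ → ℝ) (l k : κ) :
    argmaxMatrix p l k ≤ ∑ b, Real.exp ((p b k + p b l) / 2) := by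
  rw [argmaxMatrix, Finset.sum_apply]
  refine (Finset.sum_le_sum fun b hb ↦ ?_).trans (Finset.sum_le_sum_of_subset_of_nonneg
    (Finset.filter_subset _ _) fun b _ _ ↦ Real.exp_nonneg _)
  have := le_argmax (p b) k
  rw [(Finset.mem_filter.1 hb).2] at this
  exact Real.exp_le_exp.2 (by linarith)

lemma sum_argmaxMatrix_le_testFunctional {ψ : (κ → ℝ) → ℝ} (hψ : IsSublinear ψ)
    (p : β → κ → ℝ) : ∑ l, ψ (argmaxMatrix p l) ≤ testFunctional ψ (rowSum p) := by
  rw [testFunctional_rowSum, ← Finset.sum_fiberwise Finset.univ fun b ↦ argmax (p b)]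
  exact Finset.sum_le_sum fun l _ ↦ hψ.sum_le _ _

variable {ι : Type*} [Fintype ι] {p : ι → κ → ℝ}

lemma sum_exp_sum_eq_pow (g : ι → ℝ) (n : ℕ) :
    ∑ f : Fin n → ι, Real.exp (∑ s, g (f s)) = (∑ i, Real.exp (g i)) ^ n := by
  classical
  simp_rw [Fintype.sum_pow, Real.exp_sum]

lemma tendsto_argmaxMatrix_powRows (hp : ∀ k, ∑ i, Real.exp (p i k) = 1)
    (hBhatt : ∀ k l, k ≠ l → ∑ i, Real.exp ((p i k + p i l) / 2) < 1) :
    Tendsto (fun n ↦ argmaxMatrix (powRows p n)) atTop (𝓝 1) := by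
  have hoff {l k : κ} (h : l ≠ k) :
      Tendsto (fun n ↦ argmaxMatrix (powRows p n) l k) atTop (𝓝 0) := by
    refine squeeze_zero (fun n ↦ argmaxMatrix_nonneg _ l k) (fun n ↦ ?_)
      (tendsto_pow_atTop_nhds_zero_of_lt_one
        (Finset.sum_nonneg fun _ _ ↦ Real.exp_nonneg _) (hBhatt k l h.symm))
    refine (argmaxMatrix_le _ l k).trans_eq ?_
    simp_rw [← sum_exp_sum_eq_pow, powRows, Finset.sum_apply, ← Finset.sum_div,
      Finset.sum_add_distrib]
  have hcol (n : ℕ) (k : κ) : ∑ l, argmaxMatrix (powRows p n) l k = 1 := by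
    simp_rw [sum_argmaxMatrix, powRows, Finset.sum_apply]
    rw [sum_exp_sum_eq_pow fun i ↦ p i k, hp k, one_pow]
  refine tendsto_pi_nhds.2 fun l ↦ tendsto_pi_nhds.2 fun k ↦ ?_
  rcases eq_or_ne l k with rfl | h
  · have hdiag (n : ℕ) : argmaxMatrix (powRows p n) l l =
        1 - ∑ l' ∈ Finset.univ.erase l, argmaxMatrix (powRows p n) l' l := by
      rw [← hcol n l, ← Finset.add_sum_erase _ _ (Finset.mem_univ l), add_sub_cancel_right]
    simp_rw [hdiag, one_apply_eq]
    simpa using tendsto_const_nhds.sub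
      (tendsto_finsetSum (Finset.univ.erase l) fun l' hl' ↦ hoff (Finset.ne_of_mem_erase hl'))
  · rw [one_apply_ne h]
    exact hoff h

end Universality

section Bounds

open Filter Matrix

variable {κ ι : Type*} [Finite κ] [Nonempty κ] [Fintype ι] {p : ι → κ → ℝ}

theorem exists_rowSum_pow_sub_mem_majorizationCone (hp : ∀ k, ∑ i, Real.exp (p i k) = 1)
    (hBhatt : ∀ k l, k ≠ l → ∑ i, Real.exp ((p i k + p i l) / 2) < 1) {a : ℝ[κ → ℝ]}
    (ha : a ∈ nonnegCoeff (κ → ℝ)) (ha1 : ∀ k, colSum k a = 1) :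
    ∃ n : ℕ, rowSum p ^ n - a ∈ majorizationCone κ := by
  classical
  have := Fintype.ofFinite κ
  have hM := tendsto_argmaxMatrix_powRows hp hBhatt
  obtain ⟨n, hle, hdet⟩ := (hM.eventually
    ((eventually_testFunctional_le_sum ha).and eventually_det_ne_zero)).exists
  set M := argmaxMatrix (powRows p n)
  have hcol : (1 : κ → ℝ) ᵥ* M = 1 := by
    ext k
    rw [vecMul, one_dotProduct, Pi.one_apply, sum_argmaxMatrix]
    simp_rw [powRows, Finset.sum_apply]
    rw [sum_exp_sum_eq_pow fun i ↦ p i k, hp k, one_pow]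
  have hinv : colSums a ᵥ* M⁻¹ = 1 := by
    rw [show colSums a = 1 from funext ha1, ← hcol, vecMul_vecMul, hcol,
      mul_nonsing_inv _ hdet.isUnit, vecMul_one]
  refine ⟨n, fun ψ hψ ↦ ?_⟩
  rw [map_sub, sub_nonneg, ← rowSum_powRows]
  refine (hle ψ hψ).trans ?_
  simp_rw [hinv, Pi.one_apply, one_mul]
  exact sum_argmaxMatrix_le_testFunctional hψ _

theorem exists_smul_rowSum_pow_sub_one_sub_mem_majorizationCone
    (hp : ∀ k, ∑ i, Real.exp (p i k) = 1)
    (hBhatt : ∀ k l, k ≠ l → ∑ i, Real.exp ((p i k + p i l) / 2) < 1) {a : ℝ[κ → ℝ]}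
    (ha : ∀ k, colSum k a = 0) :
    ∃ c : ℝ, 0 < c ∧ ∃ n : ℕ, c • (rowSum p ^ n - 1) - a ∈ majorizationCone κ := by
  obtain ⟨f, hf, g, hg, rfl⟩ := exists_nonnegCoeff_sub a
  have hfg (k : κ) : colSum k g = colSum k f := by
    rw [eq_comm, ← sub_eq_zero, ← map_sub, ha]
  obtain ⟨c, hc0, hc⟩ : ∃ c : ℝ, 0 < c ∧ ∀ k, colSum k f < c := by
    obtain ⟨m, hm⟩ := (Set.finite_range fun k ↦ colSum k f).bddAbove
    exact ⟨max m 0 + 1, by positivity, fun k ↦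
      ((hm ⟨k, rfl⟩).trans (le_max_left _ _)).trans_lt (lt_add_one _)⟩
  set b : κ → ℝ := fun k ↦ Real.log (c - colSum k f)
  have hb (k : κ) : colSum k (X b) = c - colSum k f := by
    rw [colSum_X, Real.exp_log (sub_pos.2 (hc k))]
  have hmem {h : ℝ[κ → ℝ]} (hh : h ∈ nonnegCoeff (κ → ℝ)) :
      c⁻¹ • (h + X b) ∈ nonnegCoeff (κ → ℝ) :=
    smul_mem_nonnegCoeff (inv_nonneg.2 hc0.le) (add_mem hh (X_mem_nonnegCoeff b))
  have hnorm {h : ℝ[κ → ℝ]} (hh : ∀ k, colSum k h = colSum k f) (k : κ) :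
      colSum k (c⁻¹ • (h + X b)) = 1 := by
    rw [map_smul, map_add, hb, hh, add_sub_cancel, smul_eq_mul, inv_mul_cancel₀ hc0.ne']
  obtain ⟨n, hn⟩ := exists_rowSum_pow_sub_mem_majorizationCone hp hBhatt (hmem hf)
    (hnorm fun _ ↦ rfl)
  have hmerge := sub_X_mem_majorizationCone (hmem hg) (w := 0) fun k ↦ by
    rw [hnorm hfg, Pi.zero_apply, Real.exp_zero]
  refine ⟨c, hc0, n, ?_⟩
  convert Cone.smul_mem hc0.le (add_mem hn hmerge) using 1
  rw [X_zero, smul_add, smul_sub, smul_sub, smul_sub, smul_inv_smul₀ hc0.ne',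
    smul_inv_smul₀ hc0.ne']
  abel

end Bounds

section States

variable {V : Type*} [AddCommGroup V] [Module ℝ V] {K : PointedCone ℝ V} {u : V}

lemma exists_nonneg_map_eq_one (hu0 : u ≠ 0) (hK : ∀ c : ℝ, c • u ∈ K → 0 ≤ c)
    (hbdd : ∀ a, ∃ c : ℝ, c • u - a ∈ K) :
    ∃ φ : V →ₗ[ℝ] ℝ, φ u = 1 ∧ ∀ a ∈ K, 0 ≤ φ a := by
  obtain ⟨φ, hφu, hφK⟩ := riesz_extension K (LinearPMap.mkSpanSingleton u (1 : ℝ) hu0)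
    (by
      rintro ⟨_, hx⟩ hxK
      obtain ⟨c, rfl⟩ := Submodule.mem_span_singleton.1 hx
      exact (hK c hxK).trans_eq
        ((LinearPMap.mkSpanSingleton'_apply u (1 : ℝ) _ c hx).trans (mul_one c)).symm)
    (fun a ↦ by
      obtain ⟨c, hc⟩ := hbdd (-a)
      exact ⟨⟨c • u, Submodule.smul_mem _ c (Submodule.mem_span_singleton_self u)⟩,
        by simpa using hc⟩)
  exact ⟨φ, (hφu ⟨u, Submodule.mem_span_singleton_self u⟩).trans
    (LinearPMap.mkSpanSingleton_apply ℝ ℝ hu0 1), hφK⟩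

lemma eq_mul_of_nonneg_of_total (htotal : ∀ a, a ∈ K ∨ -a ∈ K) (hu : u ∈ K)
    {φ ψ : V →ₗ[ℝ] ℝ} (hφu : φ u = 1) (hφ : ∀ a ∈ K, 0 ≤ φ a) (hψ : ∀ a ∈ K, 0 ≤ ψ a) (a : V) :
    ψ a = ψ u * φ a := by
  have hker {b : V} (hb : φ b = 0) : 0 ≤ ψ b := by
    refine le_of_forall_pos_le_add fun ε hε ↦ ?_
    have hmem : b + (ε / (ψ u + 1)) • u ∈ K := (htotal _).resolve_right fun hcon ↦ by
      have hneg := hφ _ hcon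
      have hpos : 0 < ε / (ψ u + 1) := div_pos hε (by linarith [hψ u hu])
      simp only [map_neg, map_add, map_smul, hb, hφu, smul_eq_mul] at hneg
      linarith
    have hsum : 0 ≤ ψ b + ε / (ψ u + 1) * ψ u := by simpa using hψ _ hmem
    have hle : ε / (ψ u + 1) * ψ u ≤ ε := by
      rw [div_mul_eq_mul_div, div_le_iff₀ (by linarith [hψ u hu])]
      nlinarith
    linarith
  have hφa : φ (a - φ a • u) = 0 := by simp [hφu]
  have hnonneg := hker hφa
  have hnonpos := hker (b := -(a - φ a • u)) (by rw [map_neg, hφa, neg_zero])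
  simp only [map_sub, map_smul, map_neg, smul_eq_mul] at hnonneg hnonpos
  linarith

lemma exists_state (htotal : ∀ a, a ∈ K ∨ -a ∈ K) (hu : -u ∉ K)
    (hbdd : ∀ a, ∃ c : ℝ, c • u - a ∈ K) :
    ∃ φ : V →ₗ[ℝ] ℝ, φ u = 1 ∧ (∀ a ∈ K, 0 ≤ φ a) ∧
      ∀ ψ : V →ₗ[ℝ] ℝ, (∀ a ∈ K, 0 ≤ ψ a) → ∀ a, ψ a = ψ u * φ a := by
  have hnonneg (c : ℝ) (hc : c • u ∈ K) : 0 ≤ c := by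
    by_contra! hneg
    exact hu ((K.smul_mem_iff (neg_pos.2 hneg)).1 (by simpa using hc))
  obtain ⟨φ, hφu, hφK⟩ := exists_nonneg_map_eq_one (by rintro rfl; simp at hu) hnonneg hbdd
  exact ⟨φ, hφu, hφK, fun ψ ↦
    eq_mul_of_nonneg_of_total htotal ((htotal u).resolve_right hu) hφu hφK⟩

variable {G : Type*} [AddCommGroup G]

/-- The functional `φ` is positive on the part of the cone `K` inside the ideal `I`, normalized at
`u`, and multiplicative with respect to the character `χ`. Only the values of `φ` on `I` matter. -/
structure IsState (K : Cone G) (I : Ideal ℝ[G]) (u : ℝ[G]) (χ : ℝ[G] →ₐ[ℝ] ℝ)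
    (φ : ℝ[G] →ₗ[ℝ] ℝ) : Prop where
  map_unit : φ u = 1
  nonneg : ∀ {a}, a ∈ I → a ∈ K → 0 ≤ φ a
  map_mul : ∀ (f) {a}, a ∈ I → φ (f * a) = χ f * φ a
  pos : ∀ w, 0 < χ (X w)

theorem exists_isState {K : Cone G} (hK : IsTotalCone K) {I : Ideal ℝ[G]} {u : ℝ[G]} (hu : u ∈ I)
    (huK : -u ∉ K) (hbdd : ∀ a ∈ I, ∃ c : ℝ, c • u - a ∈ K) :
    ∃ χ φ, IsState K I u χ φ := by
  let L : PointedCone ℝ I :=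
    { carrier := {a | (a : ℝ[G]) ∈ K}
      zero_mem' := K.zero_mem
      add_mem' := K.add_mem
      smul_mem' := fun c _ ha ↦ Cone.smul_mem c.2 ha }
  obtain ⟨φ, hφu, hφK, huniq⟩ := exists_state (K := L) (u := ⟨u, hu⟩) (fun a ↦ hK.total a) huK
    (fun a ↦ hbdd a a.2)
  have hmul (f : ℝ[G]) (a : I) : φ (f • a) = φ (f • ⟨u, hu⟩) * φ a := by
    have hnonneg {g : ℝ[G]} (hg : g ∈ nonnegCoeff G) : φ (g • a) = φ (g • ⟨u, hu⟩) * φ a :=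
      huniq (φ ∘ₗ Algebra.lsmul ℝ ℝ I g) (fun b hb ↦ hφK _ (Cone.mul_mem hg hb)) a
    obtain ⟨g, hg, h, hh, rfl⟩ := exists_nonnegCoeff_sub f
    have hsub (b : I) : φ ((g - h) • b) = φ (g • b) - φ (h • b) := by
      rw [← map_sub]
      exact congrArg φ (Subtype.ext (sub_mul g h (b : ℝ[G])))
    rw [hsub, hsub, hnonneg hg, hnonneg hh, sub_mul]
  let χ : ℝ[G] →ₐ[ℝ] ℝ := AlgHom.ofLinearMap
    (φ ∘ₗ (LinearMap.applyₗ ⟨u, hu⟩) ∘ₗ (Algebra.lsmul ℝ ℝ I).toLinearMap)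
    (by simpa using hφu) (fun f g ↦ by
      have := hmul f (g • ⟨u, hu⟩)
      rw [← mul_smul] at this
      exact this)
  obtain ⟨φ', hφ'⟩ := LinearMap.exists_extend (p := I.restrictScalars ℝ) φ
  have hφ'I (a : ℝ[G]) (ha : a ∈ I) : φ' a = φ ⟨a, ha⟩ := LinearMap.congr_fun hφ' ⟨a, ha⟩
  have hX (w : G) : 0 ≤ χ (X w) :=
    hφK _ (Cone.mul_mem (X_mem_nonnegCoeff w) ((hK.total u).resolve_right huK))
  refine ⟨χ, φ', (hφ'I u hu).trans hφu, fun {a} ha haK ↦ (hφ'I a ha).symm ▸ hφK ⟨a, ha⟩ haK,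
    fun f a ha ↦ ?_, fun w ↦ ?_⟩
  · rw [hφ'I a ha, hφ'I _ (I.mul_mem_left f ha)]
    exact hmul f ⟨a, ha⟩
  · have h1 : χ (X w) * χ (X (-w)) = 1 := by
      rw [← map_mul, ← X_add, add_neg_cancel, X_zero, map_one]
    exact (hX w).lt_of_ne fun h ↦ by simp [← h] at h1

end States

section Holder

variable {G : Type*} [AddCommGroup G] {P : AddSubmonoid G} {π : G}

variable (P π) in
/-- The growth rate of `g` in units of `π`, for the preorder `a ≤ b ↔ b - a ∈ P`. -/
def rate (g : G) : ℝ := sInf {x | ∃ m : ℤ, ∃ n : ℕ, 0 < n ∧ m • π - n • g ∈ P ∧ x = m / n}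

section

variable (htotal : ∀ g, g ∈ P ∨ -g ∈ P) (hπ : -π ∉ P)
include htotal hπ

lemma nonneg_of_zsmul_mem {c : ℤ} (hc : c • π ∈ P) : 0 ≤ c := by
  by_contra! hneg
  obtain ⟨j, hj⟩ := Int.eq_ofNat_of_zero_le (show 0 ≤ -c - 1 by lia)
  refine hπ ?_
  have : -π = c • π + j • π := by
    rw [← natCast_zsmul, ← hj]
    module
  exact this ▸ P.add_mem hc (P.nsmul_mem ((htotal π).resolve_right hπ) j)

lemma div_le_div_of_mem {g : G} {m k : ℤ} {n l : ℕ} (hn : 0 < n) (hl : 0 < l)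
    (hm : m • π - n • g ∈ P) (hk : l • g - k • π ∈ P) : (k : ℝ) / l ≤ m / n := by
  have hmem : (l * m - n * k : ℤ) • π ∈ P := by
    have : (l * m - n * k : ℤ) • π = l • (m • π - n • g) + n • (l • g - k • π) := by module
    exact this ▸ P.add_mem (P.nsmul_mem hm l) (P.nsmul_mem hk n)
  have hle : (n * k : ℤ) ≤ l * m := sub_nonneg.1 (nonneg_of_zsmul_mem htotal hπ hmem)
  rw [div_le_div_iff₀ (by positivity) (by positivity), mul_comm (k : ℝ), mul_comm (m : ℝ)]
  exact_mod_cast hle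

variable (hcof : ∀ g, ∃ n : ℕ, n • π - g ∈ P)
include hcof

lemma rate_le {g : G} {m : ℤ} {n : ℕ} (hn : 0 < n) (hm : m • π - n • g ∈ P) :
    rate P π g ≤ m / n := by
  refine csInf_le ?_ ⟨m, n, hn, hm, rfl⟩
  obtain ⟨l, hl⟩ := hcof (-g)
  refine ⟨((-l : ℤ) : ℝ) / (1 : ℕ), ?_⟩
  rintro _ ⟨k, j, hj, hk, rfl⟩
  exact div_le_div_of_mem htotal hπ hj one_pos hk (by simpa [add_comm] using hl)

lemma mem_of_rate_lt {g : G} {q : ℚ} (hq : rate P π g < q) : q.num • π - q.den • g ∈ P := by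
  refine (htotal _).resolve_right fun hneg ↦ hq.not_ge ?_
  rw [neg_sub] at hneg
  obtain ⟨l, hl⟩ := hcof g
  refine le_csInf ⟨_, l, 1, one_pos, by simpa using hl, rfl⟩ ?_
  rintro _ ⟨m, n, hn, hm, rfl⟩
  rw [Rat.cast_def]
  exact div_le_div_of_mem htotal hπ hn q.den_pos hm hneg

lemma rate_add_le (g h : G) : rate P π (g + h) ≤ rate P π g + rate P π h := by
  rw [← sub_le_iff_le_add]
  refine le_of_forall_lt_rat_imp_le fun q hq ↦ ?_
  rw [sub_le_comm]
  refine le_of_forall_lt_rat_imp_le fun r hr ↦ ?_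
  have hmem : (q.num * r.den + r.num * q.den) • π - (q.den * r.den) • (g + h) ∈ P := by
    have : (q.num * r.den + r.num * q.den) • π - (q.den * r.den) • (g + h)
        = r.den • (q.num • π - q.den • g) + q.den • (r.num • π - r.den • h) := by module
    exact this ▸ P.add_mem (P.nsmul_mem (mem_of_rate_lt htotal hπ hcof hq) _)
      (P.nsmul_mem (mem_of_rate_lt htotal hπ hcof hr) _)
  refine sub_le_iff_le_add.2 ((rate_le htotal hπ hcof (by positivity) hmem).trans_eq ?_)
  rw [Rat.cast_def q, Rat.cast_def r]
  push_cast
  field_simp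
  ring

lemma rate_neg_le (g : G) : rate P π (-g) ≤ -rate P π g := by
  refine le_of_forall_lt_rat_imp_le fun q hq ↦ ?_
  rcases htotal (q.num • π - q.den • -g) with h | h
  · exact Rat.cast_def (K := ℝ) q ▸ rate_le htotal hπ hcof q.den_pos h
  · have hmem : (-q.num) • π - q.den • g ∈ P := by
      have : (-q.num) • π - q.den • g = -(q.num • π - q.den • -g) := by module
      exact this ▸ h
    have := rate_le htotal hπ hcof q.den_pos hmem
    rw [Int.cast_neg, neg_div, ← Rat.cast_def] at this
    linarith

end

/-- Hölder's theorem for totally preordered abelian groups with an order unit `π`. -/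
theorem exists_addMonoidHom_of_total (htotal : ∀ g, g ∈ P ∨ -g ∈ P) (hπ : -π ∉ P)
    (hcof : ∀ g, ∃ n : ℕ, n • π - g ∈ P) : ∃ τ : G →+ ℝ, τ π = 1 ∧ ∀ g, 0 < τ g → g ∈ P := by
  have hadd := rate_add_le htotal hπ hcof
  have hneg := rate_neg_le htotal hπ hcof
  have hmap (g h : G) : rate P π (g + h) = rate P π g + rate P π h := by
    refine (hadd g h).antisymm ?_
    have := hadd (g + h) (-h)
    rw [add_neg_cancel_right] at this
    linarith [hneg h]
  have hle {g : G} {m : ℤ} (hm : m • π - g ∈ P) : rate P π g ≤ m := by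
    simpa using rate_le htotal hπ hcof one_pos (by simpa using hm : m • π - 1 • g ∈ P)
  refine ⟨AddMonoidHom.mk' (rate P π) hmap, ?_, fun g hg ↦ ?_⟩
  · have h1 := hle (g := π) (m := 1) (by simp)
    have h2 := hle (g := -π) (m := -1) (by simp)
    have h3 := hadd π (-π)
    have h4 := hmap 0 0
    push_cast at h1 h2
    simp only [add_neg_cancel, add_zero, AddMonoidHom.mk'_apply] at h3 h4 ⊢
    linarith
  · refine (htotal g).resolve_right fun h ↦ hg.not_ge ?_
    simpa using hle (g := g) (m := 0) (by simpa using h)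

end Holder

section Linearity

lemma exists_eq_mul_of_nonpos (h : ℝ →+ ℝ) (hle : ∀ s ∈ Set.Icc (0 : ℝ) 1, h s ≤ 0) :
    ∃ c, ∀ s, h s = c * s := by
  have hnonpos {s : ℝ} (hs : 0 ≤ s) : h s ≤ 0 := by
    obtain ⟨n, hn⟩ := exists_nat_gt s
    have hn0 : (0 : ℝ) < n := hs.trans_lt hn
    have hmul : h s = n • h (s / n) := by
      rw [← map_nsmul, nsmul_eq_mul, mul_div_cancel₀ _ hn0.ne']
    exact hmul ▸ smul_nonpos_of_nonneg_of_nonpos n.zero_le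
      (hle _ ⟨by positivity, (div_le_one hn0).2 hn.le⟩)
  have hanti : Antitone h := fun s t hst ↦ by
    have := hnonpos (sub_nonneg.2 hst)
    rw [map_sub] at this
    linarith
  refine ⟨h 1, fun s ↦ ?_⟩
  have := map_real_smul h
    (MeasureTheory.Measure.AddMonoidHom.continuous_of_measurable h hanti.measurable) s 1
  rw [smul_eq_mul, mul_one] at this
  rw [this, smul_eq_mul, mul_comm]

lemma exists_log_eq_of_between {s t : ℝ} (h : 0 < t ∧ t < s ∨ s < t ∧ t < 0) :
    ∃ θ, 0 < θ ∧ θ < 1 ∧ Real.log ((1 - θ) + θ * Real.exp s) = t := by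
  have hs : Real.exp s - 1 ≠ 0 := by
    rw [Ne, sub_eq_zero, Real.exp_eq_one_iff]
    rintro rfl
    rcases h with h | h <;> linarith
  refine ⟨(Real.exp t - 1) / (Real.exp s - 1), ?_, ?_, ?_⟩
  · rcases h with ⟨h1, h2⟩ | ⟨h1, h2⟩
    · exact div_pos (by simpa) (by simpa using h1.trans h2)
    · exact div_pos_of_neg_of_neg (by simpa) (by simpa using h1.trans h2)
  · rcases h with ⟨h1, h2⟩ | ⟨h1, h2⟩
    · rw [div_lt_one (by simpa using h1.trans h2)]
      gcongr
    · rw [div_lt_one_of_neg (by simpa using h1.trans h2)]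
      gcongr
  · rw [← Real.log_exp t]
    congr 1
    field_simp
    simp only [Real.log_exp]
    ring

lemma exists_eq_mul_of_quasiconvex (h : ℝ →+ ℝ) (hq : ∀ s θ : ℝ, 0 < θ → θ < 1 →
      h (Real.log ((1 - θ) + θ * Real.exp s)) ≤ max 0 (h s)) : ∃ c, ∀ s, h s = c * s := by
  have hbetween {s t : ℝ} (hts : t ∈ Set.uIcc 0 s) : h t ≤ max 0 (h s) := by
    rcases eq_or_ne t 0 with rfl | h0
    · simp
    rcases eq_or_ne t s with rfl | hs
    · exact le_max_right _ _
    obtain ⟨θ, hθ0, hθ1, hθ⟩ := exists_log_eq_of_between (s := s) (t := t) (by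
      rcases Set.mem_uIcc.1 hts with ⟨h1, h2⟩ | ⟨h1, h2⟩
      · exact Or.inl ⟨h1.lt_of_ne' h0, h2.lt_of_ne hs⟩
      · exact Or.inr ⟨h1.lt_of_ne' hs, h2.lt_of_ne h0⟩)
    exact hθ ▸ hq s θ hθ0 hθ1
  rcases le_total (h 1) 0 with h1 | h1
  · refine exists_eq_mul_of_nonpos h fun s hs ↦ (hbetween ?_).trans_eq (max_eq_left h1)
    rwa [Set.uIcc_of_le zero_le_one]
  · obtain ⟨c, hc⟩ := exists_eq_mul_of_nonpos (h.comp (-AddMonoidHom.id ℝ)) fun s hs ↦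
      (hbetween (s := -1) (t := -s) (by
        rw [Set.uIcc_of_ge (by norm_num)]
        exact ⟨by linarith [hs.2], by linarith [hs.1]⟩)).trans_eq (by simp [h1])
    exact ⟨-c, fun s ↦ by simpa using hc (-s)⟩

lemma exists_eq_dotProduct_of_quasiconvex {κ : Type*} [Fintype κ] [DecidableEq κ]
    (L : (κ → ℝ) →+ ℝ) (hq : ∀ k (s θ : ℝ), 0 < θ → θ < 1 →
      L (Pi.single k (Real.log ((1 - θ) + θ * Real.exp s))) ≤ max 0 (L (Pi.single k s))) :
    ∃ c, ∀ w, L w = c ⬝ᵥ w := by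
  choose c hc using fun k ↦
    exists_eq_mul_of_quasiconvex (L.comp (AddMonoidHom.single (fun _ ↦ ℝ) k)) (hq k)
  refine ⟨c, fun w ↦ ?_⟩
  rw [← Finset.univ_sum_single w, map_sum]
  exact Finset.sum_congr rfl fun k _ ↦ by simpa using hc k (w k)

end Linearity

section NullIdeal

variable {κ : Type*}

variable (κ) in
/-- The ideal of elements all of whose column sums vanish. -/
def nullIdeal : Ideal ℝ[κ → ℝ] := ⨅ k, RingHom.ker (colSum k)

lemma mem_nullIdeal {a : ℝ[κ → ℝ]} : a ∈ nullIdeal κ ↔ ∀ k, colSum k a = 0 := by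
  simp [nullIdeal]

lemma sub_mem_nullIdeal {a b : ℝ[κ → ℝ]} (h : ∀ k, colSum k a = colSum k b) :
    a - b ∈ nullIdeal κ :=
  mem_nullIdeal.2 fun k ↦ by rw [map_sub, h, sub_self]

lemma X_const_sub_mem_nullIdeal (s : ℝ) :
    X (Function.const κ s) - Real.exp s • 1 ∈ nullIdeal κ :=
  sub_mem_nullIdeal fun k ↦ by simp

lemma X_const_sub_mem_majorizationCone (s : ℝ) :
    X (Function.const κ s) - Real.exp s • 1 ∈ majorizationCone κ := by
  simpa [X_zero] using X_add_log_sub_mem_majorizationCone (0 : κ → ℝ) (Real.exp_pos s)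

lemma sub_X_const_mem_majorizationCone (s : ℝ) :
    Real.exp s • 1 - X (Function.const κ s) ∈ majorizationCone κ := by
  simpa [X_zero] using sub_X_add_log_mem_majorizationCone (0 : κ → ℝ) (Real.exp_pos s)

lemma mix_mem_nonnegCoeff (w : κ → ℝ) {θ : ℝ} (h0 : 0 ≤ θ) (h1 : θ ≤ 1) :
    (1 - θ) • 1 + θ • X w ∈ nonnegCoeff (κ → ℝ) :=
  add_mem (smul_mem_nonnegCoeff (sub_nonneg.2 h1) (one_mem _))
    (smul_mem_nonnegCoeff h0 (X_mem_nonnegCoeff w))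

lemma colSum_mix_single [DecidableEq κ] (l : κ) (s : ℝ) {θ : ℝ} (h0 : 0 ≤ θ) (h1 : θ < 1) (k : κ) :
    colSum k ((1 - θ) • 1 + θ • X (Pi.single l s)) =
      Real.exp ((Pi.single l (Real.log ((1 - θ) + θ * Real.exp s)) : κ → ℝ) k) := by
  rcases eq_or_ne k l with rfl | hkl
  · rw [Pi.single_eq_same, Real.exp_log (add_pos_of_pos_of_nonneg (sub_pos.2 h1) (by positivity))]
    simp
  · simp [hkl]

/-- The logarithms of the mean of `expVec w` and `expVec (-w)`. -/
def logCosh (w : κ → ℝ) : κ → ℝ := fun k ↦ Real.log (Real.cosh (w k))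

lemma cosh_mem_nonnegCoeff (w : κ → ℝ) :
    (2⁻¹ : ℝ) • (X w + X (-w)) ∈ nonnegCoeff (κ → ℝ) :=
  smul_mem_nonnegCoeff (by norm_num) (add_mem (X_mem_nonnegCoeff w) (X_mem_nonnegCoeff (-w)))

lemma colSum_cosh (w : κ → ℝ) (k : κ) :
    colSum k ((2⁻¹ : ℝ) • (X w + X (-w))) = Real.exp (logCosh w k) := by
  rw [logCosh, Real.exp_log (Real.cosh_pos _), Real.cosh_eq]
  simp
  ring

lemma logCosh_single [DecidableEq κ] (k : κ) (s : ℝ) :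
    logCosh (Pi.single k s) = Pi.single k (Real.log (Real.cosh s)) := by
  ext l
  rcases eq_or_ne l k with rfl | h <;> simp [logCosh, *]

lemma logCosh_add_of_disjoint [DecidableEq κ] {k l : κ} (hkl : k ≠ l) (s t : ℝ) :
    logCosh (Pi.single k s + Pi.single l t) =
      Pi.single k (Real.log (Real.cosh s)) + Pi.single l (Real.log (Real.cosh t)) := by
  ext j
  rcases eq_or_ne j k with rfl | hjk
  · simp [logCosh, hkl]
  · rcases eq_or_ne j l with rfl | hjl <;> simp [logCosh, *]

lemma nonpos_of_dotProduct_logCosh_nonpos [Fintype κ] {α : κ → ℝ}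
    (hα : ∀ w, α ⬝ᵥ w = 0 → α ⬝ᵥ logCosh w ≤ 0) {k l : κ} (hkl : k ≠ l) (hk : 0 < α k) :
    α l ≤ 0 := by
  classical
  by_contra! hl
  have hlog {s : ℝ} (hs : s ≠ 0) : 0 < Real.log (Real.cosh s) :=
    Real.log_pos (Real.one_lt_cosh.2 hs)
  have := hα (Pi.single k (α k)⁻¹ + Pi.single l (-(α l)⁻¹)) (by simp [hk.ne', hl.ne'])
  rw [logCosh_add_of_disjoint hkl, dotProduct_add, dotProduct_single, dotProduct_single] at this
  linarith [mul_pos hk (hlog (inv_ne_zero hk.ne')),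
    mul_pos hl (hlog (neg_ne_zero.2 (inv_ne_zero hl.ne')))]

end NullIdeal

section FiniteStates

variable {G : Type*} [AddCommGroup G] {K : Cone G} {I : Ideal ℝ[G]} {u : ℝ[G]}
  {χ : ℝ[G] →ₐ[ℝ] ℝ} {φ : ℝ[G] →ₗ[ℝ] ℝ}

variable {x y z : ℝ[G]}

lemma pow_mul_sub_pow_eq {A : Type*} [CommRing A] (x y z : A) (R : ℕ) :
    y ^ R * z - x ^ R = y ^ R * (z - 1)
      - (∑ i ∈ Finset.range R, x ^ i * y ^ (R - 1 - i)) * (x - y) := by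
  rw [geom_sum₂_mul]
  ring

lemma pow_mul_sub_pow_mem (hxy : x - y ∈ I) (hz : z - 1 ∈ I) (R : ℕ) : y ^ R * z - x ^ R ∈ I := by
  rw [pow_mul_sub_pow_eq]
  exact sub_mem (I.mul_mem_left _ hz) (I.mul_mem_left _ hxy)

namespace IsState

lemma map_eq_mul (h : IsState K I u χ φ) (hu : u ∈ I) {a : ℝ[G]} (ha : a ∈ I) :
    χ a = χ u * φ a := by
  rw [← mul_one (χ a), ← h.map_unit, ← h.map_mul a hu, mul_comm, h.map_mul u ha]

lemma map_eq_zero (h : IsState K I u χ φ) {a : ℝ[G]} (haI : a ∈ I) (ha : a ∈ K) (ha' : -a ∈ K) :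
    φ a = 0 :=
  le_antisymm (by simpa using h.nonneg (neg_mem haI) ha') (h.nonneg haI ha)

lemma map_sub_nonpos (h : IsState K I u χ φ) (hxy : x - y ∈ I) (hz : z - 1 ∈ I)
    (hR : ∀ R : ℕ, y ^ R * z - x ^ R ∈ K) (hy : 0 < χ y) (hle : χ y ≤ χ x) : φ (x - y) ≤ 0 := by
  by_contra! hpos
  obtain ⟨n, hn⟩ := exists_nat_gt (χ y * φ (z - 1) / φ (x - y))
  rw [div_lt_iff₀ hpos] at hn
  have hnonneg := h.nonneg (pow_mul_sub_pow_mem hxy hz (n + 1)) (hR (n + 1))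
  rw [pow_mul_sub_pow_eq, map_sub, h.map_mul _ hz, h.map_mul _ hxy, map_sum, map_pow,
    sub_nonneg] at hnonneg
  have hsum : (n + 1 : ℕ) * χ y ^ n ≤
      ∑ i ∈ Finset.range (n + 1), χ (x ^ i * y ^ (n + 1 - 1 - i)) := by
    rw [← nsmul_eq_mul]
    nth_rewrite 1 [← Finset.card_range (n + 1)]
    refine Finset.card_nsmul_le_sum _ _ _ fun i hi ↦ ?_
    rw [_root_.map_mul, map_pow, map_pow, ← pow_mul_pow_sub (χ y) (Finset.mem_range_succ_iff.1 hi)]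
    exact mul_le_mul_of_nonneg_right (pow_le_pow_left₀ hy.le hle i) (by positivity)
  have hcancel : χ y ^ n * ((n + 1 : ℕ) * φ (x - y)) ≤ χ y ^ n * (χ y * φ (z - 1)) :=
    calc χ y ^ n * ((n + 1 : ℕ) * φ (x - y))
        = (n + 1 : ℕ) * χ y ^ n * φ (x - y) := by ring
      _ ≤ _ := mul_le_mul_of_nonneg_right hsum hpos.le
      _ ≤ χ y ^ (n + 1) * φ (z - 1) := hnonneg
      _ = _ := by ring
  have := le_of_mul_le_mul_left hcancel (pow_pos hy n)
  push_cast at this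
  linarith

lemma map_le_map (h : IsState K I u χ φ) (hu : u ∈ I) (hxy : x - y ∈ I) (hz : z - 1 ∈ I)
    (hR : ∀ R : ℕ, y ^ R * z - x ^ R ∈ K) (hx : 0 < χ x) (hz0 : 0 < χ z) (hu0 : χ u < 0) :
    χ y ≤ χ x := by
  by_contra! hlt
  have hy : 0 < χ y := hx.trans hlt
  obtain ⟨n, hn⟩ := exists_pow_lt_of_lt_one hz0 ((div_lt_one hy).2 hlt)
  have hmem := pow_mul_sub_pow_mem hxy hz n
  have hle : χ (y ^ n * z - x ^ n) ≤ 0 := by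
    rw [h.map_eq_mul hu hmem]
    exact mul_nonpos_of_nonpos_of_nonneg hu0.le (h.nonneg hmem (hR n))
  rw [map_sub, _root_.map_mul, map_pow, map_pow] at hle
  rw [div_pow, div_lt_iff₀ (by positivity)] at hn
  linarith

end IsState

end FiniteStates

section FiniteCharacters

variable {κ : Type*} {K : Cone (κ → ℝ)} {u : ℝ[κ → ℝ]} {χ : ℝ[κ → ℝ] →ₐ[ℝ] ℝ}
  {φ : ℝ[κ → ℝ] →ₗ[ℝ] ℝ}

namespace IsState

lemma map_X_const (h : IsState K (nullIdeal κ) u χ φ) (hu : u ∈ nullIdeal κ)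
    (hK : majorizationCone κ ≤ K) (s : ℝ) : χ (X (Function.const κ s)) = Real.exp s := by
  have hmem := X_const_sub_mem_nullIdeal (κ := κ) s
  have hzero := h.map_eq_mul hu hmem
  rw [h.map_eq_zero hmem (hK (X_const_sub_mem_majorizationCone s))
    (by rw [neg_sub]; exact hK (sub_X_const_mem_majorizationCone s)), mul_zero, map_sub,
    map_smul, map_one, smul_eq_mul, mul_one] at hzero
  exact sub_eq_zero.1 hzero

variable {f : ℝ[κ → ℝ]} {w : κ → ℝ}

lemma sub_X_mem_nullIdeal (hw : ∀ k, colSum k f = Real.exp (w k)) : f - X w ∈ nullIdeal κ :=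
  sub_mem_nullIdeal fun k ↦ by rw [hw, colSum_X]

lemma map_sub_map_X (h : IsState K (nullIdeal κ) u χ φ) (hu : u ∈ nullIdeal κ)
    (hw : ∀ k, colSum k f = Real.exp (w k)) : χ f - χ (X w) = χ u * φ (f - X w) := by
  rw [← map_sub, h.map_eq_mul hu (sub_X_mem_nullIdeal hw)]

lemma map_sub_X_nonneg (h : IsState K (nullIdeal κ) u χ φ) (hK : majorizationCone κ ≤ K)
    (hf : f ∈ nonnegCoeff (κ → ℝ)) (hw : ∀ k, colSum k f = Real.exp (w k)) : 0 ≤ φ (f - X w) :=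
  h.nonneg (sub_X_mem_nullIdeal hw) (hK (sub_X_mem_majorizationCone hf hw))

lemma map_X_le_map (h : IsState K (nullIdeal κ) u χ φ) (hu : u ∈ nullIdeal κ)
    (hK : majorizationCone κ ≤ K) (h0 : 0 ≤ χ u) (hf : f ∈ nonnegCoeff (κ → ℝ))
    (hw : ∀ k, colSum k f = Real.exp (w k)) : χ (X w) ≤ χ f :=
  sub_nonneg.1 (h.map_sub_map_X hu hw ▸ mul_nonneg h0 (h.map_sub_X_nonneg hK hf hw))

lemma map_le_map_X (h : IsState K (nullIdeal κ) u χ φ) (hu : u ∈ nullIdeal κ)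
    (hK : majorizationCone κ ≤ K) (h0 : χ u ≤ 0) (hf : f ∈ nonnegCoeff (κ → ℝ))
    (hw : ∀ k, colSum k f = Real.exp (w k)) : χ f ≤ χ (X w) :=
  sub_nonpos.1 (h.map_sub_map_X hu hw ▸
    mul_nonpos_of_nonpos_of_nonneg h0 (h.map_sub_X_nonneg hK hf hw))

end IsState

lemma le_max_zero_of_exp_le {a b θ : ℝ} (h0 : 0 ≤ θ) (h1 : θ ≤ 1)
    (h : Real.exp a ≤ (1 - θ) + θ * Real.exp b) : a ≤ max 0 b := by
  rw [← Real.exp_le_exp, Real.exp_monotone.map_max, Real.exp_zero]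
  have h1' := mul_le_mul_of_nonneg_left (le_max_left 1 (Real.exp b)) (sub_nonneg.2 h1)
  have h0' := mul_le_mul_of_nonneg_left (le_max_right 1 (Real.exp b)) h0
  linarith

lemma min_zero_le_of_le_exp {a b θ : ℝ} (h0 : 0 ≤ θ) (h1 : θ ≤ 1)
    (h : (1 - θ) + θ * Real.exp b ≤ Real.exp a) : min 0 b ≤ a := by
  rw [← Real.exp_le_exp, Real.exp_monotone.map_min, Real.exp_zero]
  have h1' := mul_le_mul_of_nonneg_left (min_le_left 1 (Real.exp b)) (sub_nonneg.2 h1)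
  have h0' := mul_le_mul_of_nonneg_left (min_le_right 1 (Real.exp b)) h0
  linarith

/-- The logarithm of a character with positive values on the monomials. -/
def logCharacter {G : Type*} [AddCommGroup G] (χ : ℝ[G] →ₐ[ℝ] ℝ) (hχ : ∀ w, 0 < χ (X w)) :
    G →+ ℝ :=
  AddMonoidHom.mk' (fun w ↦ Real.log (χ (X w))) fun v w ↦ by
    rw [X_add, map_mul, Real.log_mul (hχ v).ne' (hχ w).ne']

lemma exp_logCharacter {G : Type*} [AddCommGroup G] {χ : ℝ[G] →ₐ[ℝ] ℝ} (hχ : ∀ w, 0 < χ (X w))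
    (w : G) : Real.exp (logCharacter χ hχ w) = χ (X w) :=
  Real.exp_log (hχ w)

variable [Fintype κ]

lemma IsState.exists_map_X_eq (h : IsState K (nullIdeal κ) u χ φ) (hu : u ∈ nullIdeal κ)
    (hK : majorizationCone κ ≤ K) : ∃ α, ∀ w, χ (X w) = Real.exp (α ⬝ᵥ w) := by
  classical
  suffices ∃ α, ∀ w, logCharacter χ h.pos w = α ⬝ᵥ w by
    obtain ⟨α, hα⟩ := this
    exact ⟨α, fun w ↦ by rw [← hα, exp_logCharacter]⟩
  have hmix (k : κ) (s θ : ℝ) :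
      χ ((1 - θ) • 1 + θ • X (Pi.single k s)) =
        (1 - θ) + θ * Real.exp (logCharacter χ h.pos (Pi.single k s)) := by
    simp [exp_logCharacter]
  rcases le_total 0 (χ u) with h0 | h0
  · refine exists_eq_dotProduct_of_quasiconvex _ fun k s θ hθ0 hθ1 ↦
      le_max_zero_of_exp_le hθ0.le hθ1.le ?_
    rw [← hmix, exp_logCharacter]
    exact h.map_X_le_map hu hK h0 (mix_mem_nonnegCoeff _ hθ0.le hθ1.le)
      (colSum_mix_single k s hθ0.le hθ1)
  · obtain ⟨α, hα⟩ := exists_eq_dotProduct_of_quasiconvex (-logCharacter χ h.pos)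
      fun k s θ hθ0 hθ1 ↦ by
        rw [AddMonoidHom.neg_apply, AddMonoidHom.neg_apply, ← neg_zero, max_neg_neg,
          neg_le_neg_iff]
        refine min_zero_le_of_le_exp hθ0.le hθ1.le ?_
        rw [← hmix, exp_logCharacter]
        exact h.map_le_map_X hu hK h0 (mix_mem_nonnegCoeff _ hθ0.le hθ1.le)
          (colSum_mix_single k s hθ0.le hθ1)
    exact ⟨-α, fun w ↦ by rw [neg_dotProduct, ← hα w, AddMonoidHom.neg_apply, neg_neg]⟩

variable {α : κ → ℝ}

lemma map_rowSum_eq {ι : Type*} [Fintype ι] (hα : ∀ w, χ (X w) = Real.exp (α ⬝ᵥ w))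
    (p : ι → κ → ℝ) : χ (rowSum p) = ∑ i, Real.exp (α ⬝ᵥ p i) := by
  simp only [rowSum, map_sum, hα]

lemma map_cosh_eq (hα : ∀ w, χ (X w) = Real.exp (α ⬝ᵥ w)) (w : κ → ℝ) :
    χ ((2⁻¹ : ℝ) • (X w + X (-w))) = Real.cosh (α ⬝ᵥ w) := by
  rw [map_smul, map_add, hα, hα, dotProduct_neg, Real.cosh_eq, smul_eq_mul, inv_mul_eq_div]

namespace IsState

lemma sum_exponent_eq_one (h : IsState K (nullIdeal κ) u χ φ) (hu : u ∈ nullIdeal κ)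
    (hK : majorizationCone κ ≤ K) (hα : ∀ w, χ (X w) = Real.exp (α ⬝ᵥ w)) : ∑ k, α k = 1 := by
  have := h.map_X_const hu hK 1
  rw [hα, Real.exp_eq_exp] at this
  simpa [dotProduct] using this

lemma exists_one_le_exponent (h : IsState K (nullIdeal κ) u χ φ) (hu : u ∈ nullIdeal κ)
    (hK : majorizationCone κ ≤ K) (hα : ∀ w, χ (X w) = Real.exp (α ⬝ᵥ w)) (h0 : 0 ≤ χ u) :
    ∃ k, 1 ≤ α k ∧ ∀ l, l ≠ k → α l ≤ 0 := by
  classical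
  have hsum := h.sum_exponent_eq_one hu hK hα
  obtain ⟨k, -, hk⟩ : ∃ k ∈ Finset.univ, 0 < α k :=
    Finset.exists_lt_of_sum_lt (by rw [hsum, Finset.sum_const_zero]; exact one_pos)
  have hl (l) (hlk : l ≠ k) : α l ≤ 0 := by
    refine nonpos_of_dotProduct_logCosh_nonpos (fun w hw ↦ ?_) hlk.symm hk
    have hle := h.map_X_le_map hu hK h0 (cosh_mem_nonnegCoeff w) (colSum_cosh w)
    rwa [map_cosh_eq hα, hα, hw, Real.cosh_zero, Real.exp_le_one_iff] at hle
  refine ⟨k, ?_, hl⟩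
  rw [← Finset.add_sum_erase _ _ (Finset.mem_univ k)] at hsum
  have hrest := Finset.sum_nonpos (s := Finset.univ.erase k)
    fun l hl' ↦ hl l (Finset.ne_of_mem_erase hl')
  linarith

lemma exponent_nonneg (h : IsState K (nullIdeal κ) u χ φ) (hu : u ∈ nullIdeal κ)
    (hK : majorizationCone κ ≤ K) (hα : ∀ w, χ (X w) = Real.exp (α ⬝ᵥ w)) (h0 : χ u ≤ 0) (k : κ) :
    0 ≤ α k := by
  classical
  by_contra! hk
  have hle := h.map_le_map_X hu hK h0 (cosh_mem_nonnegCoeff (Pi.single k 1)) (colSum_cosh _)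
  rw [map_cosh_eq hα, hα, logCosh_single, dotProduct_single, dotProduct_single, mul_one] at hle
  have hcosh : 1 < Real.cosh (α k) := Real.one_lt_cosh.2 hk.ne
  have hlog : 0 < Real.log (Real.cosh 1) := Real.log_pos (Real.one_lt_cosh.2 one_ne_zero)
  have hlt : Real.exp (α k * Real.log (Real.cosh 1)) < 1 :=
    Real.exp_lt_one_iff.2 (mul_neg_of_neg_of_pos hk hlog)
  linarith

end IsState

end FiniteCharacters

section Derivations

variable {κ : Type*}

lemma exists_derivation {K : Cone (κ → ℝ)} {u : ℝ[κ → ℝ]} {k : κ}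
    {φ : ℝ[κ → ℝ] →ₗ[ℝ] ℝ} (h : IsState K (nullIdeal κ) u (colSum k) φ) :
    ∃ D : ℝ[κ → ℝ] →ₗ[ℝ] ℝ, (∀ f g, D (f * g) = colSum k f * D g + colSum k g * D f) ∧
      ∀ a ∈ nullIdeal κ, D a = φ a := by
  classical
  let ρ : ℝ[κ → ℝ] := X (Pi.single k (Real.log 2)) - 1
  have hρ (l : κ) : colSum l ρ = if l = k then 1 else 0 := by
    rcases eq_or_ne l k with rfl | hl
    · norm_num [ρ, Real.exp_log]
    · simp [ρ, hl]
  have hmem (f : ℝ[κ → ℝ]) : ρ * (f - colSum k f • 1) ∈ nullIdeal κ := by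
    refine mem_nullIdeal.2 fun l ↦ ?_
    rcases eq_or_ne l k with rfl | hl <;> simp [*]
  refine ⟨φ ∘ₗ LinearMap.mulLeft ℝ ρ ∘ₗ (.id - (colSum k).toLinearMap.smulRight 1),
    fun f g ↦ ?_, fun a ha ↦ ?_⟩
  · change φ (ρ * (f * g - colSum k (f * g) • 1)) =
      colSum k f * φ (ρ * (g - colSum k g • 1)) + colSum k g * φ (ρ * (f - colSum k f • 1))
    rw [← h.map_mul f (hmem g), ← smul_eq_mul (colSum k g), ← map_smul, ← map_add]
    refine congrArg φ ?_
    simp only [Algebra.smul_def, map_mul, mul_one]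
    ring
  · change φ (ρ * (a - colSum k a • 1)) = φ a
    rw [mem_nullIdeal.1 ha k, zero_smul, sub_zero, h.map_mul ρ ha, hρ, if_pos rfl, one_mul]

variable {k : κ} {D : ℝ[κ → ℝ] →ₗ[ℝ] ℝ}

lemma derivation_one (hD : ∀ f g, D (f * g) = colSum k f * D g + colSum k g * D f) : D 1 = 0 := by
  simpa using hD 1 1

/-- The logarithmic derivative `w ↦ D (X w) / colSum k (X w)` of a derivation `D`. -/
def logDeriv (hD : ∀ f g, D (f * g) = colSum k f * D g + colSum k g * D f) : (κ → ℝ) →+ ℝ :=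
  AddMonoidHom.mk' (fun w ↦ D (X w) / Real.exp (w k)) fun v w ↦ by
    rw [X_add, hD, colSum_X, colSum_X, Pi.add_apply, Real.exp_add]
    field_simp
    ring

lemma derivation_X (hD : ∀ f g, D (f * g) = colSum k f * D g + colSum k g * D f) (w : κ → ℝ) :
    D (X w) = Real.exp (w k) * logDeriv hD w :=
  (mul_div_cancel₀ (D (X w)) (Real.exp_pos (w k)).ne').symm

lemma exp_mul_logDeriv_le (hD : ∀ f g, D (f * g) = colSum k f * D g + colSum k g * D f)
    (hmono : ∀ a ∈ nullIdeal κ, a ∈ majorizationCone κ → 0 ≤ D a) {f : ℝ[κ → ℝ]}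
    (hf : f ∈ nonnegCoeff (κ → ℝ)) {w : κ → ℝ} (hw : ∀ k, colSum k f = Real.exp (w k)) :
    Real.exp (w k) * logDeriv hD w ≤ D f := by
  have := hmono _ (sub_mem_nullIdeal fun k ↦ by rw [hw, colSum_X])
    (sub_X_mem_majorizationCone hf hw)
  rwa [map_sub, derivation_X hD, sub_nonneg] at this

lemma logDeriv_quasiconvex [DecidableEq κ]
    (hD : ∀ f g, D (f * g) = colSum k f * D g + colSum k g * D f)
    (hmono : ∀ a ∈ nullIdeal κ, a ∈ majorizationCone κ → 0 ≤ D a) (l : κ) (s : ℝ) {θ : ℝ}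
    (h0 : 0 < θ) (h1 : θ < 1) :
    logDeriv hD (Pi.single l (Real.log ((1 - θ) + θ * Real.exp s))) ≤
      max 0 (logDeriv hD (Pi.single l s)) := by
  have hcol := colSum_mix_single l s h0.le h1
  have hle := exp_mul_logDeriv_le hD hmono (mix_mem_nonnegCoeff _ h0.le h1.le) hcol
  rw [← hcol] at hle
  simp only [map_add, map_smul, map_one, colSum_X, derivation_X hD, derivation_one hD,
    smul_eq_mul, mul_one, mul_zero, zero_add] at hle
  set E := Real.exp ((Pi.single l s : κ → ℝ) k)
  have hE : 0 < E := Real.exp_pos _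
  have hpos : 0 < 1 - θ + θ * E := add_pos (sub_pos.2 h1) (mul_pos h0 hE)
  refine le_of_mul_le_mul_left ?_ hpos
  have hmax0 := mul_nonneg (sub_nonneg.2 h1.le) (le_max_left 0 (logDeriv hD (Pi.single l s)))
  have hmax := mul_le_mul_of_nonneg_left (le_max_right 0 (logDeriv hD (Pi.single l s)))
    (mul_pos h0 hE).le
  linarith

lemma logDeriv_const (hD : ∀ f g, D (f * g) = colSum k f * D g + colSum k g * D f)
    (hmono : ∀ a ∈ nullIdeal κ, a ∈ majorizationCone κ → 0 ≤ D a) (s : ℝ) :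
    logDeriv hD (Function.const κ s) = 0 := by
  have hmem := X_const_sub_mem_nullIdeal (κ := κ) s
  have hle := hmono _ hmem (X_const_sub_mem_majorizationCone s)
  have hge := hmono _ (neg_mem hmem)
    (by rw [neg_sub]; exact sub_X_const_mem_majorizationCone s)
  rw [map_neg, neg_nonneg] at hge
  have := le_antisymm hge hle
  rw [map_sub, map_smul, derivation_one hD, smul_zero, sub_zero, derivation_X hD] at this
  exact (mul_eq_zero.1 this).resolve_left (Real.exp_pos _).ne'

lemma exists_logDeriv_eq [Fintype κ]
    (hD : ∀ f g, D (f * g) = colSum k f * D g + colSum k g * D f)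
    (hmono : ∀ a ∈ nullIdeal κ, a ∈ majorizationCone κ → 0 ≤ D a) :
    ∃ c : κ → ℝ, (∀ l, l ≠ k → c l ≤ 0) ∧ ∑ l, c l = 0 ∧ ∀ w, logDeriv hD w = c ⬝ᵥ w := by
  classical
  obtain ⟨c, hc⟩ := exists_eq_dotProduct_of_quasiconvex _
    fun l s θ h0 h1 ↦ logDeriv_quasiconvex hD hmono l s h0 h1
  refine ⟨c, fun l hl ↦ ?_, ?_, hc⟩
  · have hle := exp_mul_logDeriv_le hD hmono (cosh_mem_nonnegCoeff (Pi.single l 1)) (colSum_cosh _)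
    have hlog : 0 < Real.log (Real.cosh 1) := Real.log_pos (Real.one_lt_cosh.2 one_ne_zero)
    simp only [map_smul, map_add, derivation_X hD, logCosh_single, hc, dotProduct_single,
      ← Pi.single_neg, Pi.single_eq_of_ne hl.symm, Real.exp_zero] at hle
    refine nonpos_of_mul_nonpos_left ?_ hlog
    simpa using hle
  · have := logDeriv_const hD hmono 1
    simpa [hc, dotProduct] using this

/-- The relative entropy of column `k` with respect to column `l`, in logarithmic coordinates. -/
def relEntropy {ι : Type*} [Fintype ι] (p : ι → κ → ℝ) (k l : κ) : ℝ :=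
  ∑ i, Real.exp (p i k) * (p i k - p i l)

lemma relEntropy_self {ι : Type*} [Fintype ι] (p : ι → κ → ℝ) (k : κ) : relEntropy p k k = 0 := by
  simp [relEntropy]

lemma derivation_rowSum [Fintype κ]
    (hD : ∀ f g, D (f * g) = colSum k f * D g + colSum k g * D f) {c : κ → ℝ}
    (hc0 : ∑ l, c l = 0) (hc : ∀ w, logDeriv hD w = c ⬝ᵥ w) {ι : Type*} [Fintype ι]
    (p : ι → κ → ℝ) : D (rowSum p) = ∑ l, -c l * relEntropy p k l := by
  have hX (w : κ → ℝ) : D (X w) = ∑ l, -c l * (Real.exp (w k) * (w k - w l)) :=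
    calc D (X w) = Real.exp (w k) * (c ⬝ᵥ w - (∑ l, c l) * w k) := by
          rw [derivation_X hD, hc, hc0, zero_mul, sub_zero]
      _ = _ := by
          rw [dotProduct, Finset.sum_mul, ← Finset.sum_sub_distrib, Finset.mul_sum]
          exact Finset.sum_congr rfl fun l _ ↦ by ring
  simp only [rowSum, map_sum, hX, relEntropy, Finset.mul_sum]
  exact Finset.sum_comm

end Derivations

section FiniteCase

variable {κ ι ι' : Type*} [Fintype κ] [Fintype ι] [Fintype ι']

/-- The hypotheses of the theorem in logarithmic coordinates: the tuples with rows `expVec (p i)`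
and `expVec (q j)` have columns summing to one, and `p` strictly dominates `q` in all relevant
divergences. -/
structure StrictlyDominates [DecidableEq κ] (p : ι → κ → ℝ) (q : ι' → κ → ℝ) : Prop where
  sum_left : ∀ k, ∑ i, Real.exp (p i k) = 1
  sum_right : ∀ k, ∑ j, Real.exp (q j k) = 1
  plus : ∀ α : κ → ℝ, ∑ k, α k = 1 → (∀ k, 0 ≤ α k) → (∀ k, α ≠ Pi.single k 1) →
    ∑ i, Real.exp (α ⬝ᵥ p i) < ∑ j, Real.exp (α ⬝ᵥ q j)
  minus : ∀ α : κ → ℝ, ∑ k, α k = 1 → (∃ k, 1 ≤ α k ∧ ∀ l, l ≠ k → α l ≤ 0) →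
    (∀ k, α ≠ Pi.single k 1) → ∑ j, Real.exp (α ⬝ᵥ q j) < ∑ i, Real.exp (α ⬝ᵥ p i)
  tropical : ∀ β : κ → ℝ, ∑ k, β k = 0 → (∃ k, 0 ≤ β k ∧ ∀ l, l ≠ k → β l ≤ 0) → β ≠ 0 →
    ∃ i, ∀ j, β ⬝ᵥ q j < β ⬝ᵥ p i
  relEntropy_lt : ∀ k l, k ≠ l → relEntropy q k l < relEntropy p k l

namespace StrictlyDominates

variable [DecidableEq κ] {p : ι → κ → ℝ} {q : ι' → κ → ℝ} {K : Cone (κ → ℝ)}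
  {χ : ℝ[κ → ℝ] →ₐ[ℝ] ℝ} {φ : ℝ[κ → ℝ] →ₗ[ℝ] ℝ}

lemma colSum_left (H : StrictlyDominates p q) (k : κ) : colSum k (rowSum p) = 1 := by
  rw [colSum_rowSum, H.sum_left]

lemma colSum_right (H : StrictlyDominates p q) (k : κ) : colSum k (rowSum q) = 1 := by
  rw [colSum_rowSum, H.sum_right]

lemma bhattacharyya_lt_one (H : StrictlyDominates p q) (k l : κ) (hkl : k ≠ l) :
    ∑ i, Real.exp ((p i k + p i l) / 2) < 1 := by
  let α : κ → ℝ := Pi.single k (1 / 2) + Pi.single l (1 / 2)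
  have hdot (w : κ → ℝ) : α ⬝ᵥ w = (w k + w l) / 2 := by
    rw [add_dotProduct, single_dotProduct, single_dotProduct]
    ring
  have hα0 (j : κ) : 0 ≤ α j := by
    simp only [α, Pi.add_apply, Pi.single_apply]
    split_ifs <;> norm_num
  have hαk : α k = 1 / 2 := by simp [α, hkl]
  have hα (j : κ) : α ≠ Pi.single j 1 := by
    intro h
    rcases eq_or_ne k j with rfl | hj
    · norm_num [h] at hαk
    · norm_num [h, hj] at hαk
  have hhalf : (0 : ℝ) ≤ 1 / 2 := by norm_num
  have hexp (x y : ℝ) : Real.exp ((x + y) / 2) ≤ (Real.exp x + Real.exp y) / 2 := by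
    have := convexOn_exp.2 (Set.mem_univ x) (Set.mem_univ y) hhalf hhalf (add_halves 1)
    rwa [← smul_add, ← smul_add, smul_eq_mul, smul_eq_mul, one_div_mul_eq_div,
      one_div_mul_eq_div] at this
  calc ∑ i, Real.exp ((p i k + p i l) / 2)
      < ∑ j, Real.exp ((q j k + q j l) / 2) := by
        simpa only [hdot] using H.plus α (by simp [α, Finset.sum_add_distrib]; norm_num) hα0 hα
    _ ≤ ∑ j, (Real.exp (q j k) + Real.exp (q j l)) / 2 := Finset.sum_le_sum fun j _ ↦ hexp _ _
    _ = 1 := by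
        rw [← Finset.sum_div, Finset.sum_add_distrib, H.sum_right, H.sum_right]
        norm_num

lemma rowSum_sub_one_mem_nullIdeal (H : StrictlyDominates p q) : rowSum p - 1 ∈ nullIdeal κ :=
  sub_mem_nullIdeal fun k ↦ by rw [H.colSum_left, map_one]

lemma rowSum_sub_rowSum_mem_nullIdeal (H : StrictlyDominates p q) :
    rowSum p - rowSum q ∈ nullIdeal κ :=
  sub_mem_nullIdeal fun k ↦ by rw [H.colSum_left, H.colSum_right]

lemma map_sub_pos_of_colSum (H : StrictlyDominates p q) {k : κ}
    (h : IsState K (nullIdeal κ) (rowSum p - 1) (colSum k) φ) (hK : majorizationCone κ ≤ K) :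
    0 < φ (rowSum p - rowSum q) := by
  obtain ⟨D, hD, hDφ⟩ := exists_derivation h
  obtain ⟨c, hcle, hc0, hc⟩ := exists_logDeriv_eq hD
    fun a ha haK ↦ hDφ a ha ▸ h.nonneg ha (hK haK)
  have hDp : D (rowSum p) = 1 := by
    rw [← sub_zero (D _), ← derivation_one hD, ← map_sub, hDφ _ H.rowSum_sub_one_mem_nullIdeal,
      h.map_unit]
  obtain ⟨l, hl⟩ : ∃ l, -c l * relEntropy p k l ≠ 0 := by
    by_contra! hzero
    rw [derivation_rowSum hD hc0 hc, Finset.sum_eq_zero fun l _ ↦ hzero l] at hDp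
    exact zero_ne_one hDp
  have hlk : l ≠ k := by
    rintro rfl
    exact hl (by rw [relEntropy_self, mul_zero])
  have hcl : c l < 0 := (hcle l hlk).lt_of_ne fun h0 ↦ hl (by rw [h0, neg_zero, zero_mul])
  rw [← hDφ _ H.rowSum_sub_rowSum_mem_nullIdeal, map_sub, derivation_rowSum hD hc0 hc,
    derivation_rowSum hD hc0 hc, ← Finset.sum_sub_distrib]
  simp only [← mul_sub]
  refine Finset.sum_pos' (fun j _ ↦ ?_) ⟨l, Finset.mem_univ l,
    mul_pos (neg_pos.2 hcl) (sub_pos.2 (H.relEntropy_lt k l hlk.symm))⟩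
  rcases eq_or_ne j k with rfl | hjk
  · rw [relEntropy_self, relEntropy_self, sub_self, mul_zero]
  · exact mul_nonneg (neg_nonneg.2 (hcle j hjk))
      (sub_nonneg.2 (H.relEntropy_lt k j hjk.symm).le)

end StrictlyDominates

lemma eq_colSum_of_map_X_eq [DecidableEq κ] {χ : ℝ[κ → ℝ] →ₐ[ℝ] ℝ} {k : κ}
    (hχ : ∀ w, χ (X w) = Real.exp (Pi.single k 1 ⬝ᵥ w)) : χ = colSum k := by
  refine AddMonoidAlgebra.algHom_ext (fun w ↦ ?_) (Subsingleton.elim _ _)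
  rw [single_eq_smul_X, one_smul, hχ, colSum_X, single_one_dotProduct]

lemma eq_single_of_sum_eq_one [DecidableEq κ] {α : κ → ℝ} (hα : ∑ k, α k = 1)
    (h0 : ∀ k, 0 ≤ α k) {k : κ} (hk : ∀ l, l ≠ k → α l ≤ 0) : α = Pi.single k 1 := by
  have hl (l) (hlk : l ≠ k) : α l = 0 := le_antisymm (hk l hlk) (h0 l)
  rw [Finset.sum_eq_single k (fun l _ ↦ hl l) (by simp)] at hα
  ext l
  rcases eq_or_ne l k with rfl | hlk <;> simp [*]

theorem StrictlyDominates.exists_notMem_of_isState [DecidableEq κ] {p : ι → κ → ℝ}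
    {q : ι' → κ → ℝ} (H : StrictlyDominates p q) {K : Cone (κ → ℝ)}
    (hK : majorizationCone κ ≤ K) {χ : ℝ[κ → ℝ] →ₐ[ℝ] ℝ} {φ : ℝ[κ → ℝ] →ₗ[ℝ] ℝ}
    (h : IsState K (nullIdeal κ) (rowSum p - 1) χ φ) {z : ℝ[κ → ℝ]}
    (hz : z ∈ nonnegCoeff (κ → ℝ)) (hz1 : ∀ k, colSum k z = 1) :
    ∃ R : ℕ, rowSum q ^ R * z - rowSum p ^ R ∉ K := by
  by_contra! hR
  have hu := H.rowSum_sub_one_mem_nullIdeal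
  have hpq := H.rowSum_sub_rowSum_mem_nullIdeal
  have hzI : z - 1 ∈ nullIdeal κ := sub_mem_nullIdeal fun k ↦ by rw [hz1, map_one]
  obtain ⟨α, hα⟩ := h.exists_map_X_eq hu hK
  have hα1 := h.sum_exponent_eq_one hu hK hα
  obtain ⟨k₀, -⟩ := Finset.nonempty_of_sum_ne_zero (hα1.trans_ne one_ne_zero)
  have hpos {f : ℝ[κ → ℝ]} (hf : f ∈ nonnegCoeff (κ → ℝ)) (hf1 : ∀ k, colSum k f = 1) : 0 < χ f :=
    map_pos_of_mem_nonnegCoeff h.pos hf fun h0 ↦ by simpa [h0] using hf1 k₀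
  have hp := hpos (rowSum_mem_nonnegCoeff p) H.colSum_left
  have hq := hpos (rowSum_mem_nonnegCoeff q) H.colSum_right
  have hbasis (h0 : χ (rowSum p - 1) ≠ 0) (k : κ) : α ≠ Pi.single k 1 := by
    rintro rfl
    rw [eq_colSum_of_map_X_eq hα] at h0
    exact h0 (mem_nullIdeal.1 hu k)
  rcases lt_trichotomy (χ (rowSum p - 1)) 0 with h0 | h0 | h0
  · have hlt := H.plus α hα1 (h.exponent_nonneg hu hK hα h0.le) (hbasis h0.ne)
    rw [← map_rowSum_eq hα, ← map_rowSum_eq hα] at hlt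
    exact hlt.not_ge (h.map_le_map hu hpq hzI hR hp (hpos hz hz1) h0)
  · obtain ⟨k, -, hk⟩ := h.exists_one_le_exponent hu hK hα h0.ge
    obtain rfl := eq_single_of_sum_eq_one hα1 (h.exponent_nonneg hu hK hα h0.le) hk
    obtain rfl := eq_colSum_of_map_X_eq hα
    exact (H.map_sub_pos_of_colSum h hK).not_ge
      (h.map_sub_nonpos hpq hzI hR hq (by rw [H.colSum_left, H.colSum_right]))
  · have hlt := H.minus α hα1 (h.exists_one_le_exponent hu hK hα h0.le) (hbasis h0.ne')
    rw [← map_rowSum_eq hα, ← map_rowSum_eq hα] at hlt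
    have hle := mul_nonpos_of_nonneg_of_nonpos h0.le (h.map_sub_nonpos hpq hzI hR hq hlt.le)
    rw [← h.map_eq_mul hu hpq, map_sub, sub_nonpos] at hle
    exact hlt.not_ge hle

end FiniteCase

section UnboundedCase

variable {G : Type*} [AddCommGroup G]

/-- The elements that are infinitely small compared to the element `b` of the cone `K`. -/
def infinitesimals (K : Cone G) (b : ℝ[G]) (hb : b ∈ K) : Submodule ℝ ℝ[G] where
  carrier := {a | ∀ N : ℝ, b - N • a ∈ K}
  zero_mem' N := by simpa using hb
  add_mem' {a a'} ha ha' N := by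
    convert Cone.smul_mem (c := 2⁻¹) (by norm_num) (K.add_mem (ha (2 * N)) (ha' (2 * N))) using 1
    module
  smul_mem' c a ha N := by simpa [mul_smul] using ha (N * c)

variable {K : Cone G}

lemma pow_mul_sub_mem {f u : ℝ[G]} {w : G} (hf : f ∈ nonnegCoeff G)
    (hw : f * u - X w * u ∈ K) (n : ℕ) : f ^ n * u - X (n • w) * u ∈ K := by
  induction n with
  | zero => simp [X_zero]
  | succ n ih =>
    convert K.add_mem (Cone.mul_mem hf ih) (Cone.mul_mem (X_mem_nonnegCoeff (n • w)) hw) using 1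
    rw [succ_nsmul, X_add]
    ring

lemma sub_pow_mul_mem {f v : ℝ[G]} (hf : f ∈ nonnegCoeff G) (hv : v - f * v ∈ K) (n : ℕ) :
    v - f ^ n * v ∈ K := by
  induction n with
  | zero => simp
  | succ n ih =>
    convert K.add_mem ih (Cone.mul_mem (pow_mem hf n) hv) using 1
    ring

lemma mul_mem_of_neg_mem {a : ℝ[G]} (ha : a ∈ K)
    (ha' : -a ∈ K) (b : ℝ[G]) : b * a ∈ K := by
  obtain ⟨f, hf, g, hg, rfl⟩ := exists_nonnegCoeff_sub b
  rw [sub_mul, sub_eq_add_neg, ← mul_neg]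
  exact K.add_mem (Cone.mul_mem hf ha) (Cone.mul_mem hg ha')

variable {κ : Type*}

lemma X_const_mul_sub_mem {K : Cone (κ → ℝ)} (hK : majorizationCone κ ≤ K) (s : ℝ) (a : ℝ[κ → ℝ]) :
    X (Function.const κ s) * a - Real.exp s • a ∈ K := by
  convert mul_mem_of_neg_mem (hK (X_const_sub_mem_majorizationCone s))
    (by simpa using hK (sub_X_const_mem_majorizationCone s)) a using 1
  rw [mul_comm a, sub_mul, smul_one_mul]

lemma sub_X_const_mul_mem {K : Cone (κ → ℝ)} (hK : majorizationCone κ ≤ K) (s : ℝ) (a : ℝ[κ → ℝ]) :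
    Real.exp s • a - X (Function.const κ s) * a ∈ K := by
  simpa [add_comm, ← sub_eq_add_neg] using X_const_mul_sub_mem hK s (-a)

lemma rowSum_mul_sub_mem {K : Cone (κ → ℝ)} {u : ℝ[κ → ℝ]} (hu : u ∈ K) {ι : Type*} [Fintype ι]
    (p : ι → κ → ℝ) (i : ι) : rowSum p * u - X (p i) * u ∈ K := by
  classical
  rw [rowSum, ← Finset.add_sum_erase _ _ (Finset.mem_univ i), add_mul, add_sub_cancel_left,
    Finset.sum_mul]
  exact sum_mem fun l _ ↦ Cone.mul_mem (X_mem_nonnegCoeff _) hu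

/-- The element `u` of the ideal `I` is positive for the total cone `K`, the exponent `π` makes
`X π * u` infinitely larger than `u` although `(u + 1) * u` still dominates it, and the multiples
`X (j • π) * u` are cofinal in `I`. -/
structure IsUnbounded (K : Cone G) (I : Ideal ℝ[G]) (u : ℝ[G])
    (π : G) : Prop where
  isTotalCone : IsTotalCone K
  mem_ideal : u ∈ I
  mem_cone : u ∈ K
  neg_notMem : -u ∉ K
  sub_smul_mem : ∀ N : ℝ, X π * u - N • u ∈ K
  add_one_mem : u + 1 ∈ nonnegCoeff G
  add_one_mul_sub_mem : (u + 1) * u - X π * u ∈ K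
  cofinal : ∀ a ∈ I, ∃ j : ℕ, X (j • π) * u - a ∈ K

namespace IsUnbounded

section Generic

variable {I : Ideal ℝ[G]} {u : ℝ[G]} {π : G}

lemma X_mul_mem (h : IsUnbounded K I u π) (w : G) : X w * u ∈ K :=
  Cone.mul_mem (X_mem_nonnegCoeff w) h.mem_cone

theorem exists_addMonoidHom (h : IsUnbounded K I u π) :
    ∃ τ : G →+ ℝ, τ π = 1 ∧ ∀ v w, τ v < τ w → X w * u - X v * u ∈ K := by
  let P : AddSubmonoid G :=
    { carrier := {g | X g * u - u ∈ K}
      zero_mem' := by simp [X_zero]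
      add_mem' := fun {a b} ha hb ↦ by
        change X (a + b) * u - u ∈ K
        convert K.add_mem (Cone.mul_mem (X_mem_nonnegCoeff a) hb) ha using 1
        rw [X_add]
        ring }
  have hX (g : G) : X g * X (-g) = 1 := by rw [← X_add, add_neg_cancel, X_zero]
  have htotal (g : G) : g ∈ P ∨ -g ∈ P := by
    refine (h.isTotalCone.total (X g * u - u)).imp_right fun hg ↦ ?_
    change X (-g) * u - u ∈ K
    convert Cone.mul_mem (X_mem_nonnegCoeff (-g)) hg using 1
    linear_combination u * hX g
  have hπ : -π ∉ P := fun hneg ↦ h.neg_notMem <| by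
    convert K.add_mem (Cone.mul_mem (X_mem_nonnegCoeff π) hneg) (h.sub_smul_mem 2) using 1
    rw [two_smul]
    linear_combination -u * hX π
  have hcof (g : G) : ∃ n : ℕ, n • π - g ∈ P := by
    obtain ⟨n, hn⟩ := h.cofinal _ (I.mul_mem_left (X g) h.mem_ideal)
    refine ⟨n, ?_⟩
    change X (n • π - g) * u - u ∈ K
    convert Cone.mul_mem (X_mem_nonnegCoeff (-g)) hn using 1
    rw [sub_eq_add_neg (n • π), X_add]
    linear_combination u * hX g
  obtain ⟨τ, hτπ, hτ⟩ := exists_addMonoidHom_of_total htotal hπ hcof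
  refine ⟨τ, hτπ, fun v w hvw ↦ ?_⟩
  convert Cone.mul_mem (X_mem_nonnegCoeff v) (hτ (w - v) (by rwa [map_sub, sub_pos])) using 1
  rw [mul_sub, ← mul_assoc, ← X_add, add_sub_cancel]

theorem sub_sub_mul_notMem (h : IsUnbounded K I u π) {v b : ℝ[G]} (hvI : v ∈ I) (hv : v ∈ K)
    {w : G} (hb : b ∈ infinitesimals K (X w * u) (h.X_mul_mem w)) : b - X w * u - u * v ∉ K := by
  intro hmem
  -- With `x = u + 1` and `c = 1 / 2`, the vector `v - x v = -u v` dominates `c X w u`. Hence so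
  -- does `v`, and `X (j • π) u ≥ v ≥ xⁿ v ≥ c xⁿ X w u ≥ c X w X (n • π) u ≥ c X ((j + 1) • π) u`
  -- for suitable `j` and `n`.
  obtain ⟨c, hc, hneg⟩ : ∃ c : ℝ, 0 < c ∧ -(u * v) - c • (X w * u) ∈ K := by
    refine ⟨2⁻¹, by norm_num, ?_⟩
    convert K.add_mem hmem (Cone.smul_mem (c := 2⁻¹) (by norm_num) (hb 2)) using 1
    module
  have hdecr : v - (u + 1) * v ∈ K := by
    convert K.add_mem hneg (Cone.smul_mem hc.le
      (Cone.mul_mem (X_mem_nonnegCoeff w) h.mem_cone)) using 1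
    ring
  have hvw : v - c • (X w * u) ∈ K := by
    convert K.add_mem hneg (Cone.mul_mem h.add_one_mem hv) using 1
    ring
  obtain ⟨j, hj⟩ := h.cofinal v hvI
  obtain ⟨m, hm⟩ := h.cofinal _ (I.mul_mem_left (X (-w)) h.mem_ideal)
  have hpow := pow_mul_sub_mem h.add_one_mem h.add_one_mul_sub_mem (j + 1 + m)
  have hchain : X (j • π) * (u - c • (X π * u)) ∈ K := by
    convert K.add_mem (K.add_mem (K.add_mem hj (sub_pow_mul_mem h.add_one_mem hdecr (j + 1 + m)))
      (Cone.mul_mem (pow_mem h.add_one_mem (j + 1 + m)) hvw))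
      (Cone.smul_mem hc.le (K.add_mem (Cone.mul_mem (X_mem_nonnegCoeff w) hpow)
        (Cone.mul_mem (X_mem_nonnegCoeff (w + (j + 1) • π)) hm))) using 1
    have hX : X w * X (-w) = 1 := by rw [← X_add, add_neg_cancel, X_zero]
    rw [X_add w, add_nsmul, X_add (_ • _), succ_nsmul, X_add (_ • _)]
    simp only [Algebra.smul_def]
    linear_combination (algebraMap ℝ ℝ[G] c * X (j • π) * X π * u) * hX
  have hsat := h.isTotalCone.mem_of_smul_mem (g := ⟨X (j • π), X_mem_nonnegCoeff _⟩)
    (fun h0 ↦ by simpa [X] using congrArg Subtype.val h0) hchain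
  refine h.neg_notMem ?_
  convert K.add_mem hsat (Cone.smul_mem hc.le (h.sub_smul_mem (2 / c))) using 1
  rw [smul_sub, smul_smul, mul_div_cancel₀ _ hc.ne', two_smul]
  ring

end Generic

variable {K : Cone (κ → ℝ)} {u : ℝ[κ → ℝ]} {π : κ → ℝ} {τ : (κ → ℝ) →+ ℝ}

lemma map_const_eq_zero (h : IsUnbounded K (nullIdeal κ) u π) (hK : majorizationCone κ ≤ K)
    (hτπ : τ π = 1) (hτ : ∀ v w, τ v < τ w → X w * u - X v * u ∈ K) (s : ℝ) :
    τ (Function.const κ s) = 0 := by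
  have hle (t : ℝ) : τ (Function.const κ t) ≤ 1 := by
    by_contra! hlt
    refine h.neg_notMem ?_
    convert K.add_mem (K.add_mem (hτ _ _ (hτπ.trans_lt hlt)) (sub_X_const_mul_mem hK t u))
      (h.sub_smul_mem (Real.exp t + 1)) using 1
    rw [add_smul, one_smul]
    ring
  have hnonpos (t : ℝ) : τ (Function.const κ t) ≤ 0 := by
    by_contra! hlt
    obtain ⟨n, hn⟩ := exists_nat_gt (1 / τ (Function.const κ t))
    rw [div_lt_iff₀ hlt, ← nsmul_eq_mul, ← map_nsmul] at hn
    exact hn.not_ge (by simpa using hle (n • t))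
  refine (hnonpos s).antisymm ?_
  exact neg_nonpos.1 ((map_neg τ _).symm.trans_le (hnonpos (-s)))

lemma mem_infinitesimals (h : IsUnbounded K (nullIdeal κ) u π) (hK : majorizationCone κ ≤ K)
    (hτπ : τ π = 1) (hτ : ∀ v w, τ v < τ w → X w * u - X v * u ∈ K) {v w : κ → ℝ}
    (hvw : τ v < τ w) : X v * u ∈ infinitesimals K (X w * u) (h.X_mul_mem w) := fun N ↦ by
  set c := Function.const κ N
  have hlt : τ (v + c) < τ w := by rwa [map_add, h.map_const_eq_zero hK hτπ hτ, add_zero]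
  have hN : 0 ≤ Real.exp N - N := by linarith [Real.add_one_le_exp N]
  convert K.add_mem (K.add_mem (hτ _ _ hlt) (X_const_mul_sub_mem hK N (X v * u)))
    (Cone.smul_mem hN (h.X_mul_mem v)) using 1
  rw [X_add, sub_smul]
  ring

lemma mul_notMem_infinitesimals (h : IsUnbounded K (nullIdeal κ) u π) (hK : majorizationCone κ ≤ K)
    {f : ℝ[κ → ℝ]} (hf : f ∈ nonnegCoeff (κ → ℝ)) {w : κ → ℝ}
    (hw : ∀ k, colSum k f = Real.exp (w k)) :
    f * u ∉ infinitesimals K (X w * u) (h.X_mul_mem w) := fun hfu ↦ by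
  refine h.sub_sub_mul_notMem (v := f - X w) (sub_mem_nullIdeal fun k ↦ by rw [hw, colSum_X])
    (hK (sub_X_mem_majorizationCone hf hw)) hfu ?_
  convert K.zero_mem using 1
  ring

variable [Fintype κ]

theorem exists_eq_dotProduct (h : IsUnbounded K (nullIdeal κ) u π) (hK : majorizationCone κ ≤ K) :
    ∃ β : κ → ℝ, ∑ k, β k = 0 ∧ (∃ k, 0 ≤ β k ∧ ∀ l, l ≠ k → β l ≤ 0) ∧ β ⬝ᵥ π = 1 ∧
      ∀ v w, β ⬝ᵥ v < β ⬝ᵥ w → X v * u ∈ infinitesimals K (X w * u) (h.X_mul_mem w) := by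
  classical
  obtain ⟨τ, hτπ, hτ⟩ := h.exists_addMonoidHom
  have hinf {v w : κ → ℝ} (hvw : τ v < τ w) := h.mem_infinitesimals hK hτπ hτ hvw
  obtain ⟨β, hβ⟩ := exists_eq_dotProduct_of_quasiconvex τ fun k s θ h0 h1 ↦ by
    by_contra! hlt
    obtain ⟨hlt0, hlts⟩ := max_lt_iff.1 hlt
    refine h.mul_notMem_infinitesimals hK (mix_mem_nonnegCoeff _ h0.le h1.le)
      (colSum_mix_single k s h0.le h1) ?_
    rw [add_mul, smul_mul_assoc, smul_mul_assoc, ← X_zero]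
    exact add_mem (Submodule.smul_mem _ _ (hinf (by rwa [map_zero])))
      (Submodule.smul_mem _ _ (hinf hlts))
  have hβ0 : ∑ k, β k = 0 := by
    simpa [hβ, dotProduct] using h.map_const_eq_zero hK hτπ hτ 1
  obtain ⟨k, hk⟩ : ∃ k, 0 < β k := by
    by_contra! hβneg
    have : β = 0 := funext fun k ↦
      (Finset.sum_eq_zero_iff_of_nonpos fun k _ ↦ hβneg k).1 hβ0 k (Finset.mem_univ k)
    simp [hβ, this] at hτπ
  refine ⟨β, hβ0, ⟨k, hk.le, fun l hl ↦ nonpos_of_dotProduct_logCosh_nonpos (fun w hw ↦ ?_)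
    hl.symm hk⟩, hβ π ▸ hτπ, fun v w hvw ↦ hinf (by rwa [hβ, hβ])⟩
  by_contra! hlt
  refine h.mul_notMem_infinitesimals hK (cosh_mem_nonnegCoeff w) (colSum_cosh w) ?_
  rw [smul_mul_assoc, add_mul]
  exact Submodule.smul_mem _ _ (add_mem (hinf (by rwa [hβ, hβ, hw])) (hinf (by
    rwa [hβ, hβ, dotProduct_neg, hw, neg_zero])))

lemma exists_rowSum_pow_mul_mem_infinitesimals (h : IsUnbounded K (nullIdeal κ) u π) {β : κ → ℝ}
    (hβ : ∀ v w, β ⬝ᵥ v < β ⬝ᵥ w → X v * u ∈ infinitesimals K (X w * u) (h.X_mul_mem w))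
    {ι : Type*} [Fintype ι] [Nonempty ι] {q : ι → κ → ℝ} {w : κ → ℝ}
    (hw : ∀ j, β ⬝ᵥ q j < β ⬝ᵥ w) (J : ℕ) :
    ∃ R : ℕ, rowSum q ^ R * (X (J • π) * u) ∈
      infinitesimals K (X (R • w) * u) (h.X_mul_mem (R • w)) := by
  obtain ⟨j₀, hj₀⟩ := Finite.exists_max fun j ↦ β ⬝ᵥ q j
  have hpos := sub_pos.2 (hw j₀)
  obtain ⟨R, hR⟩ := exists_nat_gt (J * (β ⬝ᵥ π) / (β ⬝ᵥ w - β ⬝ᵥ q j₀))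
  rw [div_lt_iff₀ hpos] at hR
  refine ⟨R, ?_⟩
  rw [← rowSum_powRows, rowSum, Finset.sum_mul]
  refine sum_mem fun f _ ↦ ?_
  rw [← mul_assoc, ← X_add]
  have hle : ∑ s, β ⬝ᵥ q (f s) ≤ R * (β ⬝ᵥ q j₀) := by
    simpa using Finset.sum_le_sum fun s (_ : s ∈ Finset.univ) ↦ hj₀ (f s)
  refine hβ _ _ ?_
  rw [powRows, dotProduct_add, dotProduct_sum, dotProduct_smul, dotProduct_smul, nsmul_eq_mul,
    nsmul_eq_mul]
  linarith

end IsUnbounded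

theorem StrictlyDominates.exists_notMem_of_isUnbounded {κ ι ι' : Type*} [Fintype κ]
    [Fintype ι] [Fintype ι'] [DecidableEq κ] {p : ι → κ → ℝ} {q : ι' → κ → ℝ}
    (H : StrictlyDominates p q) {K : Cone (κ → ℝ)} {π : κ → ℝ} (hK : majorizationCone κ ≤ K)
    (h : IsUnbounded K (nullIdeal κ) (rowSum p - 1) π) {z : ℝ[κ → ℝ]}
    (hz1 : ∀ k, colSum k z = 1) : ∃ R : ℕ, rowSum q ^ R * z - rowSum p ^ R ∉ K := by
  obtain ⟨β, hβ0, hβ, hβπ, hinf⟩ := h.exists_eq_dotProduct hK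
  obtain ⟨i, hi⟩ := H.tropical β hβ0 hβ (by rintro rfl; simp at hβπ)
  obtain ⟨k, -⟩ := hβ
  have : Nonempty ι' := by
    by_contra hempty
    have := not_nonempty_iff.1 hempty
    simpa using H.sum_right k
  obtain ⟨J, hJ⟩ := h.cofinal _ (Ideal.mul_mem_left _ z h.mem_ideal)
  obtain ⟨R, hR⟩ := h.exists_rowSum_pow_mul_mem_infinitesimals hinf hi J
  refine ⟨R, fun hv ↦ h.sub_sub_mul_notMem (sub_mem_nullIdeal fun k ↦ ?_) hv hR ?_⟩
  · simp [H.colSum_left, H.colSum_right, hz1]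
  convert K.add_mem
    (pow_mul_sub_mem (rowSum_mem_nonnegCoeff p) (rowSum_mul_sub_mem h.mem_cone p i) R)
    (Cone.mul_mem (pow_mem (rowSum_mem_nonnegCoeff q) R) hJ) using 1
  ring

end UnboundedCase

section Separation

lemma IsTotalCone.exists_forall_sub_mem {S M ι : Type*} [CommSemiring S] [AddCommGroup M]
    [Module S M] {K : Submodule S M} (hK : IsTotalCone K) [Finite ι] [Nonempty ι] (b : ι → M) :
    ∃ i₀, ∀ i, b i₀ - b i ∈ K := by
  let r : M → M → Prop := fun x y ↦ y - x ∈ K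
  have : IsTrans M r := ⟨fun x y z hxy hyz ↦ by simpa [r] using K.add_mem hyz hxy⟩
  have hdir : Directed r b := fun i j ↦ by
    rcases hK.total (b j - b i) with h | h
    · exact ⟨j, h, by simp [r]⟩
    · exact ⟨i, by simp [r], by simpa [r] using h⟩
  exact hdir.finite_le id

lemma exists_smul_pow_mul_sub_pow_sub_one_mem {G : Type*} [AddCommGroup G] {K : Cone G}
    {f x : ℝ[G]} {c : ℝ} (hf : f ∈ nonnegCoeff G) (hx : x ∈ nonnegCoeff G) (hc : 0 ≤ c)
    (hfx : f * (x - 1) - (x - 1) ∈ K) (hcf : c • (f * (x - 1)) - x * (x - 1) ∈ K) (j : ℕ) :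
    ∃ c' : ℝ, 0 ≤ c' ∧ c' • (f ^ j * (x - 1)) - (x ^ j - 1) ∈ K := by
  induction j with
  | zero => exact ⟨0, le_rfl, by simp⟩
  | succ j ih =>
    obtain ⟨c', hc', ih⟩ := ih
    have hpow : f ^ (j + 1) * (x - 1) - (x - 1) ∈ K := by
      simpa [X_zero] using pow_mul_sub_mem (w := 0) hf (by simpa [X_zero] using hfx) (j + 1)
    refine ⟨c' * c + 1, by positivity, ?_⟩
    convert K.add_mem (K.add_mem (Cone.mul_mem hx ih)
      (Cone.smul_mem hc' (Cone.mul_mem (pow_mem hf j) hcf))) hpow using 1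
    simp only [Algebra.smul_def, map_add, map_mul, map_one]
    ring

lemma sub_one_mem_majorizationCone {κ : Type*} {f : ℝ[κ → ℝ]} (hf : f ∈ nonnegCoeff (κ → ℝ))
    (hf1 : ∀ k, colSum k f = 1) : f - 1 ∈ majorizationCone κ := by
  simpa [X_zero] using sub_X_mem_majorizationCone hf (w := 0) (by simpa using hf1)

namespace StrictlyDominates

variable {κ ι ι' : Type*} [Fintype κ] [Fintype ι] [Fintype ι'] [DecidableEq κ] {p : ι → κ → ℝ}
  {q : ι' → κ → ℝ} {K : Cone (κ → ℝ)}

lemma rowSum_sub_one_mem_majorizationCone (H : StrictlyDominates p q) :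
    rowSum p - 1 ∈ majorizationCone κ :=
  sub_one_mem_majorizationCone (rowSum_mem_nonnegCoeff p) H.colSum_left

variable [Nonempty κ]

lemma exists_smul_pow_mul_sub_mem (H : StrictlyDominates p q) (hK : majorizationCone κ ≤ K)
    {f : ℝ[κ → ℝ]} {c : ℝ} (hf : f ∈ nonnegCoeff (κ → ℝ)) (hc : 0 ≤ c)
    (hfp : f * (rowSum p - 1) - (rowSum p - 1) ∈ K)
    (hcf : c • (f * (rowSum p - 1)) - rowSum p * (rowSum p - 1) ∈ K) {a : ℝ[κ → ℝ]}
    (ha : a ∈ nullIdeal κ) : ∃ (b : ℝ) (j : ℕ), b • (f ^ j * (rowSum p - 1)) - a ∈ K := by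
  obtain ⟨b, hb, j, hj⟩ := exists_smul_rowSum_pow_sub_one_sub_mem_majorizationCone H.sum_left
    H.bhattacharyya_lt_one (mem_nullIdeal.1 ha)
  obtain ⟨b', -, hb'⟩ := exists_smul_pow_mul_sub_pow_sub_one_mem hf (rowSum_mem_nonnegCoeff p) hc
    hfp hcf j
  refine ⟨b * b', j, ?_⟩
  convert K.add_mem (hK hj) (Cone.smul_mem hb.le hb') using 1
  module

theorem exists_isState (H : StrictlyDominates p q) (hKtot : IsTotalCone K)
    (hK : majorizationCone κ ≤ K) (hpK : -(rowSum p - 1) ∉ K) {N : ℝ}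
    (hN : N • (rowSum p - 1) - rowSum p * (rowSum p - 1) ∈ K) :
    ∃ χ φ, IsState K (nullIdeal κ) (rowSum p - 1) χ φ := by
  have hN' : |N| • (1 * (rowSum p - 1)) - rowSum p * (rowSum p - 1) ∈ K := by
    convert K.add_mem hN (Cone.smul_mem (sub_nonneg.2 (le_abs_self N))
      (hK H.rowSum_sub_one_mem_majorizationCone)) using 1
    rw [one_mul, sub_smul]
    abel
  refine MatrixMajorization.exists_isState hKtot H.rowSum_sub_one_mem_nullIdeal hpK fun a ha ↦ ?_
  obtain ⟨b, j, hb⟩ := H.exists_smul_pow_mul_sub_mem hK (one_mem _) (abs_nonneg N) (by simp) hN' ha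
  exact ⟨b, by simpa using hb⟩

theorem exists_isUnbounded (H : StrictlyDominates p q) (hKtot : IsTotalCone K)
    (hK : majorizationCone κ ≤ K) (hpK : -(rowSum p - 1) ∉ K)
    (hbig : ∀ N : ℝ, rowSum p * (rowSum p - 1) - N • (rowSum p - 1) ∈ K) :
    ∃ π, IsUnbounded K (nullIdeal κ) (rowSum p - 1) π := by
  set u := rowSum p - 1 with hu
  have huK : u ∈ K := hK H.rowSum_sub_one_mem_majorizationCone
  have : Nonempty ι := by
    by_contra hempty
    have := not_nonempty_iff.1 hempty
    simpa using H.sum_left (Classical.arbitrary κ)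
  -- `X (p i) * u` is maximal at the chosen `i`, hence at least the average `m⁻¹ • (rowSum p * u)`.
  obtain ⟨i, hi⟩ := hKtot.exists_forall_sub_mem fun i ↦ X (p i) * u
  set m : ℝ := (Fintype.card ι : ℝ)
  have hmpos : 0 < m := Nat.cast_pos.2 Fintype.card_pos
  have hmax : m • (X (p i) * u) - rowSum p * u ∈ K := by
    convert sum_mem fun l (_ : l ∈ Finset.univ) ↦ hi l using 1
    rw [Finset.sum_sub_distrib, Finset.sum_const, Finset.card_univ, ← Nat.cast_smul_eq_nsmul ℝ,
      ← Finset.sum_mul, ← rowSum]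
  have hπ (N : ℝ) : X (p i) * u - N • u ∈ K := by
    convert Cone.smul_mem (inv_nonneg.2 hmpos.le) (K.add_mem hmax (hbig (m * N))) using 1
    rw [sub_add_sub_cancel, smul_sub m⁻¹, mul_smul, inv_smul_smul₀ hmpos.ne',
      inv_smul_smul₀ hmpos.ne']
  refine ⟨p i, hKtot, H.rowSum_sub_one_mem_nullIdeal, huK, hpK, hπ, ?_, ?_, fun a ha ↦ ?_⟩
  · simpa [hu] using rowSum_mem_nonnegCoeff p
  · simpa [hu] using rowSum_mul_sub_mem huK p i
  obtain ⟨b, j, hb⟩ := H.exists_smul_pow_mul_sub_mem hK (X_mem_nonnegCoeff (p i)) hmpos.le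
    (by simpa using hπ 1) hmax ha
  refine ⟨j + 1, ?_⟩
  convert K.add_mem hb (Cone.mul_mem (pow_mem (X_mem_nonnegCoeff (p i)) j) (hπ b)) using 1
  rw [X_nsmul, pow_succ, Algebra.smul_def, Algebra.smul_def]
  ring

theorem exists_notMem (H : StrictlyDominates p q) (hKtot : IsTotalCone K)
    (hK : majorizationCone κ ≤ K) (hpK : -(rowSum p - 1) ∉ K) {z : ℝ[κ → ℝ]}
    (hz : z ∈ nonnegCoeff (κ → ℝ)) (hz1 : ∀ k, colSum k z = 1) :
    ∃ R : ℕ, rowSum q ^ R * z - rowSum p ^ R ∉ K := by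
  by_cases hbdd : ∃ N : ℝ, N • (rowSum p - 1) - rowSum p * (rowSum p - 1) ∈ K
  · obtain ⟨N, hN⟩ := hbdd
    obtain ⟨χ, φ, h⟩ := H.exists_isState hKtot hK hpK hN
    exact H.exists_notMem_of_isState hK h hz hz1
  · push Not at hbdd
    obtain ⟨π, h⟩ := H.exists_isUnbounded hKtot hK hpK fun N ↦ by
      simpa using (hKtot.total _).resolve_left (hbdd N)
    exact H.exists_notMem_of_isUnbounded hK h hz1

end StrictlyDominates

end Separation

section Catalysis

variable {G : Type*} [AddCommGroup G] {K : Cone G} {a b f x y : ℝ[G]}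

lemma pow_sub_pow_mem (ha : a ∈ nonnegCoeff G) (hb : b ∈ nonnegCoeff G) (hab : a - b ∈ K)
    (n : ℕ) : a ^ n - b ^ n ∈ K := by
  rw [← geom_sum₂_mul]
  exact Cone.mul_mem (sum_mem fun i _ ↦ mul_mem (pow_mem ha _) (pow_mem hb _)) hab

lemma mul_pow_sub_pow_mem (hx : x ∈ nonnegCoeff G) (hy : y ∈ nonnegCoeff G)
    (hf : f * (x - y) ∈ K) (n : ℕ) : f * (x ^ n - y ^ n) ∈ K := by
  rw [← geom_sum₂_mul, mul_left_comm]
  exact Cone.mul_mem (sum_mem fun i _ ↦ mul_mem (pow_mem hx _) (pow_mem hy _)) hf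

lemma mul_pow_sub_pow_mul_sub_mem (hx : x ∈ nonnegCoeff G) (hy : y ∈ nonnegCoeff G)
    (hf : f * (x - y) ∈ K) (r n : ℕ) :
    f * (x ^ (r + n) - y ^ (r + n) * x) - f * y ^ n * (x ^ r - y ^ r * x) ∈ K := by
  convert Cone.mul_mem (pow_mem hx r) (mul_pow_sub_pow_mem hx hy hf n) using 1
  ring

lemma pow_mul_sub_pow_mul_pow_mem {r : ℕ} (hx : x ∈ nonnegCoeff G) (hy : y ∈ nonnegCoeff G)
    (hf : f * (x ^ r - y ^ r * x) ∈ K) (n : ℕ) :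
    x ^ (r * n) * f - y ^ (r * n) * x ^ n * f ∈ K := by
  induction n with
  | zero => simp
  | succ n ih =>
    convert K.add_mem (Cone.mul_mem (pow_mem hx r) ih)
      (Cone.mul_mem (mul_mem (pow_mem hy (r * n)) (pow_mem hx n)) hf) using 1
    ring

/-- A catalyst can be removed from an asymptotic comparison by absorbing it into a bounded number
of copies. -/
theorem exists_forall_pow_sub_pow_mem (hx : x ∈ nonnegCoeff G) (hy : y ∈ nonnegCoeff G)
    (hf : f ∈ nonnegCoeff G) (hx1 : x - 1 ∈ K) (hf1 : f - 1 ∈ K) {j k r : ℕ} (hr : 0 < r)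
    (hxy : x ^ j - y ∈ K) (hxf : x ^ k - f ∈ K) (hfr : f * (x ^ r - y ^ r * x) ∈ K) :
    ∃ N, ∀ n, N ≤ n → x ^ n - y ^ n ∈ K := by
  have hpow (n : ℕ) : x ^ n - 1 ∈ K := by simpa using pow_sub_pow_mem hx (one_mem _) hx1 n
  refine ⟨r * (j * (k + r)) + k, fun N hN ↦ ?_⟩
  obtain ⟨n, i, e, hNni, hn⟩ : ∃ n i e, N = r * n + (k + i) ∧ n = j * (k + i) + e := by
    have hlt := Nat.mod_lt (N - k) hr
    have hle : j * (k + (N - k) % r) ≤ (N - k) / r := by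
      rw [Nat.le_div_iff_mul_le hr, mul_comm]
      exact (Nat.mul_le_mul_left r (Nat.mul_le_mul_left j (by lia))).trans
        (Nat.le_sub_of_add_le hN)
    exact ⟨_, _, _, by have := Nat.div_add_mod (N - k) r; lia, (Nat.add_sub_cancel' hle).symm⟩
  -- `x ^ N ≥ x ^ (r n) x ^ i f ≥ x ^ (r n) f ≥ y ^ (r n) x ^ n f ≥ y ^ (r n) x ^ n ≥ y ^ N`
  have hxN := Cone.mul_mem (mul_mem (pow_mem hx (r * n)) (pow_mem hx i)) hxf
  have hxi := Cone.mul_mem (mul_mem (pow_mem hx (r * n)) hf) (hpow i)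
  have hswap := pow_mul_sub_pow_mul_pow_mem hx hy hfr n
  have hdrop := Cone.mul_mem (mul_mem (pow_mem hy (r * n)) (pow_mem hx n)) hf1
  have hxe := Cone.mul_mem (mul_mem (pow_mem hy (r * n)) (pow_mem hx (j * (k + i)))) (hpow e)
  have hyN := Cone.mul_mem (pow_mem hy (r * n)) (pow_sub_pow_mem (pow_mem hx j) hy hxy (k + i))
  convert K.add_mem (K.add_mem (K.add_mem hxN hxi) (K.add_mem hswap hdrop))
    (K.add_mem hxe hyN) using 1
  rw [hNni, pow_add x (r * n), pow_add y (r * n), hn]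
  ring

namespace StrictlyDominates

variable {κ ι ι' : Type*} [Fintype κ] [Nonempty κ] [Fintype ι] [Fintype ι'] [DecidableEq κ]
  {p : ι → κ → ℝ} {q : ι' → κ → ℝ}

lemma exists_smul_rowSum_sub_one_add_mem (H : StrictlyDominates p q) {a : ℝ[κ → ℝ]}
    (ha : a ∈ nullIdeal κ) :
    ∃ f : nonnegCoeff (κ → ℝ), f • (rowSum p - 1) + a ∈ majorizationCone κ := by
  obtain ⟨c, hc, n, hn⟩ := exists_smul_rowSum_pow_sub_one_sub_mem_majorizationCone H.sum_left
    H.bhattacharyya_lt_one (mem_nullIdeal.1 ((nullIdeal κ).neg_mem ha))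
  refine ⟨⟨c • ∑ i ∈ Finset.range n, rowSum p ^ i, smul_mem_nonnegCoeff hc.le
    (sum_mem fun i _ ↦ pow_mem (rowSum_mem_nonnegCoeff p) i)⟩, ?_⟩
  rwa [Subsemiring.smul_def, smul_eq_mul, smul_mul_assoc, geom_sum_mul, ← sub_neg_eq_add]

theorem exists_smul_rowSum_sub_rowSum_mem (H : StrictlyDominates p q) :
    ∃ f : nonnegCoeff (κ → ℝ), f ≠ 0 ∧ f • (rowSum p - rowSum q) ∈ majorizationCone κ := by
  obtain ⟨-, h⟩ := exists_smul_mem_of_forall_isTotalCone H.rowSum_sub_one_mem_majorizationCone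
    (fun _ : Unit ↦ rowSum p - rowSum q) (fun _ _ _ ↦ ⟨1, 1, one_ne_zero, by simp⟩)
    (fun _ ↦ H.exists_smul_rowSum_sub_one_add_mem H.rowSum_sub_rowSum_mem_nullIdeal)
    (fun K hK hKtot hpK ↦ by
      obtain ⟨R, hR⟩ := H.exists_notMem hKtot hK hpK (one_mem _) fun k ↦ map_one _
      refine ⟨(), fun hmem ↦ hR ?_⟩
      rw [mul_one]
      exact pow_sub_pow_mem (rowSum_mem_nonnegCoeff q) (rowSum_mem_nonnegCoeff p)
        (by simpa using hmem) R)
  exact h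

theorem exists_smul_rowSum_pow_sub_mem (H : StrictlyDominates p q) :
    ∃ r, 0 < r ∧ ∃ f : nonnegCoeff (κ → ℝ), f ≠ 0 ∧
      f • (rowSum p ^ r - rowSum q ^ r * rowSum p) ∈ majorizationCone κ := by
  have hp := rowSum_mem_nonnegCoeff p
  have hq := rowSum_mem_nonnegCoeff q
  obtain ⟨f, hf0, hf⟩ := H.exists_smul_rowSum_sub_rowSum_mem
  have hq0 : (⟨rowSum q, hq⟩ : nonnegCoeff (κ → ℝ)) ≠ 0 := fun h0 ↦ by
    simpa [H.colSum_right] using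
      congr_arg (fun g : nonnegCoeff (κ → ℝ) ↦ colSum (Classical.arbitrary κ) g) h0
  obtain ⟨r, g, hg0, hg⟩ := exists_smul_mem_of_forall_isTotalCone
    H.rowSum_sub_one_mem_majorizationCone (fun R ↦ rowSum p ^ R - rowSum q ^ R * rowSum p)
    (fun R R' hR ↦ by
      obtain ⟨n, rfl⟩ := Nat.exists_eq_add_of_le hR
      exact ⟨f, f * ⟨rowSum q, hq⟩ ^ n, mul_ne_zero hf0 (pow_ne_zero n hq0),
        by simpa [Subsemiring.smul_def] using mul_pow_sub_pow_mul_sub_mem hp hq hf R n⟩)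
    (fun R ↦ H.exists_smul_rowSum_sub_one_add_mem
      (sub_mem_nullIdeal fun k ↦ by simp [H.colSum_left, H.colSum_right]))
    (fun K hK hKtot hpK ↦ by simpa using H.exists_notMem hKtot hK hpK hp H.colSum_left)
  refine ⟨r + 1, r.succ_pos, g * f, mul_ne_zero hg0 hf0, ?_⟩
  convert add_mem (Cone.mul_mem g.2 (mul_pow_sub_pow_mul_sub_mem hp hq hf r 1))
    (Cone.mul_mem (mul_mem f.2 hq) hg) using 1
  simp only [Subsemiring.smul_def, smul_eq_mul, Subsemiring.coe_mul]
  ring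

theorem exists_forall_rowSum_pow_sub_rowSum_pow_mem (H : StrictlyDominates p q) :
    ∃ N, ∀ n, N ≤ n → rowSum p ^ n - rowSum q ^ n ∈ majorizationCone κ := by
  obtain ⟨r, hr, ⟨f, hf⟩, hf0, hfr⟩ := H.exists_smul_rowSum_pow_sub_mem
  have hpos (k : κ) : 0 < colSum k f :=
    map_pos_of_mem_nonnegCoeff (colSum_X_pos k) hf fun h ↦ hf0 (Subtype.ext h)
  set g := X (fun k ↦ -Real.log (colSum k f)) * f
  have hg : g ∈ nonnegCoeff (κ → ℝ) := mul_mem (X_mem_nonnegCoeff _) hf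
  have hg1 (k : κ) : colSum k g = 1 := by
    rw [map_mul, colSum_X, Real.exp_neg, Real.exp_log (hpos k), inv_mul_cancel₀ (hpos k).ne']
  obtain ⟨k, hk⟩ := exists_rowSum_pow_sub_mem_majorizationCone H.sum_left H.bhattacharyya_lt_one
    hg hg1
  obtain ⟨j, hj⟩ := exists_rowSum_pow_sub_mem_majorizationCone H.sum_left H.bhattacharyya_lt_one
    (rowSum_mem_nonnegCoeff q) H.colSum_right
  refine exists_forall_pow_sub_pow_mem (rowSum_mem_nonnegCoeff p) (rowSum_mem_nonnegCoeff q) hg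
    H.rowSum_sub_one_mem_majorizationCone (sub_one_mem_majorizationCone hg hg1) hr hj hk ?_
  rw [mul_assoc]
  exact Cone.mul_mem (X_mem_nonnegCoeff _) hfr

end StrictlyDominates

end Catalysis

section Blackwell

lemma isSublinear_iSup {E ι : Type*} [AddCommGroup E] [Module ℝ E] [Finite ι] [Nonempty ι]
    (c : ι → E →ₗ[ℝ] ℝ) : IsSublinear fun v ↦ ⨆ j, c j v where
  smul t v ht := by simp only [map_smul, smul_eq_mul, Real.mul_iSup_of_nonneg ht]
  add v w := ciSup_le fun j ↦ by
    rw [map_add]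
    exact add_le_add (le_ciSup (f := fun j ↦ c j v) (Set.finite_range _).bddAbove j)
      (le_ciSup (f := fun j ↦ c j w) (Set.finite_range _).bddAbove j)

variable {A B κ : Type*} [Fintype A]

/-- The map taking a matrix, given by the list of its columns `T i`, to its product with the matrix
whose rows are `a i`. -/
def columnsMul (a : A → κ → ℝ) : (A → B → ℝ) →ₗ[ℝ] (B → κ → ℝ) where
  toFun T j := ∑ i, T i j • a i
  map_add' S T := by
    ext j
    simp only [Pi.add_apply, add_smul, Finset.sum_add_distrib]
  map_smul' c T := funext fun j ↦ by
    simp only [Pi.smul_apply, smul_assoc, Finset.smul_sum, RingHom.id_apply]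

lemma columnsMul_single [DecidableEq B] (a : A → κ → ℝ) (J : A → B) :
    columnsMul a (fun i ↦ Pi.single (J i) 1) = ∑ i, Pi.single (J i) (a i) := by
  ext j k
  simp only [columnsMul, LinearMap.coe_mk, AddHom.coe_mk, Finset.sum_apply]
  congr! 1 with i
  rcases eq_or_ne j (J i) with rfl | hj <;> simp [*]

lemma mem_columnsMul_image [Fintype B] [Nonempty B] [Finite κ] (a : A → κ → ℝ) (b : B → κ → ℝ)
    (h : ∀ ψ : (κ → ℝ) → ℝ, IsSublinear ψ → ∑ j, ψ (b j) ≤ ∑ i, ψ (a i)) :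
    b ∈ columnsMul a '' Set.univ.pi fun _ ↦ stdSimplex ℝ B := by
  classical
  by_contra hb
  have hclosed : IsClosed (columnsMul a '' Set.univ.pi fun _ ↦ stdSimplex ℝ B) :=
    ((isCompact_univ_pi fun _ ↦ isCompact_stdSimplex ℝ B).image
      (columnsMul a).continuous_of_finiteDimensional).isClosed
  obtain ⟨f, u, hf, hu⟩ := geometric_hahn_banach_closed_point
    ((convex_pi fun _ _ ↦ convex_stdSimplex ℝ B).linear_image (columnsMul a)) hclosed hb
  let c (j : B) : (κ → ℝ) →ₗ[ℝ] ℝ := f.toLinearMap ∘ₗ LinearMap.single ℝ (fun _ ↦ κ → ℝ) j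
  let ψ (v : κ → ℝ) : ℝ := ⨆ j, c j v
  choose J hJ using fun i ↦ exists_eq_ciSup_of_finite (f := fun j ↦ c j (a i))
  have hfb : f b ≤ ∑ j, ψ (b j) :=
    calc f b = ∑ j, c j (b j) := by
          conv_lhs => rw [← Finset.univ_sum_single b, map_sum]
          rfl
      _ ≤ ∑ j, ψ (b j) := Finset.sum_le_sum fun j _ ↦
          le_ciSup (f := fun i ↦ c i (b j)) (Set.finite_range _).bddAbove j
  have hfa : ∑ i, ψ (a i) < u :=
    calc ∑ i, ψ (a i) = f (columnsMul a fun i ↦ Pi.single (J i) 1) := by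
          rw [columnsMul_single, map_sum]
          exact Finset.sum_congr rfl fun i _ ↦ (hJ i).symm
      _ < u := hf _ ⟨_, fun i _ ↦ single_mem_stdSimplex ℝ (J i), rfl⟩
  exact (hfa.trans hu).not_ge (hfb.trans (h ψ (isSublinear_iSup c)))

/-- Blackwell's theorem on the comparison of experiments. -/
theorem exists_isStochastic_of_forall_isSublinear [Fintype B] [Nonempty B] [Finite κ]
    (a : A → κ → ℝ) (b : B → κ → ℝ)
    (h : ∀ ψ : (κ → ℝ) → ℝ, IsSublinear ψ → ∑ j, ψ (b j) ≤ ∑ i, ψ (a i)) :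
    ∃ T : B → A → ℝ, IsStochastic T ∧ ∀ k, matVec T (fun i ↦ a i k) = fun j ↦ b j k := by
  obtain ⟨T, hT, rfl⟩ := mem_columnsMul_image a b h
  refine ⟨fun j i ↦ T i j, ⟨fun j i ↦ (hT i trivial).1 j, fun i ↦ (hT i trivial).2⟩, fun k ↦ ?_⟩
  ext j
  simp [matVec, columnsMul]

end Blackwell

section LogRows

variable {d m : ℕ} {P : Fin d → Fin m → ℝ}

/-- The rows of a tuple of vectors within its common support, in logarithmic coordinates. -/
def logRows (P : Fin d → Fin m → ℝ) : suppIdx P → Fin d → ℝ :=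
  fun i k ↦ Real.log (P k i)

lemma eq_zero_of_notMem_suppIdx {i : Fin m} (hi : i ∉ suppIdx P) (k : Fin d) : P k i = 0 := by
  simp only [suppIdx, Finset.mem_filter, Finset.mem_univ, true_and, not_exists, not_not] at hi
  exact hi k

lemma pos_of_mem_suppIdx (hP : ∀ k i, 0 ≤ P k i) (hPs : ∀ k l i, P k i ≠ 0 ↔ P l i ≠ 0)
    {i : Fin m} (hi : i ∈ suppIdx P) (k : Fin d) : 0 < P k i := by
  obtain ⟨l, hl⟩ := (Finset.mem_filter.1 hi).2
  exact (hP k i).lt_of_ne' ((hPs l k i).1 hl)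

lemma sum_suppIdx {f : Fin m → ℝ} (hf : ∀ i ∉ suppIdx P, f i = 0) :
    ∑ i : suppIdx P, f i = ∑ i, f i := by
  rw [Finset.sum_coe_sort (suppIdx P) f]
  exact Finset.sum_subset (Finset.subset_univ _) fun i _ ↦ hf i

lemma nonempty_suppIdx {k : Fin d} (hP : IsProbVec (P k)) : Nonempty (suppIdx P) := by
  by_contra h
  have := sum_suppIdx fun i hi ↦ eq_zero_of_notMem_suppIdx (P := P) hi k
  rw [hP.2, Finset.sum_eq_zero fun i _ ↦ (h ⟨i⟩).elim] at this
  exact zero_ne_one this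

variable (hpos : ∀ i ∈ suppIdx P, ∀ k, 0 < P k i)
include hpos

lemma exp_logRows (i : suppIdx P) (k : Fin d) : Real.exp (logRows P i k) = P k i :=
  Real.exp_log (hpos i i.2 k)

lemma sum_exp_logRows (k : Fin d) : ∑ i, Real.exp (logRows P i k) = ∑ i, P k i := by
  simp only [exp_logRows hpos, sum_suppIdx fun _ hi ↦ eq_zero_of_notMem_suppIdx hi k]

lemma prod_rpow_eq_exp (α : Fin d → ℝ) (i : suppIdx P) :
    ∏ k, P k i ^ α k = Real.exp (α ⬝ᵥ logRows P i) := by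
  rw [dotProduct, Real.exp_sum]
  refine Finset.prod_congr rfl fun k _ ↦ ?_
  rw [← exp_logRows hpos, ← Real.exp_mul, mul_comm]

lemma Dmat_eq (α : Fin d → ℝ) :
    Dmat α P = 1 / ((⨆ k, α k) - 1) * Real.log (∑ i, Real.exp (α ⬝ᵥ logRows P i)) := by
  simp only [Dmat, ← Finset.sum_coe_sort (suppIdx P), prod_rpow_eq_exp hpos]

lemma exists_DmatT_eq [Nonempty (suppIdx P)] (β : Fin d → ℝ) :
    ∃ i₀, DmatT β P = 1 / (⨆ k, β k) * (β ⬝ᵥ logRows P i₀) ∧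
      ∀ i, β ⬝ᵥ logRows P i ≤ β ⬝ᵥ logRows P i₀ := by
  obtain ⟨i₀, hi₀⟩ := Finite.exists_max fun i ↦ β ⬝ᵥ logRows P i
  refine ⟨i₀, ?_, hi₀⟩
  have : Nonempty (Fin m) := ⟨i₀⟩
  suffices (⨆ i ∈ suppIdx P, ∏ k, P k i ^ β k) = Real.exp (β ⬝ᵥ logRows P i₀) by
    rw [DmatT, this, Real.log_exp]
  refine le_antisymm (ciSup_le fun i ↦ ?_) (le_ciSup_of_le (Set.finite_range _).bddAbove i₀.1 ?_)
  · by_cases hi : i ∈ suppIdx P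
    · rw [ciSup_pos hi, prod_rpow_eq_exp hpos β ⟨i, hi⟩]
      exact Real.exp_le_exp.2 (hi₀ _)
    · have : IsEmpty (i ∈ suppIdx P) := ⟨hi⟩
      rw [Real.iSup_of_isEmpty]
      exact (Real.exp_pos _).le
  · rw [ciSup_pos i₀.2, prod_rpow_eq_exp hpos]

lemma KL_eq_relEntropy (k l : Fin d) : KL (P k) (P l) = relEntropy (logRows P) k l := by
  have hzero (i) (hi : i ∉ suppIdx P) : P k i * Real.log (P k i / P l i) = 0 := by
    rw [eq_zero_of_notMem_suppIdx hi, zero_mul]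
  rw [KL, relEntropy, ← sum_suppIdx hzero]
  refine Finset.sum_congr rfl fun i _ ↦ ?_
  rw [exp_logRows hpos, Real.log_div (hpos i i.2 k).ne' (hpos i i.2 l).ne', logRows, logRows]

lemma testFunctional_rowSum_logRows_pow {ψ : (Fin d → ℝ) → ℝ}
    (hψ : IsSublinear ψ) (n : ℕ) :
    testFunctional ψ (rowSum (logRows P) ^ n) = ∑ f, ψ fun k ↦ kpow (P k) n f := by
  rw [← rowSum_powRows, testFunctional_rowSum]
  refine Finset.sum_of_injOn (fun f s ↦ (f s : Fin m)) (fun f _ g _ hfg ↦ ?_) (by simp) ?_ ?_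
  · exact funext fun s ↦ Subtype.ext (congrFun hfg s)
  · intro f _ hf
    obtain ⟨s, hs⟩ : ∃ s, f s ∉ suppIdx P := by
      by_contra! h
      exact hf ⟨fun s ↦ ⟨f s, h s⟩, by simp, rfl⟩
    rw [← hψ.zero]
    congr 1
    exact funext fun k ↦ Finset.prod_eq_zero (Finset.mem_univ s) (eq_zero_of_notMem_suppIdx hs k)
  · intro f _
    congr 1
    ext k
    simp only [expVec, powRows, Finset.sum_apply, Real.exp_sum, exp_logRows hpos, kpow]

end LogRows

section Exponents

variable {d : ℕ} {α β : Fin d → ℝ}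

lemma eq_of_le_of_sum_eq {κ : Type*} [Fintype κ] {α β : κ → ℝ} (h : α ≤ β)
    (hsum : ∑ k, α k = ∑ k, β k) : α = β :=
  h.eq_of_not_lt fun hlt ↦ (Fintype.sum_strictMono hlt).ne hsum

lemma iSup_lt_one_of_memAplus [Nonempty (Fin d)] (h : memAplus α) (hα : notBasis α) :
    ⨆ k, α k < 1 := by
  obtain ⟨k, hk⟩ := exists_eq_ciSup_of_finite (f := α)
  by_contra! hk1
  refine hα k (eq_of_le_of_sum_eq (fun l ↦ ?_) (by simpa using h.1.symm)).symm
  rcases eq_or_ne l k with rfl | hl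
  · simpa [hk] using hk1
  · simpa [hl] using h.2 l

lemma one_lt_iSup_of_memAminus (h : memAminus α) (hα : notBasis α) : 1 < ⨆ k, α k := by
  obtain ⟨hsum, k, -, hk⟩ := h
  by_contra! hle
  refine hα k (eq_of_le_of_sum_eq (fun l ↦ ?_) (by simpa using hsum))
  rcases eq_or_ne l k with rfl | hl
  · simpa using (le_ciSup (Set.finite_range α).bddAbove l).trans hle
  · simpa [hl] using hk l hl

lemma iSup_pos_of_memBminus (h : memBminus β) (hβ : β ≠ 0) : 0 < ⨆ k, β k := by
  by_contra! hle
  exact hβ <| eq_of_le_of_sum_eq (fun l ↦ (le_ciSup (Set.finite_range β).bddAbove l).trans hle)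
    (by simpa using h.1)

end Exponents

theorem strictlyDominates_logRows [Nonempty (Fin d)] {m m' : ℕ} {P : Fin d → Fin m → ℝ}
    {Q : Fin d → Fin m' → ℝ}
    (hP : ∀ k, IsProbVec (P k)) (hQ : ∀ k, IsProbVec (Q k))
    (hPpos : ∀ i ∈ suppIdx P, ∀ k, 0 < P k i) (hQpos : ∀ i ∈ suppIdx Q, ∀ k, 0 < Q k i)
    (hA : ∀ α : Fin d → ℝ, (memAplus α ∨ memAminus α) → notBasis α → Dmat α Q < Dmat α P)
    (hB : ∀ β : Fin d → ℝ, memBminus β → β ≠ 0 → DmatT β Q < DmatT β P)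
    (hKL : ∀ k l, k ≠ l → KL (Q k) (Q l) < KL (P k) (P l)) :
    StrictlyDominates (logRows P) (logRows Q) := by
  have k : Fin d := Classical.arbitrary _
  have : Nonempty (suppIdx P) := nonempty_suppIdx (hP k)
  have : Nonempty (suppIdx Q) := nonempty_suppIdx (hQ k)
  have hPexp (α : Fin d → ℝ) : 0 < ∑ i, Real.exp (α ⬝ᵥ logRows P i) :=
    Finset.sum_pos (fun _ _ ↦ Real.exp_pos _) Finset.univ_nonempty
  have hQexp (α : Fin d → ℝ) : 0 < ∑ i, Real.exp (α ⬝ᵥ logRows Q i) :=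
    Finset.sum_pos (fun _ _ ↦ Real.exp_pos _) Finset.univ_nonempty
  simp only [Dmat_eq hPpos, Dmat_eq hQpos] at hA
  refine ⟨fun k ↦ ?_, fun k ↦ ?_, fun α hsum h0 hα ↦ ?_, fun α hsum h0 hα ↦ ?_,
    fun β hsum h0 hβ ↦ ?_, fun k l hkl ↦ ?_⟩
  · rw [sum_exp_logRows hPpos, (hP k).2]
  · rw [sum_exp_logRows hQpos, (hQ k).2]
  · have hneg := one_div_neg.2 (sub_neg.2 (iSup_lt_one_of_memAplus ⟨hsum, h0⟩ hα))
    exact (Real.log_lt_log_iff (hPexp α) (hQexp α)).1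
      ((mul_lt_mul_left_of_neg hneg).1 (hA α (Or.inl ⟨hsum, h0⟩) hα))
  · have hpos := one_div_pos.2 (sub_pos.2 (one_lt_iSup_of_memAminus ⟨hsum, h0⟩ hα))
    exact (Real.log_lt_log_iff (hQexp α) (hPexp α)).1
      ((mul_lt_mul_iff_right₀ hpos).1 (hA α (Or.inr ⟨hsum, h0⟩) hα))
  · have hpos := one_div_pos.2 (iSup_pos_of_memBminus ⟨hsum, h0⟩ hβ)
    obtain ⟨i₀, hi₀, -⟩ := exists_DmatT_eq hPpos β
    obtain ⟨j₀, hj₀, hj₀max⟩ := exists_DmatT_eq hQpos β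
    have hlt := hB β ⟨hsum, h0⟩ hβ
    rw [hi₀, hj₀, mul_lt_mul_iff_right₀ hpos] at hlt
    exact ⟨i₀, fun j ↦ (hj₀max j).trans_lt hlt⟩
  · rw [← KL_eq_relEntropy hPpos, ← KL_eq_relEntropy hQpos]
    exact hKL k l hkl

end MatrixMajorization

open MatrixMajorization

/-- **Asymptotic matrix majorization, sufficiency.**  If all the matrix
`α`-divergences, the tropical divergences and the Kullback–Leibler divergences
are strictly ordered between the tuples `P` and `Q`, then for all sufficiently
large `n` some stochastic matrix carries the `n`-th Kronecker powers of the
columns of `P` to those of `Q`. -/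
theorem asymptotic_matrix_majorization_sufficient
    {d m m' : ℕ} (hd : 1 ≤ d)
    (P : Fin d → Fin m → ℝ) (Q : Fin d → Fin m' → ℝ)
    (hP : ∀ k, IsProbVec (P k)) (hQ : ∀ k, IsProbVec (Q k))
    (hPs : ∀ k l i, P k i ≠ 0 ↔ P l i ≠ 0)
    (hQs : ∀ k l i, Q k i ≠ 0 ↔ Q l i ≠ 0)
    (hA : ∀ α : Fin d → ℝ, (memAplus α ∨ memAminus α) → notBasis α →
      Dmat α Q < Dmat α P)
    (hB : ∀ β : Fin d → ℝ, memBminus β → β ≠ 0 → DmatT β Q < DmatT β P)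
    (hKL : ∀ k l, k ≠ l → KL (Q k) (Q l) < KL (P k) (P l)) :
    ∃ N : ℕ, ∀ n : ℕ, N ≤ n →
      ∃ T : (Fin n → Fin m') → (Fin n → Fin m) → ℝ,
        IsStochastic T ∧ ∀ k, matVec T (kpow (P k) n) = kpow (Q k) n := by
  have : Nonempty (Fin d) := ⟨⟨0, hd⟩⟩
  have : Nonempty (Fin m') := (nonempty_suppIdx (hQ ⟨0, hd⟩)).map Subtype.val
  have hPpos (i) := pos_of_mem_suppIdx (i := i) (fun k ↦ (hP k).1) hPs
  have hQpos (i) := pos_of_mem_suppIdx (i := i) (fun k ↦ (hQ k).1) hQs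
  obtain ⟨N, hN⟩ := (strictlyDominates_logRows hP hQ hPpos hQpos hA hB
    hKL).exists_forall_rowSum_pow_sub_rowSum_pow_mem
  refine ⟨N, fun n hn ↦ exists_isStochastic_of_forall_isSublinear
    (fun f k ↦ kpow (P k) n f) (fun f k ↦ kpow (Q k) n f) fun ψ hψ ↦ ?_⟩
  have h := hN n hn ψ hψ
  rwa [map_sub, testFunctional_rowSum_logRows_pow hPpos hψ,
    testFunctional_rowSum_logRows_pow hQpos hψ, sub_nonneg] at h
end
end

section
/- Let d ≥ 1 and let P = (p⁽¹⁾,…,p⁽ᵈ⁾) and Q = (q⁽¹⁾,…,q⁽ᵈ⁾) be d-tuples of probability vectors such that the columns of P share a common support and the columns of Q share a common support. If for some n ≥ 1 there exists a stochastic matrix T with T (p⁽ᵏ⁾)^{⊗n} = (q⁽ᵏ⁾)^{⊗n} for all k = 1,…,d, then D_α(P) ≥ D_α(Q) for every α ∈ (A₊ ∪ A₋) \ {e₁,…,e_d}, D^T_β(P) ≥ D^T_β(Q) for every β ∈ B₋ \ {0}, and D₁(p⁽ᵏ⁾‖p⁽ˡ⁾) ≥ D₁(q⁽ᵏ⁾‖q⁽ˡ⁾)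 for all k ≠ ℓ. -/
open scoped BigOperators NNReal

noncomputable section

/-!
A sublinear function `φ` on the positive orthant satisfies `φ (∑ j, t j • v j) ≤ ∑ j, t j * φ (v j)`
for nonnegative weights `t`. Applied to every row of a stochastic matrix and summed over the rows,
this says that `∑ i, φ (P · i)` decreases when the matrix acts on a tuple `P`. The sublinear
functions that matter are `-∏ k, x k ^ α k` for `α ∈ A₊` (weighted AM-GM), `∏ k, x k ^ α k` for
`α ∈ A₋` (reverse weighted AM-GM), and `x k * log (x k / x l)` (from `log u ≤ u - 1`). For `β ∈ B₋`
we have `β + e_k ∈ A₋`; as `∏ l, x l ^ (β + e_k) l = x k * ∏ l, x l ^ β l`, any upper bound on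
`∏ l, x l ^ β l` over the columns of `P` persists for the image columns. Since all these quantities
are multiplicative or additive under Kronecker powers, comparing `n`-th powers compares `P` and `Q`.
-/

theorem arith_mean_le_geom_mean_weighted_of_nonpos {κ : Type*} (s : Finset κ) {w z : κ → ℝ} {k : κ}
    (hk : k ∈ s) (hw : ∀ l ∈ s, l ≠ k → w l ≤ 0) (hw₁ : ∑ l ∈ s, w l = 1)
    (hz : ∀ l ∈ s, 0 < z l) : ∑ l ∈ s, w l * z l ≤ ∏ l ∈ s, z l ^ w l := by
  classical
  set R := ∏ l ∈ s.erase k, z l ^ w l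
  have hz' : ∀ l ∈ s.erase k, 0 < z l := fun l hl => hz l (Finset.mem_of_mem_erase hl)
  have hw' : ∀ l ∈ s.erase k, w l ≤ 0 := fun l hl =>
    hw l (Finset.mem_of_mem_erase hl) (Finset.ne_of_mem_erase hl)
  have hR : 0 < R := Finset.prod_pos fun l hl => Real.rpow_pos_of_pos (hz' l hl) _
  have hG : 0 < z k ^ w k * R := mul_pos (Real.rpow_pos_of_pos (hz k hk) _) hR
  have hwk : 1 - ∑ l ∈ s.erase k, w l = w k := by linarith [Finset.add_sum_erase s w hk]
  have hwk_pos : 0 < w k := by linarith [Finset.sum_nonpos hw']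
  have hinv : ∏ l ∈ s.erase k, z l ^ (-w l) = R⁻¹ := by
    rw [← Finset.prod_inv_distrib]
    exact Finset.prod_congr rfl fun l hl => Real.rpow_neg (hz' l hl).le _
  -- Moving the factors with nonpositive exponents to the other side turns the claim into AM-GM for
  -- the full product with weight `1` and each `z l`, `l ≠ k`, with weight `-w l`.
  have amgm := Real.geom_mean_le_arith_mean (s.erase k).insertNone
    (fun o => o.elim 1 fun l => -w l) (fun o => o.elim (z k ^ w k * R) z)
    (Finset.forall_mem_insertNone.2 ⟨zero_le_one, fun l hl => neg_nonneg.2 (hw' l hl)⟩)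
    (by simpa [← sub_eq_add_neg, hwk] using hwk_pos)
    (Finset.forall_mem_insertNone.2 ⟨hG.le, fun l hl => (hz' l hl).le⟩)
  simp only [Finset.prod_insertNone, Finset.sum_insertNone, Option.elim_none, Option.elim_some,
    Real.rpow_one, hinv, mul_inv_cancel_right₀ hR.ne', one_mul, neg_mul, Finset.sum_neg_distrib,
    ← sub_eq_add_neg, hwk, Real.rpow_rpow_inv (hz k hk).le hwk_pos.ne',
    le_div_iff₀ hwk_pos] at amgm
  rw [← Finset.add_sum_erase s _ hk, ← Finset.mul_prod_erase s _ hk]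
  linarith

section Sublinear

variable {ι ι' κ : Type*}

/-- The vector is zero or has only positive entries. A tuple of nonnegative vectors has a common
support if and only if each of its columns `fun k => P k i` has this property. -/
def IsZeroOrPos (x : κ → ℝ) : Prop := x = 0 ∨ ∀ k, 0 < x k

theorem IsZeroOrPos.nonneg {x : κ → ℝ} (hx : IsZeroOrPos x) : 0 ≤ x := by
  rcases hx with rfl | hx
  · exact le_rfl
  · exact fun k => (hx k).le

theorem matVec_column [Fintype ι] (T : ι' → ι → ℝ) (P : κ → ι → ℝ) (i : ι') :
    (fun k => matVec T (P k) i) = ∑ j, T i j • fun k => P k j := by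
  ext k
  simp [matVec]

variable [Fintype κ]

/-- A function that is convex and positively homogeneous on the open positive orthant, encoded by
its supporting linear functionals, and that extends by zero to the origin. -/
structure IsSublinear (φ : (κ → ℝ) → ℝ) : Prop where
  map_zero : φ 0 = 0
  exists_support : ∀ y : κ → ℝ, (∀ k, 0 < y k) →
    ∃ c : κ → ℝ, c ⬝ᵥ y = φ y ∧ ∀ x : κ → ℝ, (∀ k, 0 < x k) → c ⬝ᵥ x ≤ φ x

variable {φ : (κ → ℝ) → ℝ}

theorem IsSublinear.map_sum_smul_le (hφ : IsSublinear φ) {s : Finset ι} {t : ι → ℝ} {v : ι → κ → ℝ}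
    (ht : ∀ j ∈ s, 0 ≤ t j) (hv : ∀ j ∈ s, IsZeroOrPos (v j)) :
    φ (∑ j ∈ s, t j • v j) ≤ ∑ j ∈ s, t j * φ (v j) := by
  by_cases h : ∃ j ∈ s, 0 < t j ∧ ∀ k, 0 < v j k
  · obtain ⟨j₀, hj₀, ht₀, hv₀⟩ := h
    have hpos : ∀ k, 0 < (∑ j ∈ s, t j • v j) k := fun k => by
      simp only [Finset.sum_apply, Pi.smul_apply, smul_eq_mul]
      exact Finset.sum_pos' (fun j hj => mul_nonneg (ht j hj) ((hv j hj).nonneg k))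
        ⟨j₀, hj₀, mul_pos ht₀ (hv₀ k)⟩
    obtain ⟨c, hc, hle⟩ := hφ.exists_support _ hpos
    have hle' : ∀ j ∈ s, c ⬝ᵥ v j ≤ φ (v j) := fun j hj => by
      rcases hv j hj with h | h
      · rw [h, dotProduct_zero, hφ.map_zero]
      · exact hle _ h
    rw [← hc, dotProduct_sum]
    simp only [dotProduct_smul, smul_eq_mul]
    exact Finset.sum_le_sum fun j hj => mul_le_mul_of_nonneg_left (hle' j hj) (ht j hj)
  · push Not at h
    have hvanish : ∀ j ∈ s, t j = 0 ∨ v j = 0 := fun j hj => by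
      rcases hv j hj with hv0 | hv_pos
      · exact .inr hv0
      · refine .inl ((ht j hj).antisymm' (not_lt.1 fun ht_pos => ?_))
        obtain ⟨k, hk⟩ := h j hj ht_pos
        exact hk.not_gt (hv_pos k)
    rw [Finset.sum_eq_zero fun j hj => by rcases hvanish j hj with h | h <;> simp [h],
      Finset.sum_eq_zero fun j hj => by rcases hvanish j hj with h | h <;> simp [h, hφ.map_zero],
      hφ.map_zero]

theorem IsSublinear.sum_matVec_le [Fintype ι] [Fintype ι'] (hφ : IsSublinear φ) {T : ι' → ι → ℝ}
    (hT : IsStochastic T) {P : κ → ι → ℝ} (hP : ∀ j, IsZeroOrPos fun k => P k j) :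
    ∑ i, φ (fun k => matVec T (P k) i) ≤ ∑ j, φ fun k => P k j :=
  calc ∑ i, φ (fun k => matVec T (P k) i)
      ≤ ∑ i, ∑ j, T i j * φ fun k => P k j := Finset.sum_le_sum fun i _ => by
        rw [matVec_column]
        exact hφ.map_sum_smul_le (fun j _ => hT.1 i j) fun j _ => hP j
    _ = ∑ j, φ fun k => P k j := by
        rw [Finset.sum_comm]
        simp only [← Finset.sum_mul, hT.2, one_mul]

theorem isSublinear_mul_log_div (k l : κ) :
    IsSublinear fun x : κ → ℝ => x k * Real.log (x k / x l) where
  map_zero := by simp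
  exists_support y hy := by
    classical
    refine ⟨Pi.single k (Real.log (y k / y l) + 1) - Pi.single l (y k / y l), ?_, fun x hx => ?_⟩
    · simp only [sub_dotProduct, single_dotProduct]
      rw [div_mul_cancel₀ _ (hy l).ne']
      ring
    · simp only [sub_dotProduct, single_dotProduct]
      have hx' : 0 < x k / x l := div_pos (hx k) (hx l)
      have hy' : 0 < y k / y l := div_pos (hy k) (hy l)
      have hlog := Real.log_le_sub_one_of_pos (div_pos hy' hx')
      rw [Real.log_div hy'.ne' hx'.ne'] at hlog
      have hcancel : x k * (y k / y l / (x k / x l)) = y k / y l * x l := by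
        have := (hx k).ne'
        have := (hx l).ne'
        field_simp
      linarith [mul_le_mul_of_nonneg_left hlog (hx k).le]

end Sublinear

section Monomial

variable {ι κ : Type*} [Fintype κ] {α β x : κ → ℝ}

/-- The monomial `x ^ α` with a vector `α` of real exponents: the summand in `D_α` and the quantity
maximized in `D^𝕋_α`. -/
def rpowMonomial (α x : κ → ℝ) : ℝ := ∏ k, x k ^ α k

theorem rpowMonomial_pos (hx : ∀ k, 0 < x k) : 0 < rpowMonomial α x :=
  Finset.prod_pos fun k _ => Real.rpow_pos_of_pos (hx k) _

theorem rpowMonomial_nonneg (hx : 0 ≤ x) : 0 ≤ rpowMonomial α x :=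
  Finset.prod_nonneg fun k _ => Real.rpow_nonneg (hx k) _

theorem rpowMonomial_zero (hα : α ≠ 0) : rpowMonomial α 0 = 0 := by
  obtain ⟨k, hk⟩ := Function.ne_iff.1 hα
  exact Finset.prod_eq_zero (Finset.mem_univ k) (Real.zero_rpow hk)

theorem ne_zero_of_sum_eq_one (hα : ∑ k, α k = 1) : α ≠ 0 := by
  rintro rfl
  simp at hα

theorem rpowMonomial_add_single [DecidableEq κ] (β : κ → ℝ) (k : κ) (hx : ∀ l, 0 < x l) :
    rpowMonomial (β + Pi.single k 1) x = rpowMonomial β x * x k := by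
  simp only [rpowMonomial, Pi.add_apply, Real.rpow_add (hx _), Finset.prod_mul_distrib]
  congr 1
  rw [Fintype.prod_eq_single k fun l hl => by simp [hl], Pi.single_eq_same, Real.rpow_one]

theorem rpowMonomial_mul (hx : 0 ≤ x) {y : κ → ℝ} (hy : 0 ≤ y) :
    rpowMonomial α (x * y) = rpowMonomial α x * rpowMonomial α y := by
  simp only [rpowMonomial, ← Finset.prod_mul_distrib, Pi.mul_apply, Real.mul_rpow (hx _) (hy _)]

/-- The case `σ = 1` serves `A₋`, the case `σ = -1` serves `A₊`. -/
theorem isSublinear_const_mul_rpowMonomial {σ : ℝ} (hα : ∑ k, α k = 1)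
    (h : ∀ r : κ → ℝ, (∀ k, 0 < r k) → σ * ∑ k, α k * r k ≤ σ * rpowMonomial α r) :
    IsSublinear fun x => σ * rpowMonomial α x where
  map_zero := by rw [rpowMonomial_zero (ne_zero_of_sum_eq_one hα), mul_zero]
  exists_support y hy := by
    -- the gradient of the monomial at `y`
    have gradient_dot : ∀ x : κ → ℝ, (fun k => σ * rpowMonomial α y * (α k / y k)) ⬝ᵥ x =
        rpowMonomial α y * (σ * ∑ k, α k * (x k / y k)) := fun x => by
      simp only [dotProduct, Finset.mul_sum]
      exact Finset.sum_congr rfl fun k _ => by ring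
    refine ⟨fun k => σ * rpowMonomial α y * (α k / y k), ?_, fun x hx => ?_⟩
    · rw [gradient_dot]
      simp only [div_self (hy _).ne', hα, mul_one, mul_comm (rpowMonomial α y)]
    · have hxy : ∀ k, 0 < (x / y) k := fun k => div_pos (hx k) (hy k)
      have hx_eq : x = y * (x / y) := by
        ext k
        exact (mul_div_cancel₀ _ (hy k).ne').symm
      rw [gradient_dot]
      calc rpowMonomial α y * (σ * ∑ k, α k * (x / y) k)
          ≤ rpowMonomial α y * (σ * rpowMonomial α (x / y)) :=
            mul_le_mul_of_nonneg_left (h _ hxy) (rpowMonomial_pos hy).le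
        _ = σ * (rpowMonomial α y * rpowMonomial α (x / y)) := by ring
        _ = σ * rpowMonomial α x := by
            rw [← rpowMonomial_mul (fun k => (hy k).le) (fun k => (hxy k).le), ← hx_eq]

theorem isSublinear_neg_rpowMonomial (hα : ∑ k, α k = 1) (hα₀ : ∀ k, 0 ≤ α k) :
    IsSublinear fun x => -rpowMonomial α x := by
  simpa only [neg_one_mul] using isSublinear_const_mul_rpowMonomial (σ := -1) hα fun r hr =>
    mul_le_mul_of_nonpos_left (Real.geom_mean_le_arith_mean_weighted _ α r (fun k _ => hα₀ k) hα
      fun k _ => (hr k).le) (by norm_num)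

theorem isSublinear_rpowMonomial (hα : ∑ k, α k = 1) {k : κ} (hk : ∀ l, l ≠ k → α l ≤ 0) :
    IsSublinear (rpowMonomial α) := by
  simpa only [one_mul] using isSublinear_const_mul_rpowMonomial (σ := 1) hα fun r hr =>
    mul_le_mul_of_nonneg_left (arith_mean_le_geom_mean_weighted_of_nonpos _ (Finset.mem_univ k)
      (fun l _ => hk l) hα fun l _ => hr l) zero_le_one

theorem rpowMonomial_sum_smul_le (hβ : ∑ k, β k = 0) {k : κ} (hk : ∀ l, l ≠ k → β l ≤ 0)
    {s : Finset ι} {t : ι → ℝ} {v : ι → κ → ℝ} (ht : ∀ j ∈ s, 0 ≤ t j)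
    (hv : ∀ j ∈ s, IsZeroOrPos (v j)) (hpos : ∀ l, 0 < (∑ j ∈ s, t j • v j) l) {M : ℝ}
    (hM : ∀ j ∈ s, rpowMonomial β (v j) ≤ M) : rpowMonomial β (∑ j ∈ s, t j • v j) ≤ M := by
  classical
  have hsub : IsSublinear (rpowMonomial (β + Pi.single k 1)) :=
    isSublinear_rpowMonomial (by simp [Finset.sum_add_distrib, hβ]) (k := k)
      fun l hl => by simpa [hl] using hk l hl
  have hle : ∀ j ∈ s, rpowMonomial (β + Pi.single k 1) (v j) ≤ M * v j k := fun j hj => by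
    rcases hv j hj with h | h
    · simp [h, hsub.map_zero]
    · rw [rpowMonomial_add_single β k h]
      exact mul_le_mul_of_nonneg_right (hM j hj) (h k).le
  refine le_of_mul_le_mul_right ?_ (hpos k)
  calc rpowMonomial β (∑ j ∈ s, t j • v j) * (∑ j ∈ s, t j • v j) k
      = rpowMonomial (β + Pi.single k 1) (∑ j ∈ s, t j • v j) :=
        (rpowMonomial_add_single β k hpos).symm
    _ ≤ ∑ j ∈ s, t j * rpowMonomial (β + Pi.single k 1) (v j) := hsub.map_sum_smul_le ht hv
    _ ≤ ∑ j ∈ s, t j * (M * v j k) :=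
        Finset.sum_le_sum fun j hj => mul_le_mul_of_nonneg_left (hle j hj) (ht j hj)
    _ = M * (∑ j ∈ s, t j • v j) k := by
        simp only [Finset.sum_apply, Pi.smul_apply, smul_eq_mul, Finset.mul_sum]
        exact Finset.sum_congr rfl fun j _ => by ring

end Monomial

section KroneckerPower

variable {ι κ : Type*}

theorem sum_kpow [Fintype ι] (p : ι → ℝ) (n : ℕ) : ∑ f, kpow p n f = (∑ i, p i) ^ n :=
  (Fintype.sum_pow p n).symm

theorem kpow_const (p : ι → ℝ) (n : ℕ) (i : ι) : kpow p n (fun _ => i) = p i ^ n := by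
  simp [kpow]

theorem kpow_le_pow {p : ι → ℝ} (hp : ∀ i, 0 ≤ p i) {M : ℝ} (hM : ∀ i, p i ≤ M) (n : ℕ)
    (f : Fin n → ι) : kpow p n f ≤ M ^ n := by
  simpa [kpow] using Finset.prod_le_prod (s := Finset.univ) (fun j _ => hp (f j))
    fun j _ => hM (f j)

theorem rpowMonomial_kpow [Fintype κ] {P : κ → ι → ℝ} (hP : ∀ k i, 0 ≤ P k i) (α : κ → ℝ) (n : ℕ)
    (f : Fin n → ι) : rpowMonomial α (fun k => kpow (P k) n f) =
      kpow (fun i => rpowMonomial α fun k => P k i) n f := by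
  simp only [rpowMonomial, kpow, ← Real.finsetProd_rpow _ _ fun j _ => hP _ (f j)]
  exact Finset.prod_comm

theorem sum_kpow_mul_eval [Fintype ι] {p : ι → ℝ} (hp : ∑ i, p i = 1) (g : ι → ℝ) {n : ℕ}
    (t : Fin n) : ∑ f, kpow p n f * g (f t) = ∑ i, p i * g i :=
  calc ∑ f, kpow p n f * g (f t)
      = ∑ f : Fin n → ι, ∏ j, p (f j) * (if j = t then g (f j) else 1) := by
        simp only [kpow, Finset.prod_mul_distrib, Finset.prod_ite_eq', Finset.mem_univ, if_true]
    _ = ∏ j, ∑ i, p i * (if j = t then g i else 1) :=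
        (Fintype.prod_sum fun j i => p i * if j = t then g i else 1).symm
    _ = ∑ i, p i * g i := by
        rw [Fintype.prod_eq_single t fun j hj => by simp [hj, hp]]
        simp

theorem kpow_mul_log_div {p r : ι → ℝ} (hpr : ∀ i, p i ≠ 0 → r i ≠ 0) {n : ℕ} (f : Fin n → ι) :
    kpow p n f * Real.log (kpow p n f / kpow r n f) =
      ∑ t, kpow p n f * Real.log (p (f t) / r (f t)) := by
  by_cases hf : kpow p n f = 0
  · simp [hf]
  · have hp : ∀ j, p (f j) ≠ 0 := fun j => Finset.prod_ne_zero_iff.1 hf j (Finset.mem_univ j)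
    rw [← Finset.mul_sum, ← Real.log_prod fun j _ => div_ne_zero (hp j) (hpr _ (hp j)),
      Finset.prod_div_distrib, kpow, kpow]

theorem sum_kpow_mul_log_div [Fintype ι] {p r : ι → ℝ} (hp : ∑ i, p i = 1)
    (hpr : ∀ i, p i ≠ 0 → r i ≠ 0) (n : ℕ) :
    ∑ f, kpow p n f * Real.log (kpow p n f / kpow r n f) =
      n * ∑ i, p i * Real.log (p i / r i) := by
  simp_rw [kpow_mul_log_div hpr]
  rw [Finset.sum_comm]
  simp [sum_kpow_mul_eval hp fun i => Real.log (p i / r i)]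

end KroneckerPower

section ProbTuple

variable {ι κ : Type*} [Fintype ι]

/-- A tuple of probability vectors with a common support. -/
structure IsProbTuple (P : κ → ι → ℝ) : Prop where
  isProbVec : ∀ k, IsProbVec (P k)
  ne_zero_iff : ∀ k l i, P k i ≠ 0 ↔ P l i ≠ 0

namespace IsProbTuple

variable {P : κ → ι → ℝ} (hP : IsProbTuple P)
include hP

theorem nonneg (k : κ) (i : ι) : 0 ≤ P k i := (hP.isProbVec k).1 i

theorem isZeroOrPos (i : ι) : IsZeroOrPos fun k => P k i := by
  by_cases h : ∃ k, P k i ≠ 0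
  · obtain ⟨k, hk⟩ := h
    exact .inr fun l => (hP.nonneg l i).lt_of_ne' ((hP.ne_zero_iff k l i).1 hk)
  · push Not at h
    exact .inl (funext h)

theorem exists_forall_pos [Nonempty κ] : ∃ i, ∀ k, 0 < P k i := by
  let k₀ := Classical.arbitrary κ
  obtain ⟨i, -, hi⟩ : ∃ i ∈ Finset.univ, P k₀ i ≠ 0 :=
    Finset.exists_ne_zero_of_sum_ne_zero ((hP.isProbVec k₀).2.trans_ne one_ne_zero)
  exact ⟨i, (hP.isZeroOrPos i).resolve_left fun h => hi (congrFun h k₀)⟩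

theorem map_kpow (n : ℕ) : IsProbTuple fun k => kpow (P k) n where
  isProbVec k := ⟨fun f => Finset.prod_nonneg fun j _ => hP.nonneg k (f j), by
    rw [sum_kpow, (hP.isProbVec k).2, one_pow]⟩
  ne_zero_iff k l f := by
    simp only [kpow, Finset.prod_ne_zero_iff]
    exact forall₂_congr fun j _ => hP.ne_zero_iff k l (f j)

theorem sum_rpowMonomial_pos [Fintype κ] [Nonempty κ] (α : κ → ℝ) :
    0 < ∑ i, rpowMonomial α fun k => P k i := by
  obtain ⟨i, hi⟩ := hP.exists_forall_pos
  exact Finset.sum_pos' (fun j _ => rpowMonomial_nonneg (hP.isZeroOrPos j).nonneg)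
    ⟨i, Finset.mem_univ i, rpowMonomial_pos hi⟩

theorem iSup_rpowMonomial_pos [Fintype κ] [Nonempty κ] (β : κ → ℝ) :
    0 < ⨆ i, rpowMonomial β fun k => P k i := by
  obtain ⟨i, hi⟩ := hP.exists_forall_pos
  exact (rpowMonomial_pos hi).trans_le (Finite.le_ciSup (fun i => rpowMonomial β fun k => P k i) i)

theorem sum_rpowMonomial_kpow [Fintype κ] (α : κ → ℝ) (n : ℕ) :
    ∑ f, rpowMonomial α (fun k => kpow (P k) n f) =
      (∑ i, rpowMonomial α fun k => P k i) ^ n := by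
  simp only [rpowMonomial_kpow hP.nonneg, sum_kpow]

end IsProbTuple

end ProbTuple

section Exponents

variable {d : ℕ} {α β : Fin d → ℝ}

theorem memAplus.iSup_lt_one [Nonempty (Fin d)] (hα : memAplus α) (hα' : notBasis α) :
    ⨆ k, α k < 1 := by
  obtain ⟨k, hk⟩ := exists_eq_ciSup_of_finite (f := α)
  rw [← hk]
  refine lt_of_not_ge fun hk₁ => hα' k ?_
  have hsum := Finset.add_sum_erase Finset.univ α (Finset.mem_univ k)
  have hrest : ∑ l ∈ Finset.univ.erase k, α l = 0 :=
    le_antisymm (by linarith [hα.1]) (Finset.sum_nonneg fun l _ => hα.2 l)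
  have hzero := (Finset.sum_eq_zero_iff_of_nonneg fun l _ => hα.2 l).1 hrest
  ext l
  rcases eq_or_ne l k with rfl | hl
  · rw [Pi.single_eq_same]
    linarith [hα.1]
  · rw [Pi.single_eq_of_ne hl]
    exact hzero l (by simp [hl])

theorem memAminus.one_le_iSup (hα : memAminus α) : 1 ≤ ⨆ k, α k := by
  obtain ⟨-, k, hk, -⟩ := hα
  exact hk.trans (Finite.le_ciSup α k)

theorem memBminus.iSup_nonneg (hβ : memBminus β) : 0 ≤ ⨆ k, β k := by
  obtain ⟨-, k, hk, -⟩ := hβ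
  exact hk.trans (Finite.le_ciSup β k)

end Exponents

section Divergence

variable {d m m' n : ℕ} {P : Fin d → Fin m → ℝ} {Q : Fin d → Fin m' → ℝ}
  {T : (Fin n → Fin m') → (Fin n → Fin m) → ℝ} {α β : Fin d → ℝ}

theorem column_eq_zero_of_notMem_suppIdx {i : Fin m} (hi : i ∉ suppIdx P) :
    (fun k => P k i) = 0 := by
  ext k
  simpa [suppIdx] using fun h => hi (Finset.mem_filter.2 ⟨Finset.mem_univ i, k, h⟩)

-- Off the support a nontrivial monomial vanishes, so the restriction to `suppIdx P` can be dropped.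
theorem Dmat_eq (hα : α ≠ 0) (P : Fin d → Fin m → ℝ) :
    Dmat α P = 1 / ((⨆ k, α k) - 1) * Real.log (∑ i, rpowMonomial α fun k => P k i) := by
  rw [Dmat, Finset.sum_subset (Finset.subset_univ (suppIdx P)) fun i _ hi => ?_]
  · rfl
  · exact (congrArg (rpowMonomial α) (column_eq_zero_of_notMem_suppIdx hi)).trans
      (rpowMonomial_zero hα)

theorem DmatT_eq (hβ : β ≠ 0) (P : Fin d → Fin m → ℝ) :
    DmatT β P = 1 / (⨆ k, β k) * Real.log (⨆ i, rpowMonomial β fun k => P k i) := by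
  have hterm : ∀ i, ⨆ _ : i ∈ suppIdx P, ∏ k, P k i ^ β k = rpowMonomial β fun k => P k i := by
    intro i
    by_cases hi : i ∈ suppIdx P
    · exact ciSup_pos hi
    · simp [hi, column_eq_zero_of_notMem_suppIdx hi, rpowMonomial_zero hβ]
  rw [DmatT, iSup_congr hterm]

theorem IsSublinear.sum_kpow_le {φ : (Fin d → ℝ) → ℝ} (hφ : IsSublinear φ) (hP : IsProbTuple P)
    (hT : IsStochastic T) (hTP : ∀ k, matVec T (kpow (P k) n) = kpow (Q k) n) :
    ∑ f, φ (fun k => kpow (Q k) n f) ≤ ∑ f, φ fun k => kpow (P k) n f := by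
  simpa only [hTP] using hφ.sum_matVec_le hT (hP.map_kpow n).isZeroOrPos

variable (hP : IsProbTuple P) (hQ : IsProbTuple Q) (hT : IsStochastic T)
  (hTP : ∀ k, matVec T (kpow (P k) n) = kpow (Q k) n) (hn : n ≠ 0)
include hP hQ hT hTP hn

theorem sum_rpowMonomial_le_of_memAplus [Nonempty (Fin d)] (hα : memAplus α) :
    ∑ i, rpowMonomial α (fun k => P k i) ≤ ∑ i, rpowMonomial α fun k => Q k i := by
  have h := (isSublinear_neg_rpowMonomial hα.1 hα.2).sum_kpow_le hP hT hTP
  simp only [Finset.sum_neg_distrib, neg_le_neg_iff, hP.sum_rpowMonomial_kpow,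
    hQ.sum_rpowMonomial_kpow] at h
  exact le_of_pow_le_pow_left₀ hn (hQ.sum_rpowMonomial_pos α).le h

theorem sum_rpowMonomial_le_of_memAminus [Nonempty (Fin d)] (hα : memAminus α) :
    ∑ i, rpowMonomial α (fun k => Q k i) ≤ ∑ i, rpowMonomial α fun k => P k i := by
  obtain ⟨hα₁, k, -, hk⟩ := hα
  have h := (isSublinear_rpowMonomial hα₁ hk).sum_kpow_le hP hT hTP
  rw [hP.sum_rpowMonomial_kpow, hQ.sum_rpowMonomial_kpow] at h
  exact le_of_pow_le_pow_left₀ hn (hP.sum_rpowMonomial_pos α).le h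

theorem iSup_rpowMonomial_le_of_memBminus (hβ : memBminus β) (hβ₀ : β ≠ 0) :
    ⨆ i, rpowMonomial β (fun k => Q k i) ≤ ⨆ i, rpowMonomial β fun k => P k i := by
  obtain ⟨hβ_sum, k, -, hk⟩ := hβ
  have hP₀ : ∀ j, 0 ≤ rpowMonomial β fun k => P k j :=
    fun j => rpowMonomial_nonneg (hP.isZeroOrPos j).nonneg
  have hM₀ := Real.iSup_nonneg hP₀
  refine Real.iSup_le (fun i => ?_) hM₀
  rcases hQ.isZeroOrPos i with hi | hi
  · rwa [hi, rpowMonomial_zero hβ₀]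
  refine le_of_pow_le_pow_left₀ hn hM₀ ?_
  have hcol := matVec_column T (fun k => kpow (P k) n) fun _ => i
  simp only [hTP] at hcol
  rw [← kpow_const (fun i => rpowMonomial β fun k => Q k i), ← rpowMonomial_kpow hQ.nonneg, hcol]
  refine rpowMonomial_sum_smul_le hβ_sum hk (fun f _ => hT.1 _ f)
    (fun f _ => (hP.map_kpow n).isZeroOrPos f) (fun l => ?_) fun f _ => ?_
  · simpa only [← hcol, kpow_const] using pow_pos (hi l) n
  · rw [rpowMonomial_kpow hP.nonneg]
    exact kpow_le_pow hP₀ (Finite.le_ciSup fun j => rpowMonomial β fun k => P k j) n f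

theorem Dmat_le_of_memAplus [Nonempty (Fin d)] (hα : memAplus α) (hα' : notBasis α) :
    Dmat α Q ≤ Dmat α P := by
  rw [Dmat_eq (ne_zero_of_sum_eq_one hα.1), Dmat_eq (ne_zero_of_sum_eq_one hα.1)]
  exact mul_le_mul_of_nonpos_left (Real.log_le_log (hP.sum_rpowMonomial_pos α)
    (sum_rpowMonomial_le_of_memAplus hP hQ hT hTP hn hα))
    (one_div_nonpos.2 (sub_nonpos.2 (hα.iSup_lt_one hα').le))

theorem Dmat_le_of_memAminus [Nonempty (Fin d)] (hα : memAminus α) : Dmat α Q ≤ Dmat α P := by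
  rw [Dmat_eq (ne_zero_of_sum_eq_one hα.1), Dmat_eq (ne_zero_of_sum_eq_one hα.1)]
  exact mul_le_mul_of_nonneg_left (Real.log_le_log (hQ.sum_rpowMonomial_pos α)
    (sum_rpowMonomial_le_of_memAminus hP hQ hT hTP hn hα))
    (one_div_nonneg.2 (sub_nonneg.2 hα.one_le_iSup))

theorem DmatT_le_of_memBminus [Nonempty (Fin d)] (hβ : memBminus β) (hβ₀ : β ≠ 0) :
    DmatT β Q ≤ DmatT β P := by
  rw [DmatT_eq hβ₀, DmatT_eq hβ₀]
  exact mul_le_mul_of_nonneg_left (Real.log_le_log (hQ.iSup_rpowMonomial_pos β)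
    (iSup_rpowMonomial_le_of_memBminus hP hQ hT hTP hn hβ hβ₀))
    (one_div_nonneg.2 hβ.iSup_nonneg)

theorem KL_le (k l : Fin d) : KL (Q k) (Q l) ≤ KL (P k) (P l) := by
  have h := (isSublinear_mul_log_div k l).sum_kpow_le hP hT hTP
  rw [sum_kpow_mul_log_div (hP.isProbVec k).2 fun i => (hP.ne_zero_iff k l i).1,
    sum_kpow_mul_log_div (hQ.isProbVec k).2 fun i => (hQ.ne_zero_iff k l i).1] at h
  exact le_of_mul_le_mul_left h (by positivity)

end Divergence

/-- **Asymptotic matrix majorization, necessity.**  If some stochastic matrix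
carries the `n`-th Kronecker powers of the columns of `P` to those of `Q` for
some `n ≥ 1`, then all the matrix `α`-divergences, tropical divergences and
Kullback–Leibler divergences are ordered (non-strictly) between `P` and `Q`. -/
theorem asymptotic_matrix_majorization_necessary
    {d m m' : ℕ} (hd : 1 ≤ d)
    (P : Fin d → Fin m → ℝ) (Q : Fin d → Fin m' → ℝ)
    (hP : ∀ k, IsProbVec (P k)) (hQ : ∀ k, IsProbVec (Q k))
    (hPs : ∀ k l i, P k i ≠ 0 ↔ P l i ≠ 0)
    (hQs : ∀ k l i, Q k i ≠ 0 ↔ Q l i ≠ 0)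
    (n : ℕ) (hn : 1 ≤ n)
    (T : (Fin n → Fin m') → (Fin n → Fin m) → ℝ) (hT : IsStochastic T)
    (hTP : ∀ k, matVec T (kpow (P k) n) = kpow (Q k) n) :
    (∀ α : Fin d → ℝ, (memAplus α ∨ memAminus α) → notBasis α →
      Dmat α Q ≤ Dmat α P) ∧
    (∀ β : Fin d → ℝ, memBminus β → β ≠ 0 → DmatT β Q ≤ DmatT β P) ∧
    (∀ k l, k ≠ l → KL (Q k) (Q l) ≤ KL (P k) (P l)) := by
  have : Nonempty (Fin d) := ⟨⟨0, hd⟩⟩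
  have hP' : IsProbTuple P := ⟨hP, hPs⟩
  have hQ' : IsProbTuple Q := ⟨hQ, hQs⟩
  have hn' : n ≠ 0 := Nat.one_le_iff_ne_zero.1 hn
  refine ⟨fun α hα hα' => ?_, fun β hβ hβ₀ => DmatT_le_of_memBminus hP' hQ' hT hTP hn' hβ hβ₀,
    fun k l _ => KL_le hP' hQ' hT hTP hn' k l⟩
  rcases hα with hα | hα
  · exact Dmat_le_of_memAplus hP' hQ' hT hTP hn' hα hα'
  · exact Dmat_le_of_memAminus hP' hQ' hT hTP hn' hα
end
end
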